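/- arXiv:1102.4199 — 5 statements merged into one kernel-verified Lean document; each statement's English description precedes it below -/
import Mathlib

section
/- Let f : [0,1] → ℝ be a self-similar function of Cantor type with parameters κ, a, b. Then f(x) = 1 − f(1 − x) for every x ∈ [0,1]. -/
/-- A continuous function `f : [0,1] → ℝ` is a *self-similar function of Cantor type*
with parameters `κ`, `a`, `b` if `f 0 = 0`, `f 1 = 1`, `f` is constant on each interval
`(α_{2k-1}, α_{2k})` for `k ∈ {1, …, κ-1}` (where `α_{2k} = k(a+b)`, `α_{2k+1} = α_{2k} + a`),
and for each `k ∈ {0, …, κ-1}` the function `x ↦ κ·f(α_{2k} + a·x)` differs from `f`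
by an additive constant. -/
def CantorType (κ : ℕ) (a b : ℝ) (f : ℝ → ℝ) : Prop :=
  ContinuousOn f (Set.Icc 0 1) ∧ f 0 = 0 ∧ f 1 = 1 ∧
  (∀ k : ℕ, 1 ≤ k → k ≤ κ - 1 →
    ∃ c : ℝ, ∀ x ∈ Set.Ioo (((k : ℝ) - 1) * (a + b) + a) ((k : ℝ) * (a + b)), f x = c) ∧
  (∀ k : ℕ, k ≤ κ - 1 → ∃ c : ℝ, ∀ x ∈ Set.Icc (0 : ℝ) 1,
    (κ : ℝ) * f ((k : ℝ) * (a + b) + a * x) = f x + c)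

theorem cantorType_reflection (κ : ℕ) (a b : ℝ) (hκ : 2 ≤ κ)
    (ha : 0 < a) (ha' : a < 1 / κ) (hb : b = (1 - κ * a) / (κ - 1))
    (f : ℝ → ℝ) (hf : CantorType κ a b f) :
    ∀ x ∈ Set.Icc (0 : ℝ) 1, f x = 1 - f (1 - x) := by
  obtain ⟨hc, h0, h1, hgap, hself⟩ := hf
  have hK : (2 : ℝ) ≤ κ := by exact_mod_cast hκ
  have hK0 : (0 : ℝ) < κ := by linarith
  have hb0 : 0 < b := by
    rw [hb]
    apply div_pos
    · rw [lt_div_iff₀ hK0] at ha'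
      linarith
    · linarith
  have hp1 : ((κ : ℝ) - 1) * (a + b) + a = 1 := by
    have : ((κ : ℝ) - 1) ≠ 0 := by linarith
    rw [hb]; field_simp; ring
  clear hb
  obtain ⟨p, hp⟩ : ∃ p, p = a + b := ⟨_, rfl⟩
  rw [← hp] at hp1 hgap hself
  have hp0 : 0 < p := by linarith
  have hap : a < p := by linarith
  -- closed gaps
  have hgap' : ∀ k : ℕ, k + 1 ≤ κ - 1 →
      ∀ x ∈ Set.Icc ((k : ℝ) * p + a) (((k : ℝ) + 1) * p), f x = f ((k : ℝ) * p + a) := by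
    intro k hk
    have hkR : (k : ℝ) + 2 ≤ κ := by
      have : k + 2 ≤ κ := by omega
      exact_mod_cast this
    obtain ⟨c, hcc⟩ := hgap (k + 1) (by omega) hk
    push_cast at hcc
    rw [add_sub_cancel_right] at hcc
    have hlt : (k : ℝ) * p + a < ((k : ℝ) + 1) * p := by linarith
    have hE : Set.EqOn f (fun _ => c) (Set.Icc ((k : ℝ) * p + a) (((k : ℝ) + 1) * p)) := by
      apply Set.EqOn.of_subset_closure (s := Set.Ioo ((k : ℝ) * p + a) (((k : ℝ) + 1) * p))
      · intro x hx; exact hcc x hx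
      · apply hc.mono
        intro x hx
        have := hx.1
        have := hx.2
        have : (0 : ℝ) ≤ k * p := by positivity
        have : ((k : ℝ) + 1) * p ≤ (κ - 1) * p := by
          apply mul_le_mul_of_nonneg_right _ hp0.le; linarith
        constructor <;> linarith
      · exact continuousOn_const
      · exact Set.Ioo_subset_Icc_self
      · rw [closure_Ioo hlt.ne]
    intro x hx
    rw [hE hx, hE (Set.left_mem_Icc.2 hlt.le)]
  have hstep : ∀ k : ℕ, k ≤ κ - 1 → ∀ x ∈ Set.Icc (0 : ℝ) 1,
      κ * f (k * p + a * x) = f x + κ * f (k * p) := by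
    intro k hk x hx
    obtain ⟨c, hcc⟩ := hself k hk
    have e0 := hcc 0 (by simp)
    rw [mul_zero, add_zero, h0] at e0
    rw [hcc x hx, e0]; ring
  have hval : ∀ k : ℕ, k ≤ κ - 1 → κ * f (k * p) = k := by
    intro k
    induction k with
    | zero => intro _; simp [h0]
    | succ k ih =>
      intro hk
      have i1 := ih (by omega)
      have i2 := hstep k (by omega) 1 (by simp)
      have i3 := hgap' k hk (((k : ℝ) + 1) * p) ⟨by linarith, le_rfl⟩
      push_cast
      rw [i3]
      rw [mul_one, h1] at i2
      linarith
  have hG : ∀ k : ℕ, k + 1 ≤ κ - 1 →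
      ∀ x ∈ Set.Icc ((k : ℝ) * p + a) (((k : ℝ) + 1) * p), κ * f x = k + 1 := by
    intro k hk x hx
    have i1 := hval k (by omega)
    have i2 := hstep k (by omega) 1 (by simp)
    rw [mul_one, h1] at i2
    rw [hgap' k hk x hx]; linarith
  have hS : ∀ k : ℕ, k ≤ κ - 1 → ∀ x ∈ Set.Icc (0 : ℝ) 1,
      κ * f (k * p + a * x) = f x + k := by
    intro k hk x hx
    rw [hstep k hk x hx, hval k hk]
  -- the defect function
  have hgc : ContinuousOn (fun x => |f x + f (1 - x) - 1|) (Set.Icc 0 1) := by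
    have : ContinuousOn (fun x => f (1 - x)) (Set.Icc 0 1) := by
      apply hc.comp (by fun_prop)
      intro x hx
      exact ⟨by linarith [hx.2], by linarith [hx.1]⟩
    exact ((hc.add this).sub continuousOn_const).abs
  obtain ⟨x0, hx0, hmax⟩ := isCompact_Icc.exists_isMaxOn
    (Set.nonempty_Icc.2 (zero_le_one (α := ℝ))) hgc
  have hmax' : ∀ x ∈ Set.Icc (0 : ℝ) 1, |f x + f (1 - x) - 1| ≤ |f x0 + f (1 - x0) - 1| :=
    fun x hx => hmax hx
  have key : f x0 + f (1 - x0) - 1 = 0 := by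
    obtain ⟨k, hk⟩ : ∃ k, k = ⌊x0 / p⌋₊ := ⟨_, rfl⟩
    have hk1 : (k : ℝ) * p ≤ x0 := by
      rw [← le_div_iff₀ hp0, hk]
      exact Nat.floor_le (div_nonneg hx0.1 hp0.le)
    have hk2 : x0 < ((k : ℝ) + 1) * p := by
      rw [← div_lt_iff₀ hp0, hk]
      exact Nat.lt_floor_add_one _
    have hkκ : k < κ := by
      have : (k : ℝ) * p < κ * p := by linarith [hx0.2]
      exact_mod_cast lt_of_mul_lt_mul_right this hp0.le
    by_cases hcase : x0 ≤ k * p + a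
    · obtain ⟨m, hm⟩ : ∃ m, κ = m + k + 1 := ⟨κ - 1 - k, by omega⟩
      have hmR : (κ : ℝ) = m + k + 1 := by exact_mod_cast hm
      obtain ⟨y, hy⟩ : ∃ y, y = (x0 - k * p) / a := ⟨_, rfl⟩
      have hay : a * y = x0 - k * p := by rw [hy]; field_simp
      have hy01 : y ∈ Set.Icc (0 : ℝ) 1 := by
        rw [hy]
        exact ⟨div_nonneg (by linarith) ha.le, (div_le_one ha).2 (by linarith)⟩
      have e1 := hS k (by omega) y hy01
      have e2 := hS m (by omega) (1 - y) ⟨by linarith [hy01.2], by linarith [hy01.1]⟩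
      rw [show (k : ℝ) * p + a * y = x0 by linarith] at e1
      have : (m : ℝ) * p + a * (1 - y) = 1 - x0 := by
        rw [hmR] at hp1
        linear_combination hp1 - hay
      rw [this] at e2
      have e3 : κ * (f x0 + f (1 - x0) - 1) = f y + f (1 - y) - 1 := by linarith
      have e4 := hmax' y hy01
      rw [← e3, abs_mul, abs_of_pos hK0] at e4
      have := abs_nonneg (f x0 + f (1 - x0) - 1)
      apply abs_eq_zero.1
      nlinarith
    · push Not at hcase
      have hk3 : k + 1 < κ := by
        by_contra hcon
        have : κ = k + 1 := by omega
        have hR : (κ : ℝ) = k + 1 := by exact_mod_cast this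
        rw [hR] at hp1
        have := hx0.2
        linarith
      obtain ⟨m, hm⟩ : ∃ m, κ = m + k + 2 := ⟨κ - 2 - k, by omega⟩
      have hmR : (κ : ℝ) = m + k + 2 := by exact_mod_cast hm
      have e1 := hG k (by omega) x0 ⟨hcase.le, hk2.le⟩
      have e2 := hG m (by omega) (1 - x0) (by
        rw [hmR] at hp1
        constructor <;> linarith)
      have e3 : κ * (f x0 + f (1 - x0) - 1) = 0 := by linarith
      exact (mul_eq_zero.1 e3).resolve_left hK0.ne'
  intro x hx
  have h := hmax' x hx
  rw [key, abs_zero] at h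
  have := abs_eq_zero.1 (le_antisymm h (abs_nonneg _))
  linarith
end

section
/- For every integer κ ≥ 2 and every real a ∈ (0, 1/κ), there exists exactly one continuous function f : [0,1] → ℝ that is a self-similar function of Cantor type with parameters κ, a, b (where b = (1 − κa)/(κ − 1)). -/
open BoundedContinuousFunction in
theorem cantor_aux_fixed (κ : ℕ) (a L : ℝ) (hκ : 2 ≤ κ) (ha : 0 < a) (hL : a < L)
    (h1 : ((κ : ℝ) - 1) * L + a = 1) :
    ∃ F : ℝ → ℝ, Continuous F ∧ (∀ x ≤ 0, F x = 0) ∧ (∀ x, 1 ≤ x → F x = 1) ∧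
      ∀ x, F x = (1 / (κ : ℝ)) * ∑ k ∈ Finset.range κ, F ((x - k * L) / a) := by
  have hκ0 : (0 : ℝ) < κ := by positivity
  have hκ2 : (2 : ℝ) ≤ κ := by exact_mod_cast hκ
  let S : Set (ℝ →ᵇ ℝ) := {f | (∀ x ≤ 0, f x = 0) ∧ (∀ x, 1 ≤ x → f x = 1)}
  have hS : IsClosed S := by
    have : S = (⋂ x ∈ Set.Iic (0 : ℝ), {f : ℝ →ᵇ ℝ | f x = 0}) ∩
        (⋂ x ∈ Set.Ici (1 : ℝ), {f : ℝ →ᵇ ℝ | f x = 1}) := by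
      ext f; simp [S]
    rw [this]
    refine IsClosed.inter ?_ ?_ <;> refine isClosed_biInter fun x _ => ?_
    · exact isClosed_eq (continuous_eval_const x) continuous_const
    · exact isClosed_eq (continuous_eval_const x) continuous_const
  let T0 : (ℝ →ᵇ ℝ) → (ℝ →ᵇ ℝ) := fun f => (1 / (κ : ℝ)) •
    ∑ k ∈ Finset.range κ, f.compContinuous ⟨fun x => (x - (k : ℕ) * L) / a, by fun_prop⟩
  have T0_apply : ∀ f x, T0 f x = (1 / (κ : ℝ)) * ∑ k ∈ Finset.range κ, f ((x - k * L) / a) := by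
    intro f x
    simp [T0]
  have hT0 : ∀ f ∈ S, T0 f ∈ S := by
    rintro f ⟨f0, f1⟩
    refine ⟨fun x hx => ?_, fun x hx => ?_⟩
    · rw [T0_apply, Finset.sum_eq_zero, mul_zero]
      intro k _
      apply f0
      apply div_nonpos_of_nonpos_of_nonneg _ ha.le
      have : 0 ≤ (k : ℝ) * L := mul_nonneg (by positivity) (by linarith)
      linarith
    · rw [T0_apply, Finset.sum_congr rfl (g := fun _ => (1 : ℝ))]
      · simp; field_simp
      intro k hk
      apply f1
      rw [le_div_iff₀ ha]
      have hk' : k + 1 ≤ κ := Finset.mem_range.1 hk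
      have hk2 : (k : ℝ) + 1 ≤ κ := by exact_mod_cast hk'
      nlinarith
  let T : S → S := fun f => ⟨T0 f.1, hT0 _ f.2⟩
  have hne : Nonempty S := by
    refine ⟨⟨BoundedContinuousFunction.ofNormedAddCommGroup (fun x : ℝ => max 0 (min x 1))
      (by fun_prop) 1 ?_, ?_, ?_⟩⟩
    · intro x
      rw [Real.norm_eq_abs, abs_of_nonneg (le_max_left _ _)]
      exact max_le zero_le_one (min_le_right _ _)
    · intro x hx
      simp [hx]
    · intro x hx
      simp [hx]
  have : CompleteSpace S := hS.completeSpace_coe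
  have hT : ContractingWith (1 / (κ : NNReal)) T := by
    refine ⟨?_, LipschitzWith.of_dist_le_mul fun f g => ?_⟩
    · rw [div_lt_one (by positivity)]
      exact_mod_cast (by omega : 1 < κ)
    · rw [Subtype.dist_eq, Subtype.dist_eq]
      have hd : (0 : ℝ) ≤ dist f.1 g.1 := dist_nonneg
      rw [BoundedContinuousFunction.dist_le (by positivity)]
      intro x
      change dist (T0 f.1 x) (T0 g.1 x) ≤ _
      rw [T0_apply, T0_apply, Real.dist_eq, ← mul_sub, ← Finset.sum_sub_distrib, abs_mul,
        abs_of_pos (by positivity)]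
      push_cast
      apply mul_le_mul_of_nonneg_left _ (by positivity)
      have hz : ∀ y, f.1 y - g.1 y ≠ 0 → 0 < y ∧ y < 1 := by
        intro y hy
        constructor
        · by_contra h
          exact hy (by rw [f.2.1 y (not_lt.1 h), g.2.1 y (not_lt.1 h), sub_self])
        · by_contra h
          exact hy (by rw [f.2.2 y (not_lt.1 h), g.2.2 y (not_lt.1 h), sub_self])
      by_cases hall : ∀ k ∈ Finset.range κ,
          f.1 ((x - k * L) / a) - g.1 ((x - k * L) / a) = 0
      · rw [Finset.sum_eq_zero hall, abs_zero]; exact hd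
      · push Not at hall
        obtain ⟨k, hk, hk0⟩ := hall
        rw [Finset.sum_eq_single_of_mem k hk]
        · rw [← Real.dist_eq]; exact BoundedContinuousFunction.dist_coe_le_dist _
        · intro j _ hjk
          by_contra hj0
          obtain ⟨p1, p2⟩ := hz _ hk0
          obtain ⟨q1, q2⟩ := hz _ hj0
          rw [div_lt_one ha] at p2 q2
          rw [lt_div_iff₀ ha] at p1 q1
          rcases lt_or_gt_of_ne hjk with h | h
          · have : (j : ℝ) + 1 ≤ k := by exact_mod_cast h
            nlinarith
          · have : (k : ℝ) + 1 ≤ j := by exact_mod_cast h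
            nlinarith
  let F := hT.fixedPoint T
  have hF : T F = F := hT.fixedPoint_isFixedPt
  refine ⟨F.1, F.1.continuous, F.2.1, F.2.2, fun x => ?_⟩
  rw [← T0_apply]
  exact (congrArg (fun f : S => f.1 x) hF).symm

theorem cantor_aux_exists (κ : ℕ) (a b : ℝ) (hκ : 2 ≤ κ) (ha : 0 < a) (hb : 0 < b)
    (h1 : ((κ : ℝ) - 1) * (a + b) + a = 1) : ∃ f : ℝ → ℝ, CantorType κ a b f := by
  obtain ⟨F, hc, f0, f1, hF⟩ := cantor_aux_fixed κ a (a + b) hκ ha (by linarith) h1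
  have hκ0 : (0 : ℝ) < κ := by positivity
  refine ⟨F, hc.continuousOn, f0 0 le_rfl, f1 1 le_rfl, ?_, ?_⟩
  · intro k hk1 hk2
    refine ⟨(1 / (κ : ℝ)) * ∑ j ∈ Finset.range κ, if j < k then 1 else 0, fun x hx => ?_⟩
    rw [hF]
    congr 1
    refine Finset.sum_congr rfl fun j _ => ?_
    split_ifs with h
    · apply f1
      rw [le_div_iff₀ ha]
      have : (j : ℝ) + 1 ≤ k := by exact_mod_cast h
      nlinarith [hx.1]
    · apply f0
      apply div_nonpos_of_nonpos_of_nonneg _ ha.le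
      have : (k : ℝ) ≤ j := by exact_mod_cast not_lt.1 h
      nlinarith [hx.2]
  · intro k hk
    refine ⟨∑ j ∈ (Finset.range κ).erase k, if j < k then 1 else 0, fun x hx => ?_⟩
    have hkm : k ∈ Finset.range κ := Finset.mem_range.2 (by omega)
    rw [hF, ← mul_assoc, mul_one_div_cancel hκ0.ne', one_mul, ← Finset.add_sum_erase _ _ hkm]
    congr 1
    · congr 1; field_simp; ring
    refine Finset.sum_congr rfl fun j hj => ?_
    have hjk := Finset.ne_of_mem_erase hj
    have hax : 0 ≤ a * x := mul_nonneg ha.le hx.1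
    have hax' : a * x ≤ a := by nlinarith [hx.2]
    split_ifs with h
    · apply f1
      rw [le_div_iff₀ ha]
      have : (j : ℝ) + 1 ≤ k := by exact_mod_cast h
      nlinarith
    · apply f0
      apply div_nonpos_of_nonpos_of_nonneg _ ha.le
      have : (k : ℝ) + 1 ≤ j := by exact_mod_cast (by omega : k + 1 ≤ j)
      nlinarith

/-- Values of a Cantor type function. -/
theorem cantor_aux_values (κ : ℕ) (a b : ℝ) (hκ : 2 ≤ κ) (ha : 0 < a) (hb : 0 < b)
    (h1 : ((κ : ℝ) - 1) * (a + b) + a = 1) (f : ℝ → ℝ) (hf : CantorType κ a b f) :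
    (∀ k : ℕ, k ≤ κ - 1 → f (k * (a + b)) = k / κ) ∧
    (∀ k : ℕ, k ≤ κ - 1 → ∀ x ∈ Set.Icc (0 : ℝ) 1,
      κ * f (k * (a + b) + a * x) = f x + k) ∧
    (∀ k : ℕ, 1 ≤ k → k ≤ κ - 1 →
      ∀ x ∈ Set.Ioo (((k : ℝ) - 1) * (a + b) + a) ((k : ℝ) * (a + b)), f x = k / κ) := by
  obtain ⟨hc, f0, f1, hgap, hself⟩ := hf
  have hκ0 : (0 : ℝ) < κ := by positivity
  have hstep : ∀ k : ℕ, k ≤ κ - 1 → ∀ x ∈ Set.Icc (0 : ℝ) 1,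
      κ * f (k * (a + b) + a * x) = f x + κ * f (k * (a + b)) := by
    intro k hk x hx
    obtain ⟨c, hcc⟩ := hself k hk
    have e0 := hcc 0 ⟨le_rfl, zero_le_one⟩
    rw [mul_zero, add_zero, f0, zero_add] at e0
    rw [hcc x hx, e0]
  have hgapc : ∀ k : ℕ, 1 ≤ k → k ≤ κ - 1 →
      ∀ x ∈ Set.Icc (((k : ℝ) - 1) * (a + b) + a) ((k : ℝ) * (a + b)),
        f x = f (k * (a + b)) := by
    intro k hk1 hk
    obtain ⟨c, hcc⟩ := hgap k hk1 hk
    have hlt : ((k : ℝ) - 1) * (a + b) + a < (k : ℝ) * (a + b) := by nlinarith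
    have hk1' : (1 : ℝ) ≤ k := by exact_mod_cast hk1
    have hk' : (k : ℝ) + 1 ≤ κ := by exact_mod_cast (by omega : k + 1 ≤ κ)
    have hsub : Set.Icc (((k : ℝ) - 1) * (a + b) + a) ((k : ℝ) * (a + b)) ⊆ Set.Icc 0 1 := by
      apply Set.Icc_subset_Icc <;> nlinarith
    have heq : Set.EqOn f (fun _ => c)
        (Set.Icc (((k : ℝ) - 1) * (a + b) + a) ((k : ℝ) * (a + b))) := by
      refine Set.EqOn.of_subset_closure (s := Set.Ioo (((k : ℝ) - 1) * (a + b) + a)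
        ((k : ℝ) * (a + b))) hcc (hc.mono hsub) continuousOn_const Set.Ioo_subset_Icc_self ?_
      rw [closure_Ioo hlt.ne]
    intro x hx
    rw [heq hx, heq ⟨hlt.le, le_rfl⟩]
  have hval : ∀ k : ℕ, k ≤ κ - 1 → f (k * (a + b)) = k / κ := by
    intro k
    induction k with
    | zero => intro _; simp [f0]
    | succ k ih =>
      intro hk
      have e1 := ih (by omega)
      have e2 := hstep k (by omega) 1 ⟨zero_le_one, le_rfl⟩
      have hlt : (((k + 1 : ℕ) : ℝ) - 1) * (a + b) + a ≤ ((k + 1 : ℕ) : ℝ) * (a + b) := by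
        nlinarith
      have e3 := hgapc (k + 1) (by omega) hk _ ⟨le_rfl, hlt⟩
      rw [← e3]
      have e4 : (((k + 1 : ℕ) : ℝ) - 1) * (a + b) + a = k * (a + b) + a * 1 := by
        push_cast; ring
      rw [e4, eq_div_iff hκ0.ne', mul_comm, e2, e1, f1]
      push_cast
      field_simp
      ring
  refine ⟨hval, fun k hk x hx => ?_, fun k hk1 hk x hx => ?_⟩
  · rw [hstep k hk x hx, hval k hk]
    field_simp
  · rw [hgapc k hk1 hk x ⟨hx.1.le, hx.2.le⟩, hval k hk]

theorem cantor_aux_cover (κ : ℕ) (a b : ℝ) (hκ : 2 ≤ κ) (ha : 0 < a) (hb : 0 < b)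
    (h1 : ((κ : ℝ) - 1) * (a + b) + a = 1) (x : ℝ) (hx : x ∈ Set.Icc (0 : ℝ) 1) :
    (∃ k : ℕ, k ≤ κ - 1 ∧ ∃ y ∈ Set.Icc (0 : ℝ) 1, x = k * (a + b) + a * y) ∨
    (∃ k : ℕ, 1 ≤ k ∧ k ≤ κ - 1 ∧
      x ∈ Set.Ioo (((k : ℝ) - 1) * (a + b) + a) ((k : ℝ) * (a + b))) := by
  have hL : 0 < a + b := by linarith
  set k := ⌊x / (a + b)⌋₊ with hkdef
  have hk1 : (k : ℝ) * (a + b) ≤ x := by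
    rw [← le_div_iff₀ hL]; exact Nat.floor_le (div_nonneg hx.1 hL.le)
  have hk2 : x < ((k : ℝ) + 1) * (a + b) := by
    rw [← div_lt_iff₀ hL]; exact Nat.lt_floor_add_one _
  have hkκ : k < κ := by
    have : (k : ℝ) < κ := by
      by_contra h
      nlinarith [hx.2, not_lt.1 h]
    exact_mod_cast this
  by_cases h : x ≤ k * (a + b) + a
  · left
    refine ⟨k, by omega, (x - k * (a + b)) / a, ⟨div_nonneg (by linarith) ha.le, ?_⟩, ?_⟩
    · rw [div_le_one ha]; linarith
    · field_simp; ring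
  · right
    have h := not_le.1 h
    refine ⟨k + 1, by omega, ?_, ?_, ?_⟩
    · by_contra hc
      have : k + 1 = κ := by omega
      have : (k : ℝ) + 1 = κ := by exact_mod_cast this
      have e : (k : ℝ) = κ - 1 := by linarith
      rw [e] at h
      linarith [hx.2]
    · push_cast; linarith
    · push_cast; exact hk2

theorem cantor_aux_unique (κ : ℕ) (a b : ℝ) (hκ : 2 ≤ κ) (ha : 0 < a) (hb : 0 < b)
    (h1 : ((κ : ℝ) - 1) * (a + b) + a = 1) (f g : ℝ → ℝ) (hf : CantorType κ a b f)
    (hg : CantorType κ a b g) : Set.EqOn f g (Set.Icc 0 1) := by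
  obtain ⟨-, fs, fg⟩ := cantor_aux_values κ a b hκ ha hb h1 f hf
  obtain ⟨-, gs, gg⟩ := cantor_aux_values κ a b hκ ha hb h1 g hg
  have hκ2 : (2 : ℝ) ≤ κ := by exact_mod_cast hκ
  obtain ⟨x, hx, hmax⟩ := isCompact_Icc.exists_isMaxOn (Set.nonempty_Icc.2 zero_le_one)
    ((hf.1.sub hg.1).abs)
  have hx0 : |f x - g x| ≤ 0 := by
    rcases cantor_aux_cover κ a b hκ ha hb h1 x hx with ⟨k, hk, y, hy, hxy⟩ | ⟨k, hk1, hk, hxk⟩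
    · have e1 := fs k hk y hy
      have e2 := gs k hk y hy
      rw [← hxy] at e1 e2
      have e3 : κ * (f x - g x) = f y - g y := by linarith
      have e4 : (κ : ℝ) * |f x - g x| = |f y - g y| := by
        rw [← e3, abs_mul, Nat.abs_cast]
      have e5 : |f y - g y| ≤ |f x - g x| := hmax hy
      nlinarith [abs_nonneg (f x - g x)]
    · rw [fg k hk1 hk x hxk, gg k hk1 hk x hxk]; simp
  intro y hy
  have e5 : |f y - g y| ≤ |f x - g x| := hmax hy
  have := abs_nonpos_iff.1 (e5.trans hx0)
  linarith

theorem cantorType_exists_unique (κ : ℕ) (a b : ℝ) (hκ : 2 ≤ κ)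
    (ha : 0 < a) (ha' : a < 1 / κ) (hb : b = (1 - κ * a) / (κ - 1)) :
    (∃ f : ℝ → ℝ, CantorType κ a b f) ∧
      ∀ f g : ℝ → ℝ, CantorType κ a b f → CantorType κ a b g →
        Set.EqOn f g (Set.Icc 0 1) := by
  have hκ2 : (2 : ℝ) ≤ κ := by exact_mod_cast hκ
  have hκa : κ * a < 1 := by
    rw [lt_div_iff₀ (by linarith)] at ha'
    linarith
  have hb0 : 0 < b := by
    rw [hb]
    exact div_pos (by linarith) (by linarith)
  have h1 : ((κ : ℝ) - 1) * (a + b) + a = 1 := by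
    have h : (κ : ℝ) - 1 ≠ 0 := by linarith
    rw [hb]
    field_simp
    ring
  exact ⟨cantor_aux_exists κ a b hκ ha hb0 h1, fun f g hf hg =>
    cantor_aux_unique κ a b hκ ha hb0 h1 f g hf hg⟩
end

section
/- Every self-similar function of Cantor type with parameters κ, a, b is nondecreasing on [0,1]. -/
theorem cantorType_monotoneOn (κ : ℕ) (a b : ℝ) (hκ : 2 ≤ κ)
    (ha : 0 < a) (ha' : a < 1 / κ) (hb : b = (1 - κ * a) / (κ - 1))
    (f : ℝ → ℝ) (hf : CantorType κ a b f) :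
    MonotoneOn f (Set.Icc 0 1) := by
  obtain ⟨hc, h0, h1, hgap, hself⟩ := hf
  have hκ2 : (2 : ℝ) ≤ κ := by exact_mod_cast hκ
  have hκ0 : (0 : ℝ) < κ := by linarith
  have haκ : κ * a < 1 := by
    rw [lt_div_iff₀ hκ0] at ha'; linarith
  have hb0 : 0 < b := by
    rw [hb]; apply div_pos <;> linarith
  have hd : ((κ : ℝ) - 1) * (a + b) + a = 1 := by
    have : ((κ : ℝ) - 1) * b = 1 - κ * a := by
      rw [hb]; field_simp [show (κ : ℝ) - 1 ≠ 0 by linarith]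
    linarith
  have hd0 : 0 < a + b := by linarith
  -- bound on pieces
  have hle : ∀ k : ℕ, k ≤ κ - 1 → (k : ℝ) * (a + b) + a ≤ 1 := by
    intro k hk
    have : (k : ℝ) + 1 ≤ κ := by exact_mod_cast (by omega : k + 1 ≤ κ)
    nlinarith
  -- closed gaps
  have hg : ∀ k : ℕ, k + 1 ≤ κ - 1 → ∀ x ∈ Set.Icc ((k : ℝ) * (a + b) + a)
      (((k : ℝ) + 1) * (a + b)), f x = f ((k : ℝ) * (a + b) + a) := by
    intro k hk
    obtain ⟨c, hcc⟩ := hgap (k + 1) (by omega) hk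
    push_cast at hcc
    rw [add_sub_cancel_right] at hcc
    have hlt : (k : ℝ) * (a + b) + a < ((k : ℝ) + 1) * (a + b) := by linarith
    have hl := hle (k + 1) hk
    push_cast at hl
    have hk0 : (0 : ℝ) ≤ k * (a + b) := by positivity
    have hE : Set.EqOn f (fun _ => c) (Set.Icc ((k : ℝ) * (a + b) + a)
      (((k : ℝ) + 1) * (a + b))) := by
      apply Set.EqOn.of_subset_closure (s := Set.Ioo ((k : ℝ) * (a + b) + a)
        (((k : ℝ) + 1) * (a + b))) hcc
      · exact hc.mono (Set.Icc_subset_Icc (by linarith) (by linarith))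
      · exact continuousOn_const
      · exact Set.Ioo_subset_Icc_self
      · rw [closure_Ioo hlt.ne]
    intro x hx
    rw [hE hx, hE (Set.left_mem_Icc.2 hlt.le)]
  have hend : ∀ k : ℕ, k ≤ κ - 1 → κ * f ((k : ℝ) * (a + b) + a) = κ * f (k * (a + b)) + 1 := by
    intro k hk
    obtain ⟨c, hcc⟩ := hself k hk
    have e0 := hcc 0 (by simp)
    have e1 := hcc 1 (by simp)
    simp only [mul_zero, add_zero, mul_one] at e0 e1
    linarith
  have hval : ∀ k : ℕ, k ≤ κ - 1 → κ * f ((k : ℝ) * (a + b)) = k := by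
    intro k
    induction k with
    | zero => intro _; simp [h0]
    | succ k ih =>
      intro hk
      have e1 := ih (by omega)
      have e2 := hend k (by omega)
      have e3 := hg k hk (((k : ℝ) + 1) * (a + b)) ⟨by linarith, le_rfl⟩
      push_cast
      rw [e3]; linarith
  have hpiece : ∀ k : ℕ, k ≤ κ - 1 → ∀ t ∈ Set.Icc (0 : ℝ) 1,
      κ * f ((k : ℝ) * (a + b) + a * t) = k + f t := by
    intro k hk t ht
    obtain ⟨c, hcc⟩ := hself k hk
    have e0 := hcc 0 (by simp)
    have e := hcc t ht
    simp only [mul_zero, add_zero] at e0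
    have := hval k hk
    linarith
  have hdec : ∀ x ∈ Set.Icc (0 : ℝ) 1, ∃ k : ℕ, k + 1 ≤ κ ∧ (k : ℝ) * (a + b) ≤ x ∧
      x < (k + 1) * (a + b) ∧ min 1 ((x - k * (a + b)) / a) ∈ Set.Icc (0 : ℝ) 1 ∧
      κ * f x = k + f (min 1 ((x - k * (a + b)) / a)) := by
    intro x hx
    have hq : 0 ≤ x / (a + b) := div_nonneg hx.1 hd0.le
    have q1 := Nat.floor_le hq
    have q2 := Nat.lt_floor_add_one (x / (a + b))
    generalize ⌊x / (a + b)⌋₊ = k at q1 q2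
    rw [le_div_iff₀ hd0] at q1
    rw [div_lt_iff₀ hd0] at q2
    have hkκ : k + 1 ≤ κ := by
      by_contra hcon
      have : (κ : ℝ) ≤ k := by exact_mod_cast (by omega : κ ≤ k)
      have := hx.2
      nlinarith
    have hm : min 1 ((x - k * (a + b)) / a) ∈ Set.Icc (0 : ℝ) 1 :=
      ⟨le_min zero_le_one (div_nonneg (by linarith) ha.le), min_le_left _ _⟩
    refine ⟨k, hkκ, q1, q2, hm, ?_⟩
    rw [← hpiece k (by omega) _ hm]
    congr 1
    by_cases hr : x - k * (a + b) ≤ a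
    · rw [min_eq_right ((div_le_one ha).2 hr), mul_div_cancel₀ _ ha.ne']
      congr 1; ring
    · push Not at hr
      rw [min_eq_left ((one_le_div ha).2 hr.le), mul_one]
      apply hg k _ x ⟨by linarith, q2.le⟩
      by_contra hcon
      have : (k : ℝ) + 1 = κ := by exact_mod_cast (by omega : k + 1 = κ)
      rw [← this] at hd
      have := hx.2
      linarith
  have hrange : ∀ x ∈ Set.Icc (0 : ℝ) 1, 0 ≤ f x ∧ f x ≤ 1 := by
    have hne : (Set.Icc (0 : ℝ) 1).Nonempty := ⟨0, by simp⟩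
    obtain ⟨M, hM, hMx⟩ := isCompact_Icc.exists_isMaxOn hne hc
    obtain ⟨m, hm, hmx⟩ := isCompact_Icc.exists_isMinOn hne hc
    have HM : f M ≤ 1 := by
      obtain ⟨k, hk, -, -, ht, e⟩ := hdec M hM
      have : f _ ≤ f M := hMx ht
      have hk' : (k : ℝ) + 1 ≤ κ := by exact_mod_cast hk
      by_contra hcon
      push Not at hcon
      nlinarith
    have Hm : 0 ≤ f m := by
      obtain ⟨k, hk, -, -, ht, e⟩ := hdec m hm
      have : f m ≤ f _ := hmx ht
      have hk' : (0 : ℝ) ≤ k := by positivity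
      by_contra hcon
      push Not at hcon
      nlinarith
    intro x hx
    exact ⟨Hm.trans (hmx hx), (hMx hx : f x ≤ f M).trans HM⟩
  have key : ∀ n : ℕ, ∀ x ∈ Set.Icc (0 : ℝ) 1, ∀ y ∈ Set.Icc (0 : ℝ) 1, x ≤ y →
      f x - f y ≤ (1 / 2 : ℝ) ^ n := by
    intro n
    induction n with
    | zero =>
      intro x hx y hy _
      have := hrange x hx
      have := hrange y hy
      simp only [pow_zero]; linarith
    | succ n ih =>
      intro x hx y hy hxy
      obtain ⟨k, hk, k1, k2, kt, ke⟩ := hdec x hx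
      obtain ⟨j, hj, j1, j2, jt, je⟩ := hdec y hy
      have hkj : k ≤ j := by
        by_contra hcon
        have : (j : ℝ) + 1 ≤ k := by exact_mod_cast (by omega : j + 1 ≤ k)
        nlinarith
      have hp : (0 : ℝ) < (1 / 2) ^ n := by positivity
      have hs : (κ : ℝ) * (f x - f y) ≤ (1 / 2) ^ n := by
        rcases hkj.eq_or_lt with rfl | hlt
        · have := ih _ kt _ jt (by gcongr)
          linarith
        · have : (k : ℝ) + 1 ≤ j := by exact_mod_cast hlt
          have := (hrange _ kt).2
          have := (hrange _ jt).1
          linarith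
      rw [pow_succ]
      by_contra hcon
      push Not at hcon
      nlinarith
  intro x hx y hy hxy
  have ht : Filter.Tendsto (fun n : ℕ => (1 / 2 : ℝ) ^ n) Filter.atTop (nhds 0) :=
    tendsto_pow_atTop_nhds_zero_of_lt_one (by norm_num) (by norm_num)
  have := ge_of_tendsto' ht (fun n => key n x hx y hy hxy)
  linarith
end

section
/- Let (λ_n)_{n∈ℕ} be a strictly increasing enumeration of all eigenvalues of the Neumann problem (γ₀ = γ₁ = 0) for the equation −y'' − λρy = 0 with weight ρ the distributional derivative of the Cantor-type self-similar function P with parameters κ, a, b, i.e., λ is strictly increasing and its range is exactly the set of all eigenvalues. Then for every n ∈ ℕ one has λ_{κn} = (κ/a)·λ_n. -/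
open MeasureTheory

/-- `lam` is an eigenvalue of the boundary value problem
`-y'' - λ ρ y = 0`, `y⁽¹⁾(0) - γ₀ y(0) = 0`, `y⁽¹⁾(1) + γ₁ y(1) = 0`, where `ρ` is the
distributional derivative of the function whose Lebesgue–Stieltjes measure is `μ`:
there are continuous `y, g : [0,1] → ℝ`, `y` not identically zero, with
`y(x) = y(0) + ∫₀ˣ g`, `g(x) = g(0) - λ ∫_{[0,x]} y dμ`, and
`g(0) - γ₀ y(0) = 0`, `g(1) + γ₁ y(1) = 0`. -/
def IsEigen (μ : Measure ℝ) (γ₀ γ₁ lam : ℝ) : Prop :=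
  ∃ y g : ℝ → ℝ, ContinuousOn y (Set.Icc 0 1) ∧ ContinuousOn g (Set.Icc 0 1) ∧
    (∃ x ∈ Set.Icc (0 : ℝ) 1, y x ≠ 0) ∧
    (∀ x ∈ Set.Icc (0 : ℝ) 1, y x = y 0 + ∫ t in (0 : ℝ)..x, g t) ∧
    (∀ x ∈ Set.Icc (0 : ℝ) 1, g x = g 0 - lam * ∫ t in Set.Icc (0 : ℝ) x, y t ∂μ) ∧
    g 0 - γ₀ * y 0 = 0 ∧ g 1 + γ₁ * y 1 = 0


section
open Set Filter Topology

namespace Cantor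

abbrev X := C(Set.Icc (0:ℝ) 1, ℝ)

noncomputable def ex (f : X) : ℝ → ℝ := Set.IccExtend zero_le_one f

lemma ex_cont (f : X) : Continuous (ex f) := f.continuous.Icc_extend'

lemma ex_le (f : X) (x : ℝ) : |ex f x| ≤ ‖f‖ := by
  simpa [ex, Set.IccExtend] using f.norm_coe_le_norm _

lemma ex_of_mem (f : X) {x : ℝ} (hx : x ∈ Icc (0:ℝ) 1) : ex f x = f ⟨x, hx⟩ :=
  Set.IccExtend_of_mem _ _ hx

lemma ex_add (f g : X) (x : ℝ) : ex (f + g) x = ex f x + ex g x := rfl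
lemma ex_smul (c : ℝ) (f : X) (x : ℝ) : ex (c • f) x = c * ex f x := rfl
lemma ex_mul (f g : X) (x : ℝ) : ex (f * g) x = ex f x * ex g x := rfl

lemma ex_ii (μ : Measure ℝ) [IsFiniteMeasure μ] (f : X) (p q : ℝ) :
    IntervalIntegrable (ex f) μ p q := (ex_cont f).intervalIntegrable _ _

/-- bound -/
lemma int_bound (μ : Measure ℝ) [IsFiniteMeasure μ] (h1 : μ.real (Ioc 0 1) ≤ 1)
    (f : ℝ → ℝ) (c t : ℝ) (ht : t ∈ Icc (0:ℝ) 1) (hc : 0 ≤ c)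
    (hf : ∀ x ∈ Ioc 0 t, |f x| ≤ c) : |∫ s in (0:ℝ)..t, f s ∂μ| ≤ c := by
  rw [intervalIntegral.integral_of_le ht.1]
  have := norm_setIntegral_le_of_norm_le_const (μ := μ) (s := Ioc 0 t) (f := f) (C := c)
    (measure_lt_top _ _) hf
  rw [Real.norm_eq_abs] at this
  have h2 : μ.real (Ioc 0 t) ≤ μ.real (Ioc 0 1) :=
    measureReal_mono (Ioc_subset_Ioc_right ht.2)
  nlinarith

section gen
variable {E : Type*} [NormedAddCommGroup E] [NormedSpace ℝ E] [CompleteSpace E]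
  (T : E →L[ℝ] E)
lemma isUnit_gen (hT : ∀ n : ℕ, ‖T ^ n‖ ≤ 1 / n.factorial) (l : ℝ) : IsUnit (1 + l • T) := by
  obtain ⟨n, hn⟩ : ∃ n : ℕ, |l| ^ n / n.factorial < 1 :=
    ((FloorSemiring.tendsto_pow_div_factorial_atTop |l|).eventually_lt_const one_pos).exists
  set S := -(l • T) with hS
  have h : ‖S ^ n‖ < 1 := by
    have : S ^ n = (-l) ^ n • T ^ n := by rw [hS, ← neg_smul, smul_pow]
    rw [this, norm_smul]
    have h3 := hT n
    have : ‖(-l) ^ n‖ = |l| ^ n := by simp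
    rw [this]
    refine lt_of_le_of_lt ?_ hn
    rw [div_eq_mul_one_div]
    gcongr
  have hu : IsUnit (1 - S ^ n) := isUnit_one_sub_of_norm_lt_one h
  rw [← mul_neg_geom_sum] at hu
  have hc : Commute (1 - S) (∑ i ∈ Finset.range n, S ^ i) :=
    Commute.sum_right _ _ _ fun i _ => ((Commute.one_left S).sub_left (Commute.refl S)).pow_right i
  have := (hc.isUnit_mul_iff.1 hu).1
  simpa [hS] using this

lemma exists_R (hT : ∀ n : ℕ, ‖T ^ n‖ ≤ 1 / n.factorial) : ∃ R : ℝ → E → E, (∀ f, Continuous fun l => R l f) ∧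
    (∀ l f, R l f + l • T (R l f) = f) ∧ (∀ l f y, y + l • T y = f → y = R l f) := by
  refine ⟨fun l f => Ring.inverse (1 + l • T) f, ?_, ?_, ?_⟩
  · intro f
    have : Continuous fun l : ℝ => Ring.inverse (1 + l • T) := by
      rw [continuous_iff_continuousAt]
      intro l
      obtain ⟨u, hu⟩ := isUnit_gen T hT l
      have := NormedRing.inverse_continuousAt u
      rw [hu] at this
      exact ContinuousAt.comp (f := fun l : ℝ => 1 + l • T) this (by fun_prop)
    fun_prop
  · intro l f
    have := Ring.mul_inverse_cancel _ (isUnit_gen T hT l)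
    have := congrArg (fun T : E →L[ℝ] E => T f) this
    simpa using this
  · intro l f y h
    have := Ring.inverse_mul_cancel _ (isUnit_gen T hT l)
    have := congrArg (fun T : E →L[ℝ] E => T y) this
    rw [← h]
    exact (by simpa using this : _ = y).symm

end gen

section ops
variable (μ : Measure ℝ) [IsFiniteMeasure μ] [NullSingletonClass μ]

noncomputable def phi (f : X) (t : ℝ) : ℝ := ∫ s in (0:ℝ)..t, ex f s ∂μ

lemma phi_cont (f : X) : Continuous (phi μ f) :=
  intervalIntegral.continuous_primitive (fun p q => ex_ii μ f p q) 0

lemma phi_add (f g : X) (t : ℝ) : phi μ (f + g) t = phi μ f t + phi μ g t := by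
  unfold phi
  rw [← intervalIntegral.integral_add (ex_ii μ f _ _) (ex_ii μ g _ _)]
  rfl

lemma phi_smul (c : ℝ) (f : X) (t : ℝ) : phi μ (c • f) t = c * phi μ f t := by
  unfold phi
  rw [← intervalIntegral.integral_const_mul]
  rfl

noncomputable def V0 (f : X) : X :=
  ⟨fun x => ∫ t in (0:ℝ)..x.1, phi μ f t, by
    have : Continuous (fun x : ℝ => ∫ t in (0:ℝ)..x, phi μ f t) :=
      intervalIntegral.continuous_primitive
        (fun p q => (phi_cont μ f).intervalIntegrable _ _) 0
    exact this.comp continuous_subtype_val⟩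

lemma V0_apply (f : X) (x) : V0 μ f x = ∫ t in (0:ℝ)..x.1, phi μ f t := rfl

lemma V0_bound (h1 : μ.real (Ioc 0 1) ≤ 1) (n : ℕ) (c : ℝ) (f : X)
    (hf : ∀ x, |f x| ≤ c * x.1 ^ n / n.factorial) (hc : 0 ≤ c) (x) :
    |V0 μ f x| ≤ c * x.1 ^ (n+1) / (n+1).factorial := by
  rw [V0_apply]
  have hp : ∀ t ∈ Icc (0:ℝ) 1, |phi μ f t| ≤ c * t ^ n / n.factorial := by
    intro t ht
    have ht0 := ht.1
    apply int_bound μ h1 _ _ t ht (by positivity)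
    intro s hs
    rw [ex_of_mem f ⟨hs.1.le, hs.2.trans ht.2⟩]
    refine (hf _).trans ?_
    have := hs.1.le
    have := hs.2
    simp only
    gcongr
  have : |∫ t in (0:ℝ)..x.1, phi μ f t| ≤ ∫ t in (0:ℝ)..x.1, c * t ^ n / n.factorial := by
    rw [← Real.norm_eq_abs]
    apply intervalIntegral.norm_integral_le_of_norm_le x.2.1
    · refine Eventually.of_forall fun t ht => hp t ⟨ht.1.le, ht.2.trans x.2.2⟩
    · exact (by fun_prop : Continuous fun t : ℝ => c * t ^ n / n.factorial).intervalIntegrable _ _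
  refine this.trans (le_of_eq ?_)
  rw [intervalIntegral.integral_div, intervalIntegral.integral_const_mul, integral_pow,
    Nat.factorial_succ]
  push_cast
  have : (n.factorial : ℝ) ≠ 0 := by positivity
  field_simp
  simp

noncomputable def VL : X →ₗ[ℝ] X where
  toFun := V0 μ
  map_add' f g := by
    ext x
    simp only [ContinuousMap.add_apply, V0_apply, phi_add]
    rw [intervalIntegral.integral_add] <;> exact (phi_cont μ _).intervalIntegrable _ _
  map_smul' c f := by
    ext x
    simp only [ContinuousMap.smul_apply, V0_apply, phi_smul, intervalIntegral.integral_const_mul]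
    simp

variable (h1 : μ.real (Ioc 0 1) ≤ 1)

noncomputable def V : X →L[ℝ] X :=
  (VL μ).mkContinuous 1 (fun f => by
    rw [ContinuousMap.norm_le _ (by positivity)]
    intro x
    have := V0_bound μ h1 0 ‖f‖ f (fun x => by simpa using f.norm_coe_le_norm x) (by positivity) x
    have h2 := x.2.2
    simp at this
    show |V0 μ f x| ≤ _
    nlinarith [norm_nonneg f])

lemma V_apply (f : X) : V μ h1 f = V0 μ f := rfl

lemma V_pow_bound (f : X) (n : ℕ) (x) :
    |((V μ h1) ^ n) f x| ≤ ‖f‖ * x.1 ^ n / n.factorial := by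
  induction n generalizing x with
  | zero => simpa using f.norm_coe_le_norm x
  | succ n ih =>
    rw [pow_succ', mul_apply_eq_comp, V_apply]
    exact V0_bound μ h1 n _ _ ih (norm_nonneg _) x

lemma V_pow_norm (n : ℕ) : ‖(V μ h1) ^ n‖ ≤ 1 / n.factorial := by
  apply ContinuousLinearMap.opNorm_le_bound _ (by positivity)
  intro f
  rw [ContinuousMap.norm_le _ (by positivity)]
  intro x
  refine (V_pow_bound μ h1 f n x).trans ?_
  have : x.1 ^ n ≤ 1 := pow_le_one₀ x.2.1 x.2.2
  rw [one_div, inv_mul_eq_div]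
  gcongr
  nlinarith [norm_nonneg f]

lemma exists_RV (h1 : μ.real (Ioc 0 1) ≤ 1) : ∃ R : ℝ → X → X, (∀ f, Continuous fun l => R l f) ∧
    (∀ l f, R l f + l • V0 μ (R l f) = f) ∧ (∀ l f y, y + l • V0 μ y = f → y = R l f) :=
  exists_R (V μ h1) (V_pow_norm μ h1)

noncomputable def R : ℝ → X → X := (exists_RV μ h1).choose

lemma R_cont (f : X) : Continuous fun l => R μ h1 l f := (exists_RV μ h1).choose_spec.1 f

lemma R_spec (l : ℝ) (f : X) : R μ h1 l f + l • V0 μ (R μ h1 l f) = f :=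
  (exists_RV μ h1).choose_spec.2.1 l f

lemma R_uniq (l : ℝ) (f y : X) (h : y + l • V0 μ y = f) : y = R μ h1 l f :=
  (exists_RV μ h1).choose_spec.2.2 l f y h

lemma R_lin (l p q : ℝ) (f g : X) : R μ h1 l (p • f + q • g) = p • R μ h1 l f + q • R μ h1 l g := by
  symm
  apply R_uniq
  have e : ∀ f, V0 μ f = V μ h1 f := fun f => rfl
  rw [e, map_add, map_smul, map_smul]
  rw [← e, ← e]
  nth_rewrite 3 [← R_spec μ h1 l f]
  nth_rewrite 3 [← R_spec μ h1 l g]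
  module

end ops

/-- solutions of the system -/
structure IsSol (μ : Measure ℝ) (l : ℝ) (y g : ℝ → ℝ) : Prop where
  cy : ContinuousOn y (Icc 0 1)
  cg : ContinuousOn g (Icc 0 1)
  ey : ∀ x ∈ Icc (0:ℝ) 1, y x = y 0 + ∫ t in (0:ℝ)..x, g t
  eg : ∀ x ∈ Icc (0:ℝ) 1, g x = g 0 - l * ∫ t in (0:ℝ)..x, y t ∂μ

section sol
variable (μ : Measure ℝ) [IsFiniteMeasure μ] [NullSingletonClass μ] (h1 : μ.real (Ioc 0 1) ≤ 1)

noncomputable def ini (p q : ℝ) : X := ⟨fun x => p + q * x.1, by fun_prop⟩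

/-- solution with initial data `p, q` -/
noncomputable def Y (l p q : ℝ) : X := R μ h1 l (ini p q)
noncomputable def Gd (l p q x : ℝ) : ℝ := q - l * phi μ (Y μ h1 l p q) x

lemma Y_cont (p q : ℝ) : Continuous fun l => Y μ h1 l p q := by
  exact R_cont μ h1 _

lemma Y_eq (l p q : ℝ) (x : Icc (0:ℝ) 1) :
    Y μ h1 l p q x = p + q * x.1 - l * ∫ t in (0:ℝ)..x.1, phi μ (Y μ h1 l p q) t := by
  have := congrArg (fun f : X => f x) (R_spec μ h1 l (ini p q))
  simp only [ContinuousMap.add_apply, ContinuousMap.smul_apply, V0_apply, ini,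
    ContinuousMap.coe_mk, smul_eq_mul] at this
  unfold Y
  simp only [ini]
  linarith

lemma Y_zero (l p q : ℝ) : ex (Y μ h1 l p q) 0 = p := by
  rw [ex_of_mem _ (by simp), Y_eq]; simp

lemma G_zero (l p q : ℝ) : Gd μ h1 l p q 0 = q := by simp [Gd, phi]

lemma sol_Y (l p q : ℝ) : IsSol μ l (ex (Y μ h1 l p q)) (Gd μ h1 l p q) where
  cy := (ex_cont _).continuousOn
  cg := by
    have := phi_cont μ (Y μ h1 l p q)
    unfold Gd
    fun_prop
  ey x hx := by
    rw [Y_zero, ex_of_mem _ hx, Y_eq]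
    unfold Gd
    have := phi_cont μ (Y μ h1 l p q)
    rw [intervalIntegral.integral_sub (by simp) ((by fun_prop : Continuous fun t =>
      l * phi μ (Y μ h1 l p q) t).intervalIntegrable _ _), intervalIntegral.integral_const_mul]
    simp
    ring
  eg x hx := by rw [G_zero]; rfl

variable {μ}

lemma IsSol.ex_eq {l : ℝ} {y g : ℝ → ℝ} (h : IsSol μ l y g) :
    ∀ x ∈ Icc (0:ℝ) 1, y x = ex (Y μ h1 l (y 0) (g 0)) x := by
  set f : X := ⟨(Icc (0:ℝ) 1).domRestrict y, h.cy.domRestrict⟩ with hf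
  have hfy : ∀ x ∈ Icc (0:ℝ) 1, ex f x = y x := fun x hx => by rw [ex_of_mem f hx]; rfl
  have hphi : ∀ x ∈ Icc (0:ℝ) 1, phi μ f x = ∫ t in (0:ℝ)..x, y t ∂μ := by
    intro x hx
    apply intervalIntegral.integral_congr
    intro t ht
    rw [uIcc_of_le hx.1] at ht
    exact hfy t ⟨ht.1, ht.2.trans hx.2⟩
  have : f = Y μ h1 l (y 0) (g 0) := by
    apply R_uniq
    ext x
    simp only [ContinuousMap.add_apply, ContinuousMap.smul_apply, V0_apply, ini,
      ContinuousMap.coe_mk, smul_eq_mul]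
    have e1 : f x = y x.1 := rfl
    rw [e1, h.ey x.1 x.2]
    have e2 : ∫ t in (0:ℝ)..x.1, g t = ∫ t in (0:ℝ)..x.1, (g 0 - l * phi μ f t) := by
      apply intervalIntegral.integral_congr
      intro t ht
      rw [uIcc_of_le x.2.1] at ht
      have ht' : t ∈ Icc (0:ℝ) 1 := ⟨ht.1, ht.2.trans x.2.2⟩
      simp only
      rw [hphi t ht', h.eg t ht']
    have := phi_cont μ f
    rw [e2, intervalIntegral.integral_sub (by simp) ((by fun_prop : Continuous fun t =>
      l * phi μ f t).intervalIntegrable _ _), intervalIntegral.integral_const_mul]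
    simp
    ring
  intro x hx
  rw [← this, hfy x hx]

lemma IsSol.G_eq {l : ℝ} {y g : ℝ → ℝ} (h : IsSol μ l y g) :
    ∀ x ∈ Icc (0:ℝ) 1, g x = Gd μ h1 l (y 0) (g 0) x := by
  intro x hx
  rw [h.eg x hx, Gd, phi]
  congr 2
  apply intervalIntegral.integral_congr
  intro t ht
  rw [uIcc_of_le hx.1] at ht
  exact h.ex_eq h1 t ⟨ht.1, ht.2.trans hx.2⟩

variable (μ)
lemma Y_lin (l p q : ℝ) : Y μ h1 l p q = p • Y μ h1 l 1 0 + q • Y μ h1 l 0 1 := by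
  unfold Y
  rw [← R_lin]
  congr 1
  ext x
  simp [ini]

lemma G_lin (l p q x : ℝ) : Gd μ h1 l p q x = p * Gd μ h1 l 1 0 x + q * Gd μ h1 l 0 1 x := by
  unfold Gd
  rw [Y_lin, phi_add, phi_smul, phi_smul]
  ring

end sol

/-- Fubini on a triangle -/
lemma fubini_tri (μ : Measure ℝ) [IsFiniteMeasure μ] (F v : ℝ → ℝ)
    (hF : ContinuousOn F (Icc 0 1)) (hv : ContinuousOn v (Icc 0 1)) (x : ℝ) (hx : x ∈ Icc (0:ℝ) 1) :
    ∫ t in (0:ℝ)..x, F t * ∫ s in (0:ℝ)..t, v s ∂μ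
      = ∫ s in (0:ℝ)..x, v s * (∫ t in s..x, F t) ∂μ := by
  have hsub : Ioc 0 x ⊆ Icc (0:ℝ) 1 := fun t ht => ⟨ht.1.le, ht.2.trans hx.2⟩
  have iF : Integrable F (volume.restrict (Ioc 0 x)) :=
    (hF.integrableOn_compact isCompact_Icc).mono_set hsub
  have iv : Integrable v (μ.restrict (Ioc 0 x)) :=
    (hv.integrableOn_compact isCompact_Icc).mono_set hsub
  have key := integral_integral_swap
    (μ := volume.restrict (Ioc 0 x)) (ν := μ.restrict (Ioc 0 x))
    (f := fun t s => {p : ℝ × ℝ | p.2 ≤ p.1}.indicator (fun p => F p.1 * v p.2) (t, s))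
    ((iF.mul_prod iv).indicator (measurableSet_le measurable_snd measurable_fst))
  rw [intervalIntegral.integral_of_le hx.1, intervalIntegral.integral_of_le hx.1]
  convert key using 1
  · apply setIntegral_congr_fun measurableSet_Ioc
    intro t ht
    simp only
    rw [intervalIntegral.integral_of_le ht.1.le, ← integral_const_mul,
      ← integral_indicator measurableSet_Ioc, ← integral_indicator measurableSet_Ioc]
    congr 1
    ext s
    simp only [indicator, mem_Ioc, mem_ofPred_eq]
    have := ht.2
    grind
  · apply setIntegral_congr_fun measurableSet_Ioc
    intro s hs
    simp only
    rw [intervalIntegral.integral_of_le hs.2, ← integral_Icc_eq_integral_Ioc,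
      ← integral_const_mul,
      ← integral_indicator measurableSet_Icc, ← integral_indicator measurableSet_Ioc]
    congr 1
    ext t
    simp only [indicator, mem_Ioc, mem_Icc, mem_ofPred_eq]
    have := hs.1
    grind

end Cantor

end

section
open Set Filter Topology

namespace Cantor

section lag
variable {μ : Measure ℝ} [IsFiniteMeasure μ]

lemma parts {l l' : ℝ} {u gu v gv : ℝ → ℝ} (hu : IsSol μ l u gu) (hv : IsSol μ l' v gv)
    (x : ℝ) (hx : x ∈ Icc (0:ℝ) 1) :
    u x * gv x - u 0 * gv 0 = (∫ t in (0:ℝ)..x, gu t * gv t) - l' * ∫ t in (0:ℝ)..x, u t * v t ∂μ := by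
  have hsub : ∀ t, t ∈ uIcc 0 x → t ∈ Icc (0:ℝ) 1 := fun t ht => by
    rw [uIcc_of_le hx.1] at ht; exact ⟨ht.1, ht.2.trans hx.2⟩
  have hsub' : uIcc 0 x ⊆ Icc (0:ℝ) 1 := hsub
  have igu : IntervalIntegrable gu volume 0 x := (hu.cg.mono hsub').intervalIntegrable
  have iv : IntervalIntegrable v μ 0 x := (hv.cy.mono hsub').intervalIntegrable
  have iuv : IntervalIntegrable (fun t => u t * v t) μ 0 x :=
    ((hu.cy.mono hsub').mul (hv.cy.mono hsub')).intervalIntegrable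
  have iggv : IntervalIntegrable (fun t => gu t * gv t) volume 0 x :=
    ((hu.cg.mono hsub').mul (hv.cg.mono hsub')).intervalIntegrable
  have fub := fubini_tri μ gu v hu.cg hv.cy x hx
  have e1 : ∫ s in (0:ℝ)..x, v s * (∫ t in s..x, gu t) ∂μ
      = u x * (∫ s in (0:ℝ)..x, v s ∂μ) - ∫ t in (0:ℝ)..x, u t * v t ∂μ := by
    rw [← intervalIntegral.integral_const_mul, ← intervalIntegral.integral_sub (iv.const_mul _) iuv]
    apply intervalIntegral.integral_congr
    intro s hs
    have hs' := hsub s hs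
    have is : IntervalIntegrable gu volume 0 s := (hu.cg.mono (fun t ht => by
      rw [uIcc_of_le hs'.1] at ht; exact ⟨ht.1, ht.2.trans hs'.2⟩)).intervalIntegrable
    have := intervalIntegral.integral_interval_sub_left igu is
    simp only
    rw [← this, hu.ey x hx, hu.ey s hs']
    ring
  have e2 : l' * ∫ t in (0:ℝ)..x, gu t * ∫ s in (0:ℝ)..t, v s ∂μ
      = gv 0 * (u x - u 0) - ∫ t in (0:ℝ)..x, gu t * gv t := by
    have : u x - u 0 = ∫ t in (0:ℝ)..x, gu t := by rw [hu.ey x hx]; ring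
    rw [this, ← intervalIntegral.integral_const_mul, ← intervalIntegral.integral_const_mul,
      ← intervalIntegral.integral_sub (igu.const_mul _) iggv]
    apply intervalIntegral.integral_congr
    intro t ht
    simp only
    rw [hv.eg t (hsub t ht)]
    ring
  have e3 := hv.eg x hx
  rw [fub, e1] at e2
  have e4 : l' * ∫ s in (0:ℝ)..x, v s ∂μ = gv 0 - gv x := by linarith
  linear_combination (u x) * e4 - e2

lemma lagrange {l l' : ℝ} {u gu v gv : ℝ → ℝ} (hu : IsSol μ l u gu) (hv : IsSol μ l' v gv)
    (x : ℝ) (hx : x ∈ Icc (0:ℝ) 1) :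
    u x * gv x - v x * gu x = u 0 * gv 0 - v 0 * gu 0 + (l - l') * ∫ t in (0:ℝ)..x, u t * v t ∂μ := by
  have h1 := parts hu hv x hx
  have h2 := parts hv hu x hx
  have e1 : (∫ t in (0:ℝ)..x, gu t * gv t) = ∫ t in (0:ℝ)..x, gv t * gu t := by simp_rw [mul_comm]
  have e2 : (∫ t in (0:ℝ)..x, u t * v t ∂μ) = ∫ t in (0:ℝ)..x, v t * u t ∂μ := by simp_rw [mul_comm]
  rw [e1] at h1
  rw [e2] at h1 ⊢
  linarith

end lag

section M
variable (μ : Measure ℝ) [IsFiniteMeasure μ] [NullSingletonClass μ] (h1 : μ.real (Ioc 0 1) ≤ 1)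

noncomputable def cA (l : ℝ) : ℝ := ex (Y μ h1 l 1 0) 1
noncomputable def cB (l : ℝ) : ℝ := ex (Y μ h1 l 0 1) 1
noncomputable def cC (l : ℝ) : ℝ := Gd μ h1 l 1 0 1
noncomputable def cD (l : ℝ) : ℝ := Gd μ h1 l 0 1 1

noncomputable def LL : X →ₗ[ℝ] ℝ where
  toFun f := phi μ f 1
  map_add' f g := phi_add μ f g 1
  map_smul' c f := phi_smul μ c f 1

lemma Lcont (h1 : μ.real (Ioc 0 1) ≤ 1) : Continuous fun f : X => phi μ f 1 := by
  apply ((LL μ).mkContinuous 1 _).continuous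
  intro f
  rw [one_mul]
  exact int_bound μ h1 _ _ 1 (by simp) (norm_nonneg _) (fun x _ => ex_le f x)

lemma ev_cont (x : ℝ) : Continuous fun f : X => ex f x := by
  unfold ex Set.IccExtend
  simp only [Function.comp]
  fun_prop

lemma cA_cont : Continuous (cA μ h1) := (ev_cont 1).comp (Y_cont μ h1 1 0)
lemma cB_cont : Continuous (cB μ h1) := (ev_cont 1).comp (Y_cont μ h1 0 1)
lemma cC_cont : Continuous (cC μ h1) :=
  continuous_const.sub (continuous_id.mul ((Lcont μ h1).comp (Y_cont μ h1 1 0)))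
lemma cD_cont : Continuous (cD μ h1) :=
  continuous_const.sub (continuous_id.mul ((Lcont μ h1).comp (Y_cont μ h1 0 1)))

lemma H_cont (f : X) (p q : ℝ) : Continuous fun l => phi μ (f * Y μ h1 l p q) 1 :=
  (Lcont μ h1).comp (continuous_const.mul (Y_cont μ h1 p q))

lemma lag_Y (l l' p q p' q' : ℝ) (x : ℝ) (hx : x ∈ Icc (0:ℝ) 1) :
    ex (Y μ h1 l p q) x * Gd μ h1 l' p' q' x - ex (Y μ h1 l' p' q') x * Gd μ h1 l p q x =
      p * q' - p' * q + (l - l') * phi μ (Y μ h1 l p q * Y μ h1 l' p' q') x := by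
  have := lagrange (sol_Y μ h1 l p q) (sol_Y μ h1 l' p' q') x hx
  simp only [Y_zero, G_zero] at this
  exact this

lemma det_one (l : ℝ) : cA μ h1 l * cD μ h1 l - cB μ h1 l * cC μ h1 l = 1 := by
  simpa [cA, cB, cC, cD] using lag_Y μ h1 l l 1 0 0 1 1 (by simp)

lemma wron (l x : ℝ) (hx : x ∈ Icc (0:ℝ) 1) :
    ex (Y μ h1 l 1 0) x ≠ 0 ∨ ex (Y μ h1 l 0 1) x ≠ 0 := by
  have := lag_Y μ h1 l l 1 0 0 1 x hx
  by_contra! h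
  simp [h.1, h.2] at this

lemma phi_pos (hm : μ.real (Ioc 0 1) = 1) (f : X) (hf : ∀ x ∈ Icc (0:ℝ) 1, 0 < ex f x) :
    0 < phi μ f 1 := by
  obtain ⟨m, hm1, hm2⟩ := isCompact_Icc.exists_isMinOn (s := Icc (0:ℝ) 1) ⟨0, by simp⟩
    (ex_cont f).continuousOn
  have hpos := hf m hm1
  refine lt_of_lt_of_le hpos ?_
  unfold phi
  rw [intervalIntegral.integral_of_le zero_le_one]
  have : ∫ t in Ioc (0:ℝ) 1, ex f m ∂μ = ex f m := by simp [hm]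
  rw [← this]
  apply setIntegral_mono_on
  · simp
  · exact (ex_ii μ f 0 1).1
  · exact measurableSet_Ioc
  · intro x hx
    exact hm2 ⟨hx.1.le, hx.2⟩

lemma N_pos (hm : μ.real (Ioc 0 1) = 1) (l : ℝ) :
    0 < phi μ (Y μ h1 l 1 0 * Y μ h1 l 1 0) 1 := by
  set y := Y μ h1 l 1 0 with hy
  have h0 : 0 ≤ phi μ (y * y) 1 :=
    intervalIntegral.integral_nonneg zero_le_one (fun t _ => mul_self_nonneg (ex y t))
  rcases h0.lt_or_eq with h | h
  · exact h
  exfalso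
  have hae : ∀ᵐ t ∂(μ.restrict (Ioc 0 1)), ex y t = 0 := by
    have h2 : ∫ t in Ioc (0:ℝ) 1, ex y t * ex y t ∂μ = 0 := by
      rw [← intervalIntegral.integral_of_le zero_le_one]; exact h.symm
    rw [integral_eq_zero_iff_of_nonneg (fun t => mul_self_nonneg (ex y t))
      (ex_ii μ (y*y) 0 1).1] at h2
    filter_upwards [h2] with t ht
    simpa using ht
  have hphi : ∀ t ∈ Icc (0:ℝ) 1, phi μ y t = 0 := by
    intro t ht
    unfold phi
    rw [intervalIntegral.integral_of_le ht.1]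
    apply integral_eq_zero_of_ae
    exact ae_restrict_of_ae_restrict_of_subset (Ioc_subset_Ioc_right ht.2) hae
  have hy1 : ∀ t ∈ Icc (0:ℝ) 1, ex y t = 1 := by
    intro t ht
    rw [ex_of_mem _ ht, hy, Y_eq]
    have : ∫ s in (0:ℝ)..t, phi μ (Y μ h1 l 1 0) s = ∫ s in (0:ℝ)..t, (0:ℝ) := by
      apply intervalIntegral.integral_congr
      intro s hs
      rw [uIcc_of_le ht.1] at hs
      exact hphi s ⟨hs.1, hs.2.trans ht.2⟩
    simp [this]
  have := phi_pos μ hm y (fun t ht => by rw [hy1 t ht]; exact one_pos)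
  rw [hphi 1 (by simp)] at this
  exact lt_irrefl _ this

lemma C_ne_of_neg (hm : μ.real (Ioc 0 1) = 1) (l : ℝ) (hl : l < 0) : cC μ h1 l ≠ 0 := by
  intro h
  have hs := sol_Y μ h1 l 1 0
  have := parts hs hs 1 (by simp)
  rw [G_zero, show Gd μ h1 l 1 0 1 = 0 from h] at this
  have hN := N_pos μ h1 hm l
  have h2 : 0 ≤ ∫ t in (0:ℝ)..1, Gd μ h1 l 1 0 t * Gd μ h1 l 1 0 t :=
    intervalIntegral.integral_nonneg zero_le_one (fun t _ => mul_self_nonneg _)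
  have h3 : (∫ t in (0:ℝ)..1, ex (Y μ h1 l 1 0) t * ex (Y μ h1 l 1 0) t ∂μ)
    = phi μ (Y μ h1 l 1 0 * Y μ h1 l 1 0) 1 := rfl
  rw [h3] at this
  nlinarith

lemma C_zero : cC μ h1 0 = 0 := by simp [cC, Gd]

/-- the Neumann function has transversal zeros -/
lemma C_sign (hm : μ.real (Ioc 0 1) = 1) (l : ℝ) (h : cC μ h1 l = 0) :
    ∀ᶠ l' in 𝓝 l, (l < l' → cA μ h1 l * cC μ h1 l' < 0) ∧ (l' < l → 0 < cA μ h1 l * cC μ h1 l') := by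
  have hp := N_pos μ h1 hm l
  have := (H_cont μ h1 (Y μ h1 l 1 0) 1 0).continuousAt.eventually (lt_mem_nhds hp)
  filter_upwards [this] with l' h'
  have e := lag_Y μ h1 l l' 1 0 1 0 1 (by simp)
  rw [show Gd μ h1 l 1 0 1 = 0 from h] at e
  have e' : cA μ h1 l * cC μ h1 l' = (l - l') * phi μ (Y μ h1 l 1 0 * Y μ h1 l' 1 0) 1 := by
    simpa [cA, cC] using e
  rw [e']
  constructor <;> intro hl <;> nlinarith

noncomputable def tr (β l : ℝ) : ℝ := (cA μ h1 l + cD μ h1 l + β * cC μ h1 l) / 2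

lemma tr_cont (β : ℝ) : Continuous (tr μ h1 β) := by
  have := cA_cont μ h1
  have := cC_cont μ h1
  have := cD_cont μ h1
  unfold tr
  fun_prop

lemma tr_diff (β l l' : ℝ) : 2 * (tr μ h1 β l' - tr μ h1 β l) = (l - l') *
    ((cB μ h1 l + β * cD μ h1 l) * phi μ (Y μ h1 l 1 0 * Y μ h1 l' 1 0) 1
      - (cA μ h1 l + β * cC μ h1 l) * phi μ (Y μ h1 l 0 1 * Y μ h1 l' 1 0) 1
      + cD μ h1 l * phi μ (Y μ h1 l 1 0 * Y μ h1 l' 0 1) 1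
      - cC μ h1 l * phi μ (Y μ h1 l 0 1 * Y μ h1 l' 0 1) 1) := by
  have e11 := lag_Y μ h1 l l' 1 0 1 0 1 (by simp)
  have e12 := lag_Y μ h1 l l' 1 0 0 1 1 (by simp)
  have e21 := lag_Y μ h1 l l' 0 1 1 0 1 (by simp)
  have e22 := lag_Y μ h1 l l' 0 1 0 1 1 (by simp)
  have d := det_one μ h1 l
  change cA μ h1 l * cC μ h1 l' - cA μ h1 l' * cC μ h1 l = _ at e11
  change cA μ h1 l * cD μ h1 l' - cB μ h1 l' * cC μ h1 l = _ at e12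
  change cB μ h1 l * cC μ h1 l' - cA μ h1 l' * cD μ h1 l = _ at e21
  change cB μ h1 l * cD μ h1 l' - cB μ h1 l' * cD μ h1 l = _ at e22
  unfold tr
  generalize phi μ (Y μ h1 l 1 0 * Y μ h1 l' 1 0) 1 = H11 at *
  generalize phi μ (Y μ h1 l 1 0 * Y μ h1 l' 0 1) 1 = H12 at *
  generalize phi μ (Y μ h1 l 0 1 * Y μ h1 l' 1 0) 1 = H21 at *
  generalize phi μ (Y μ h1 l 0 1 * Y μ h1 l' 0 1) 1 = H22 at *
  generalize cA μ h1 l = A at *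
  generalize cB μ h1 l = B at *
  generalize cC μ h1 l = C at *
  generalize cD μ h1 l = D at *
  generalize cA μ h1 l' = A' at *
  generalize cB μ h1 l' = B' at *
  generalize cC μ h1 l' = C' at *
  generalize cD μ h1 l' = D' at *
  have hA : A' - A = (l - l') * (B * H11 - A * H21) := by
    linear_combination B * e11 - A * e21 - A' * d
  have hC : C' - C = (l - l') * (D * H11 - C * H21) := by
    linear_combination D * e11 - C * e21 - C' * d
  have hD : D' - D = (l - l') * (D * H12 - C * H22) := by
    linear_combination D * e12 - C * e22 - D' * d
  linear_combination hA + hD + β * hC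

lemma tr_mono (hm : μ.real (Ioc 0 1) = 1) (β l s : ℝ) (hs : s * cC μ h1 l < 0)
    (ht : |tr μ h1 β l| < 1) :
    ∀ᶠ l' in 𝓝 l, (l < l' → s * tr μ h1 β l' < s * tr μ h1 β l) ∧
      (l' < l → s * tr μ h1 β l < s * tr μ h1 β l') := by
  set y1 := Y μ h1 l 1 0 with hy1
  set y2 := Y μ h1 l 0 1 with hy2
  let K : ℝ → ℝ := fun l' => 
    (cB μ h1 l + β * cD μ h1 l) * phi μ (y1 * Y μ h1 l' 1 0) 1
      - (cA μ h1 l + β * cC μ h1 l) * phi μ (y2 * Y μ h1 l' 1 0) 1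
      + cD μ h1 l * phi μ (y1 * Y μ h1 l' 0 1) 1
      - cC μ h1 l * phi μ (y2 * Y μ h1 l' 0 1) 1
  have hK : Continuous fun l' => s * K l' := by
    have a1 := H_cont μ h1 y1 1 0
    have a2 := H_cont μ h1 y2 1 0
    have a3 := H_cont μ h1 y1 0 1
    have a4 := H_cont μ h1 y2 0 1
    simp only [K]
    fun_prop
  have hpos : 0 < s * K l := by
    let q : X := s • ((cB μ h1 l + β * cD μ h1 l) • (y1 * y1)
      + (-(cA μ h1 l + β * cC μ h1 l)) • (y2 * y1)
      + (cD μ h1 l) • (y1 * y2) + (-cC μ h1 l) • (y2 * y2))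
    have e : s * K l = phi μ q 1 := by
      simp only [K, q, phi_add, phi_smul]
      rw [← hy1, ← hy2]
      ring
    rw [e]
    apply phi_pos μ hm
    intro x hx
    simp only [q, ex_add, ex_smul, ex_mul]
    have hw := wron μ h1 l x hx
    rw [← hy1, ← hy2] at hw
    have d := det_one μ h1 l
    have ht2 : (cA μ h1 l + cD μ h1 l + β * cC μ h1 l) ^ 2 < 4 := by
      have := (sq_lt_one_iff_abs_lt_one _).2 ht
      unfold tr at this
      linarith
    generalize cA μ h1 l = A at *
    generalize cB μ h1 l = B at *
    generalize cC μ h1 l = C at *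
    generalize cD μ h1 l = D at *
    generalize ex y1 x = u at *
    generalize ex y2 x = v at *
    have key : 0 < -(4 * C) * ((B + β * D) * (u * u) + -(A + β * C) * (v * u) + D * (u * v) + -C * (v * v)) := by
      have : -(4 * C) * ((B + β * D) * (u * u) + -(A + β * C) * (v * u) + D * (u * v) + -C * (v * v))
        = (2 * C * v - (D - A - β * C) * u) ^ 2 + (4 - (A + D + β * C) ^ 2) * u ^ 2 := by
        linear_combination (4 * u ^ 2) * d
      rw [this]
      by_cases hu : u = 0
      · have hv : v ≠ 0 := by tauto
        have hC : C ≠ 0 := by rintro rfl; simp at hs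
        rw [hu]
        have : 0 < (2 * C * v) ^ 2 := by positivity
        simpa using this
      · have : 0 < u ^ 2 := by positivity
        nlinarith [sq_nonneg (2 * C * v - (D - A - β * C) * u)]
    generalize ((B + β * D) * (u * u) + -(A + β * C) * (v * u) + D * (u * v) + -C * (v * v)) = Q at *
    by_contra! hcon
    have := mul_nonneg_of_nonpos_of_nonpos hcon hs.le
    have hs2 : 0 < s ^ 2 := by
      have : s ≠ 0 := by rintro rfl; simp at hs
      positivity
    nlinarith
  filter_upwards [hK.continuousAt.eventually (lt_mem_nhds hpos)] with l' h'
  have e := tr_diff μ h1 β l l'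
  have e' : 2 * (s * tr μ h1 β l' - s * tr μ h1 β l) = (l - l') * (s * K l') := by
    simp only [K]
    linear_combination s * e
  constructor <;> intro hl <;> nlinarith

end M
end Cantor

end

section
open Set Filter Topology

namespace Cantor

section setup
variable {P : ℝ → ℝ} {μ : Measure ℝ}

lemma fin_mu (hP1 : P 1 = 1)
    (hμ : ∀ x ∈ Set.Icc (0 : ℝ) 1, μ (Set.Icc 0 x) = ENNReal.ofReal (P x))
    (hμc : μ (Set.Icc (0 : ℝ) 1)ᶜ = 0) : IsFiniteMeasure μ := by
  constructor
  rw [← measure_add_measure_compl (measurableSet_Icc (a := (0:ℝ)) (b := 1)), hμc, hμ 1 (by simp), hP1]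
  simp

lemma P_nonneg (hP0 : P 0 = 0) (hmono : MonotoneOn P (Icc 0 1)) {x : ℝ} (hx : x ∈ Icc (0:ℝ) 1) :
    0 ≤ P x := by rw [← hP0]; exact hmono (by simp) hx hx.1

lemma mu_Icc (hP0 : P 0 = 0) (hmono : MonotoneOn P (Icc 0 1))
    (hμ : ∀ x ∈ Set.Icc (0 : ℝ) 1, μ (Set.Icc 0 x) = ENNReal.ofReal (P x))
    {x : ℝ} (hx : x ∈ Icc (0:ℝ) 1) : μ.real (Icc 0 x) = P x := by
  rw [Measure.real, hμ x hx, ENNReal.toReal_ofReal (P_nonneg hP0 hmono hx)]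

lemma mu_Ioc [IsFiniteMeasure μ] (hP0 : P 0 = 0) (hmono : MonotoneOn P (Icc 0 1))
    (hμ : ∀ x ∈ Set.Icc (0 : ℝ) 1, μ (Set.Icc 0 x) = ENNReal.ofReal (P x))
    {x y : ℝ} (hx : x ∈ Icc (0:ℝ) 1) (hy : y ∈ Icc (0:ℝ) 1) (hxy : x ≤ y) :
    μ.real (Ioc x y) = P y - P x := by
  have : Ioc x y = Icc 0 y \ Icc 0 x := by
    ext t; simp only [mem_Ioc, mem_diff, mem_Icc]
    have := hx.1
    grind
  rw [this, measureReal_diff (Icc_subset_Icc_right hxy) measurableSet_Icc,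
    mu_Icc hP0 hmono hμ hx, mu_Icc hP0 hmono hμ hy]

lemma noat [IsFiniteMeasure μ] (hPc : ContinuousOn P (Icc 0 1)) (hP0 : P 0 = 0)
    (hmono : MonotoneOn P (Icc 0 1))
    (hμ : ∀ x ∈ Set.Icc (0 : ℝ) 1, μ (Set.Icc 0 x) = ENNReal.ofReal (P x))
    (hμc : μ (Set.Icc (0 : ℝ) 1)ᶜ = 0) : NullSingletonClass μ := by
  constructor
  intro x
  by_cases hx : x ∈ Icc (0:ℝ) 1
  · rcases hx.1.eq_or_lt with h0 | h0
    · have := hμ 0 (by simp)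
      rw [← h0]
      simpa [hP0] using this
    · have : μ.real {x} ≤ 0 := by
        have hne := right_nhdsWithin_Ioo_neBot h0
        have ht : Tendsto (fun y => P x - P y) (𝓝[Ioo 0 x] x) (𝓝 (P x - P x)) :=
          tendsto_const_nhds.sub (((hPc x hx).mono (fun y hy => ⟨hy.1.le, hy.2.le.trans hx.2⟩)))
        rw [sub_self] at ht
        apply ge_of_tendsto ht
        filter_upwards [self_mem_nhdsWithin] with y hy
        rw [← mu_Ioc hP0 hmono hμ (x := y) (y := x) ⟨hy.1.le, hy.2.le.trans hx.2⟩ hx hy.2.le]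
        refine measureReal_mono ?_ (measure_ne_top _ _)
        rintro _ rfl
        exact ⟨hy.2, le_rfl⟩
      have h2 : μ.real {x} = 0 := le_antisymm this measureReal_nonneg
      simpa [Measure.real, ENNReal.toReal_eq_zero_iff] using h2
  · exact measure_mono_null (by simpa using hx) hμc

lemma mu_Iic [IsFiniteMeasure μ] (hP0 : P 0 = 0)
    (hmono : MonotoneOn P (Icc 0 1))
    (hμ : ∀ x ∈ Set.Icc (0 : ℝ) 1, μ (Set.Icc 0 x) = ENNReal.ofReal (P x))
    (hμc : μ (Set.Icc (0 : ℝ) 1)ᶜ = 0) (x : ℝ) : μ.real (Iic x) = P (max 0 (min 1 x)) := by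
  have h1 : μ.real (Iic x) = μ.real (Iic x ∩ Icc 0 1) := by
    have h3 : μ (Iic x \ Icc 0 1) = 0 := measure_mono_null (fun t ht => ht.2) hμc
    have h4 := measure_inter_add_diff (μ := μ) (Iic x) (measurableSet_Icc (a := (0:ℝ)) (b := 1))
    rw [h3, add_zero] at h4
    rw [Measure.real, Measure.real, h4]
  rw [h1]
  rcases lt_or_ge x 0 with h | h
  · rw [max_eq_left ((min_le_right _ _).trans h.le), hP0]
    have : Iic x ∩ Icc (0:ℝ) 1 = ∅ := by ext t; simp; intros; linarith
    simp [this]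
  · have hm : min 1 x ∈ Icc (0:ℝ) 1 := ⟨le_min zero_le_one h, min_le_left _ _⟩
    rw [max_eq_right hm.1]
    rw [← mu_Icc hP0 hmono hμ hm]
    congr 1
    ext t; simp only [mem_inter_iff, mem_Iic, mem_Icc, le_min_iff]; tauto

lemma map_mu [IsFiniteMeasure μ] [NullSingletonClass μ] (hP0 : P 0 = 0)
    (hmono : MonotoneOn P (Icc 0 1))
    (hμ : ∀ x ∈ Set.Icc (0 : ℝ) 1, μ (Set.Icc 0 x) = ENNReal.ofReal (P x))
    (hμc : μ (Set.Icc (0 : ℝ) 1)ᶜ = 0) (κ : ℕ) (α a : ℝ) (ha : 0 < a) (hα : 0 ≤ α) (hα1 : α + a ≤ 1)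
    (hself : ∃ c : ℝ, ∀ x ∈ Set.Icc (0 : ℝ) 1, (κ : ℝ) * P (α + a * x) = P x + c) :
    μ.map (fun x => α + a * x) = (κ : ENNReal) • μ.restrict (Ioc α (α + a)) := by
  obtain ⟨c, hc⟩ := hself
  have hmeas : Measurable (fun x : ℝ => α + a * x) := by fun_prop
  haveI : IsFiniteMeasure ((κ : ENNReal) • μ.restrict (Ioc α (α + a))) :=
    Measure.smul_finite _ (by simp)
  apply Measure.ext_of_Iic
  intro z
  rw [← ENNReal.toReal_eq_toReal_iff' (measure_ne_top _ _) (measure_ne_top _ _)]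
  rw [Measure.map_apply hmeas measurableSet_Iic]
  have e1 : (fun x : ℝ => α + a * x) ⁻¹' Iic z = Iic ((z - α) / a) := by
    ext x; simp only [mem_preimage, mem_Iic, le_div_iff₀ ha]
    constructor <;> intro <;> linarith
  rw [e1]
  change μ.real _ = _
  rw [mu_Iic hP0 hmono hμ hμc]
  set w := max 0 (min 1 ((z - α) / a)) with hw
  have hwI : w ∈ Icc (0:ℝ) 1 := ⟨le_max_left _ _, max_le zero_le_one (min_le_left _ _)⟩
  rw [Measure.smul_apply, Measure.restrict_apply measurableSet_Iic, smul_eq_mul, ENNReal.toReal_mul]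
  have e2 : Iic z ∩ Ioc α (α + a) = Ioc α (α + a * w) := by
    ext t
    simp only [mem_inter_iff, mem_Iic, mem_Ioc]
    have key : t ≤ α + a * w ↔ (t - α) / a ≤ w := by
      rw [div_le_iff₀ ha]; constructor <;> intro <;> linarith
    rw [key, hw, le_max_iff, le_min_iff, div_le_div_iff_of_pos_right ha, div_le_iff₀ ha, div_le_iff₀ ha]
    constructor
    · rintro ⟨h1, h2, h3⟩
      exact ⟨h2, Or.inr ⟨by linarith, by linarith⟩⟩
    · rintro ⟨h1, h2 | h2⟩
      · linarith
      · exact ⟨by linarith [h2.2], h1, by linarith [h2.1]⟩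
  rw [e2]
  change _ = _ * μ.real _
  have haw : 0 ≤ a * w := mul_nonneg ha.le hwI.1
  have haw1 : a * w ≤ a := by nlinarith [hwI.2]
  rw [mu_Ioc hP0 hmono hμ ⟨hα, by linarith⟩ ⟨by linarith, by linarith⟩ (by linarith)]
  have h0 := hc 0 (by simp)
  have h2 := hc w hwI
  simp only [mul_zero, add_zero, hP0] at h0
  simp only [ENNReal.toReal_natCast]
  linarith

lemma int_self [IsFiniteMeasure μ] {κ : ℕ} {α a : ℝ} (ha : 0 < a)
    (hmap : μ.map (fun x => α + a * x) = (κ : ENNReal) • μ.restrict (Ioc α (α + a)))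
    (f : ℝ → ℝ) (x : ℝ) (hx : x ∈ Icc (0:ℝ) 1) :
    ∫ s in (0:ℝ)..x, f (α + a * s) ∂μ = κ * ∫ s in α..(α + a * x), f s ∂μ := by
  have hax : 0 ≤ a * x := mul_nonneg ha.le hx.1
  rw [intervalIntegral.integral_of_le hx.1, intervalIntegral.integral_of_le (by linarith)]
  have he : MeasurableEmbedding (fun x : ℝ => α + a * x) :=
    ((Homeomorph.mulLeft₀ a ha.ne').trans (Homeomorph.addLeft α)).measurableEmbedding
  have := he.setIntegral_map (μ := μ) f (Ioc α (α + a * x))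
  have e : (fun x : ℝ => α + a * x) ⁻¹' Ioc α (α + a * x) = Ioc 0 x := by
    ext t
    simp [ha]
  rw [e] at this
  rw [← this, hmap, Measure.restrict_smul, integral_smul_measure, Measure.restrict_restrict measurableSet_Ioc]
  have e2 : Ioc α (α + a * x) ∩ Ioc α (α + a) = Ioc α (α + a * x) := by
    apply inter_eq_left.2
    apply Ioc_subset_Ioc_right
    nlinarith [hx.2]
  rw [e2]
  simp

lemma sub_ii (μ : Measure ℝ) [IsFiniteMeasure μ] {f : ℝ → ℝ} (hf : ContinuousOn f (Icc 0 1)) {p q : ℝ} (hp : p ∈ Icc (0:ℝ) 1)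
    (hq : q ∈ Icc (0:ℝ) 1) : IntervalIntegrable f μ p q := by
  apply ContinuousOn.intervalIntegrable
  apply hf.mono
  exact uIcc_subset_Icc hp hq

lemma sub_ii' {f : ℝ → ℝ} (hf : ContinuousOn f (Icc 0 1)) {p q : ℝ} (hp : p ∈ Icc (0:ℝ) 1)
    (hq : q ∈ Icc (0:ℝ) 1) : IntervalIntegrable f volume p q := by
  apply ContinuousOn.intervalIntegrable
  apply hf.mono
  exact uIcc_subset_Icc hp hq

lemma IsSol.ey' [IsFiniteMeasure μ] {l : ℝ} {y g : ℝ → ℝ} (h : IsSol μ l y g) {p q : ℝ}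
    (hp : p ∈ Icc (0:ℝ) 1) (hq : q ∈ Icc (0:ℝ) 1) : y q = y p + ∫ t in p..q, g t := by
  have z : (0:ℝ) ∈ Icc (0:ℝ) 1 := by simp
  rw [h.ey q hq, h.ey p hp, add_assoc, intervalIntegral.integral_add_adjacent_intervals
    (sub_ii' h.cg z hp) (sub_ii' h.cg hp hq)]

lemma IsSol.eg' [IsFiniteMeasure μ] {l : ℝ} {y g : ℝ → ℝ} (h : IsSol μ l y g) {p q : ℝ}
    (hp : p ∈ Icc (0:ℝ) 1) (hq : q ∈ Icc (0:ℝ) 1) : g q = g p - l * ∫ t in p..q, y t ∂μ := by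
  have z : (0:ℝ) ∈ Icc (0:ℝ) 1 := by simp
  rw [h.eg q hq, h.eg p hp, ← intervalIntegral.integral_add_adjacent_intervals
    (sub_ii μ h.cy z hp) (sub_ii μ h.cy hp hq)]
  ring

lemma sol_copy [IsFiniteMeasure μ] {κ : ℕ} (hκ : 0 < κ) {α a : ℝ} (ha : 0 < a) (hα : 0 ≤ α) (hα1 : α + a ≤ 1)
    (hmap : μ.map (fun x => α + a * x) = (κ : ENNReal) • μ.restrict (Ioc α (α + a)))
    {l : ℝ} {y g : ℝ → ℝ} (h : IsSol μ (κ / a * l) y g) :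
    IsSol μ l (fun x => y (α + a * x)) (fun x => a * g (α + a * x)) := by
  have hm : ∀ x ∈ Icc (0:ℝ) 1, α + a * x ∈ Icc (0:ℝ) 1 := by
    intro x hx
    constructor
    · nlinarith [hx.1]
    · nlinarith [hx.2]
  have hαm : α ∈ Icc (0:ℝ) 1 := ⟨hα, by linarith⟩
  have hc : ContinuousOn (fun x : ℝ => α + a * x) (Icc 0 1) := by fun_prop
  refine ⟨h.cy.comp hc hm, (h.cg.comp hc hm).const_smul a, ?_, ?_⟩
  · intro x hx
    rw [h.ey' hαm (hm x hx), intervalIntegral.integral_const_mul,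
      intervalIntegral.mul_integral_comp_add_mul]
    simp
  · intro x hx
    rw [h.eg' hαm (hm x hx), int_self ha hmap y x hx]
    simp only [mul_zero, add_zero]
    field_simp

lemma sol_gap [IsFiniteMeasure μ] {p q : ℝ} (hp : p ∈ Icc (0:ℝ) 1) (hq : q ∈ Icc (0:ℝ) 1) (hpq : p ≤ q)
    (h0 : μ (Ioc p q) = 0) {l : ℝ} {y g : ℝ → ℝ} (h : IsSol μ l y g) :
    g q = g p ∧ y q = y p + (q - p) * g p := by
  have key : ∀ t ∈ Icc p q, g t = g p := by
    intro t ht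
    rw [h.eg' hp ⟨hp.1.trans ht.1, ht.2.trans hq.2⟩, intervalIntegral.integral_of_le ht.1,
      Measure.restrict_eq_zero.2 (measure_mono_null (Ioc_subset_Ioc_right ht.2) h0)]
    simp
  refine ⟨key q ⟨hpq, le_rfl⟩, ?_⟩
  rw [h.ey' hp hq]
  congr 1
  rw [intervalIntegral.integral_congr (g := fun _ => g p)]
  · simp
  · intro t ht
    rw [uIcc_of_le hpq] at ht
    exact key t ht

end setup
end Cantor

end

section
open Set Filter Topology

namespace Cantor

section eig
variable (μ : Measure ℝ) [IsFiniteMeasure μ] [NullSingletonClass μ] (h1 : μ.real (Ioc 0 1) ≤ 1)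

lemma Y00 (l : ℝ) : Y μ h1 l 0 0 = 0 := by rw [Y_lin]; simp

lemma eigen_iff (l : ℝ) : IsEigen μ 0 0 l ↔ cC μ h1 l = 0 := by
  have key : ∀ (y : ℝ → ℝ) (x : ℝ), x ∈ Icc (0:ℝ) 1 →
      ∫ t in Set.Icc (0 : ℝ) x, y t ∂μ = ∫ t in (0:ℝ)..x, y t ∂μ := by
    intro y x hx
    rw [intervalIntegral.integral_of_le hx.1, integral_Icc_eq_integral_Ioc]
  constructor
  · rintro ⟨y, g, hy, hg, ⟨x0, hx0, hne⟩, h2, h3, h4, h5⟩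
    have hs : IsSol μ l y g := ⟨hy, hg, h2, fun x hx => by rw [h3 x hx, key y x hx]⟩
    have g0 : g 0 = 0 := by linarith
    have g1 : g 1 = 0 := by linarith
    have e1 := hs.ex_eq h1 x0 hx0
    have e2 := hs.G_eq h1 1 (by simp)
    rw [G_lin, g0, g1, zero_mul, add_zero] at e2
    have hy0 : y 0 ≠ 0 := by
      intro h
      rw [h, g0, Y00] at e1
      exact hne e1
    exact (mul_eq_zero.1 e2.symm).resolve_left hy0
  · intro h
    have hs := sol_Y μ h1 l 1 0
    refine ⟨_, _, hs.cy, hs.cg, ⟨0, by simp, ?_⟩, hs.ey, fun x hx => ?_, ?_, ?_⟩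
    · rw [Y_zero]; simp
    · rw [hs.eg x hx, key _ x hx]
    · rw [G_zero]; simp
    · change cC μ h1 l + _ = 0
      rw [h]; simp

lemma step_sol {l : ℝ} {y g : ℝ → ℝ} (h : IsSol μ l y g) :
    y 1 = cA μ h1 l * y 0 + cB μ h1 l * g 0 ∧ g 1 = cC μ h1 l * y 0 + cD μ h1 l * g 0 := by
  constructor
  · rw [h.ex_eq h1 1 (by simp), Y_lin, ex_add, ex_smul, ex_smul, cA, cB]
    ring
  · rw [h.G_eq h1 1 (by simp), G_lin, cC, cD]
    ring

open Polynomial in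
lemma self_C {P : ℝ → ℝ} (κ : ℕ) (a b : ℝ) (hκ : 2 ≤ κ)
    (ha : 0 < a) (ha' : a < 1 / κ) (hb : b = (1 - κ * a) / (κ - 1))
    (hP : CantorType κ a b P) (hPmono : MonotoneOn P (Set.Icc 0 1))
    (hμ : ∀ x ∈ Set.Icc (0 : ℝ) 1, μ (Set.Icc 0 x) = ENNReal.ofReal (P x))
    (hμc : μ (Set.Icc (0 : ℝ) 1)ᶜ = 0) (l : ℝ) :
    a * cC μ h1 (κ / a * l) = cC μ h1 l * (Chebyshev.U ℝ ((κ:ℤ) - 1)).eval (tr μ h1 (b / a) l) := by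
  obtain ⟨hPc, hP0, hP1, hgap, hself⟩ := hP
  have hκR : (2:ℝ) ≤ κ := by exact_mod_cast hκ
  have hκa : κ * a < 1 := by rw [lt_div_iff₀ (by linarith)] at ha'; linarith
  have hb0 : 0 < b := by rw [hb]; apply div_pos <;> linarith
  have hsum : κ * a + (κ - 1) * b = 1 := by
    have : (κ:ℝ) - 1 ≠ 0 := by linarith
    rw [hb]; field_simp; ring
  have hab : 0 < a + b := by linarith
  have hα0 : ∀ k : ℕ, 0 ≤ (k:ℝ) * (a + b) := fun k => by positivity
  have hα1 : ∀ k : ℕ, k ≤ κ - 1 → (k:ℝ) * (a + b) + a ≤ 1 := by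
    intro k hk
    have : (k:ℝ) ≤ κ - 1 := by
      have : k + 1 ≤ κ := by omega
      have : ((k + 1 : ℕ):ℝ) ≤ κ := by exact_mod_cast this
      push_cast at this; linarith
    nlinarith
  have hlast : ((κ - 1 : ℕ):ℝ) * (a + b) + a = 1 := by
    rw [Nat.cast_sub (by omega)]; push_cast; linarith
  set y := ex (Y μ h1 (κ / a * l) 1 0) with hy
  set g := Gd μ h1 (κ / a * l) 1 0 with hg
  have hs : IsSol μ (κ / a * l) y g := sol_Y μ h1 _ 1 0
  set A := cA μ h1 l with hA
  set B := cB μ h1 l with hB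
  set C := cC μ h1 l with hC
  set D := cD μ h1 l with hD
  have det : A * D - B * C = 1 := det_one μ h1 l
  set β := b / a with hβ
  have hba : b = β * a := by rw [hβ]; field_simp
  set t := tr μ h1 β l with ht
  have htr : 2 * t = A + D + β * C := by rw [ht, tr]; ring
  have copy : ∀ k : ℕ, k ≤ κ - 1 →
      y (k * (a + b) + a) = A * y (k * (a+b)) + B * (a * g (k * (a+b))) ∧
      a * g (k * (a + b) + a) = C * y (k * (a+b)) + D * (a * g (k * (a+b))) := by
    intro k hk
    have := step_sol μ h1 (sol_copy (by omega) ha (hα0 k) (hα1 k hk)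
      (map_mu hP0 hPmono hμ hμc κ _ a ha (hα0 k) (hα1 k hk) (hself k hk)) hs)
    simpa using this
  have gap : ∀ k : ℕ, k + 1 ≤ κ - 1 →
      g ((k + 1 : ℕ) * (a + b)) = g (k * (a + b) + a) ∧
      y ((k + 1 : ℕ) * (a + b)) = y (k * (a + b) + a) + b * g (k * (a + b) + a) := by
    intro k hk
    have hp : (k:ℝ) * (a + b) + a ∈ Icc (0:ℝ) 1 := ⟨by linarith [hα0 k], hα1 k (by omega)⟩
    have hq : ((k + 1 : ℕ):ℝ) * (a + b) ∈ Icc (0:ℝ) 1 := ⟨hα0 _, by linarith [hα1 (k+1) hk]⟩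
    have hpq : (k:ℝ) * (a + b) + a < ((k + 1 : ℕ):ℝ) * (a + b) := by push_cast; linarith
    have heq : P (((k + 1 : ℕ):ℝ) * (a + b)) = P ((k:ℝ) * (a + b) + a) := by
      obtain ⟨c, hc⟩ := hgap (k+1) (by omega) hk
      have e : (((k + 1 : ℕ):ℝ) - 1) * (a + b) + a = (k:ℝ) * (a + b) + a := by push_cast; ring
      rw [e] at hc
      have hcc : EqOn P (fun _ => c) (Icc ((k:ℝ) * (a + b) + a) (((k + 1 : ℕ):ℝ) * (a + b))) := by
        have hcl : closure (Ioo ((k:ℝ) * (a + b) + a) (((k + 1 : ℕ):ℝ) * (a + b))) =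
          Icc ((k:ℝ) * (a + b) + a) (((k + 1 : ℕ):ℝ) * (a + b)) := closure_Ioo hpq.ne
        apply EqOn.of_subset_closure (s := Ioo ((k:ℝ) * (a + b) + a) (((k + 1 : ℕ):ℝ) * (a + b))) hc
        · exact hPc.mono (Icc_subset_Icc hp.1 hq.2)
        · exact continuousOn_const
        · exact Ioo_subset_Icc_self
        · rw [hcl]
      rw [hcc ⟨hpq.le, le_rfl⟩, hcc ⟨le_rfl, hpq.le⟩]
    have hz : μ (Ioc ((k:ℝ) * (a + b) + a) (((k + 1 : ℕ):ℝ) * (a + b))) = 0 := by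
      have := mu_Ioc hP0 hPmono hμ hp hq hpq.le
      rw [heq, sub_self] at this
      simpa [Measure.real, ENNReal.toReal_eq_zero_iff] using this
    have := sol_gap hp hq hpq.le hz hs
    refine ⟨this.1, ?_⟩
    rw [this.2]
    congr 2
    push_cast; ring
  have main : ∀ k : ℕ, k ≤ κ - 1 →
      y (k * (a + b)) = (Chebyshev.U ℝ ((k:ℤ) - 1)).eval t * (A + β * C) - (Chebyshev.U ℝ ((k:ℤ) - 2)).eval t ∧
      a * g (k * (a + b)) = C * (Chebyshev.U ℝ ((k:ℤ) - 1)).eval t := by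
    intro k
    induction k with
    | zero =>
      intro _
      have e0 : y 0 = 1 := Y_zero μ h1 _ 1 0
      have e1 : g 0 = 0 := G_zero μ h1 _ 1 0
      simp [e0, e1]
    | succ k ih =>
      intro hk
      obtain ⟨i1, i2⟩ := ih (by omega)
      obtain ⟨c1, c2⟩ := copy k (by omega)
      obtain ⟨g1, g2⟩ := gap k hk
      have hrec := congrArg (Polynomial.eval t) (Chebyshev.U_add_two ℝ ((k:ℤ) - 2))
      rw [show (k:ℤ) - 2 + 2 = k by ring, show (k:ℤ) - 2 + 1 = k - 1 by ring] at hrec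
      simp only [eval_sub, eval_mul, eval_ofNat, eval_X] at hrec
      have e3 : ((k + 1 : ℕ):ℤ) - 1 = k := by push_cast; ring
      have e4 : ((k + 1 : ℕ):ℤ) - 2 = k - 1 := by push_cast; ring
      rw [g1, g2, e3, e4, hrec]
      have e5 : b * g (k * (a + b) + a) = β * (a * g (k * (a + b) + a)) := by rw [hba]; ring
      rw [e5, c1, c2, i1, i2, htr]
      generalize eval t (Chebyshev.U ℝ ((k:ℤ) - 1)) = u
      generalize eval t (Chebyshev.U ℝ ((k:ℤ) - 2)) = v
      constructor
      · linear_combination (-u) * det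
      · ring
  obtain ⟨m1, m2⟩ := main (κ - 1) le_rfl
  obtain ⟨c1, c2⟩ := copy (κ - 1) le_rfl
  rw [hlast, m1, m2] at c2
  change a * g 1 = _
  rw [c2]
  have hrec := congrArg (Polynomial.eval t) (Chebyshev.U_add_two ℝ ((κ:ℤ) - 3))
  rw [show (κ:ℤ) - 3 + 2 = κ - 1 by ring, show (κ:ℤ) - 3 + 1 = κ - 2 by ring] at hrec
  simp only [eval_sub, eval_mul, eval_ofNat, eval_X] at hrec
  have e3 : ((κ - 1 : ℕ):ℤ) - 1 = κ - 2 := by omega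
  have e4 : ((κ - 1 : ℕ):ℤ) - 2 = κ - 3 := by omega
  rw [e3, e4, hrec, htr]
  ring

end eig

/-- unique crossing -/
lemma cross_unique {f : ℝ → ℝ} (hf : Continuous f) {l r : ℝ}
    (hloc : ∀ x ∈ Ioo l r, |f x| < 1 → ∀ᶠ x' in 𝓝 x, (x < x' → f x' < f x) ∧ (x' < x → f x < f x'))
    {c : ℝ} (hc : |c| < 1) {x y : ℝ} (hx : x ∈ Ioo l r) (hy : y ∈ Ioo l r) (hxc : f x = c) (hyc : f y = c)
    (hxy : x < y) : False := by
  -- pick point right of x where f < c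
  have hx' := hloc x hx (by rwa [hxc])
  rw [hxc] at hx'
  obtain ⟨ε, hε, hε'⟩ := Metric.eventually_nhds_iff.1 hx'
  obtain ⟨z, hz1, hz2⟩ : ∃ z, x < z ∧ z < min (x + ε) y :=
    exists_between (lt_min (by linarith) hxy)
  have hzε : z < x + ε := hz2.trans_le (min_le_left _ _)
  have hzy : z < y := hz2.trans_le (min_le_right _ _)
  have hfz : f z < c := (hε' (by rw [Real.dist_eq, abs_of_pos] <;> linarith)).1 hz1
  -- first point in [z,y] with f ≥ c
  set S := Icc z y ∩ {w | c ≤ f w} with hS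
  have hScl : IsClosed S := isClosed_Icc.inter (isClosed_le continuous_const hf)
  have hSne : S.Nonempty := ⟨y, ⟨hzy.le, le_rfl⟩, hyc.ge⟩
  have hSb : BddBelow S := ⟨z, fun w hw => hw.1.1⟩
  have hm := hScl.csInf_mem hSne hSb
  set m := sInf S with hmdef
  have hmz : z < m := by
    rcases hm.1.1.eq_or_lt with h | h
    · have := hm.2
      simp only [mem_ofPred_eq] at this
      rw [← h] at this; linarith
    · exact h
  have hbelow : ∀ w, z ≤ w → w < m → f w < c := by
    intro w hw1 hw2
    by_contra! h
    have : m ≤ w := csInf_le hSb ⟨⟨hw1, hw2.le.trans hm.1.2⟩, h⟩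
    linarith
  have hfm : f m = c := by
    apply le_antisymm _ hm.2
    have hne := right_nhdsWithin_Ioo_neBot hmz
    have ht : Tendsto f (𝓝[Ioo z m] m) (𝓝 (f m)) := hf.continuousAt.continuousWithinAt
    apply le_of_tendsto ht
    filter_upwards [self_mem_nhdsWithin] with w hw
    exact (hbelow w hw.1.le hw.2).le
  have hmI : m ∈ Ioo l r := ⟨by linarith [hx.1], lt_of_le_of_lt hm.1.2 hy.2⟩
  have h2 := hloc m hmI (by rwa [hfm])
  have hne := right_nhdsWithin_Ioo_neBot hmz
  have h3 : ∀ᶠ w in 𝓝[Ioo z m] m, w ∈ Ioo z m := self_mem_nhdsWithin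
  obtain ⟨w, hw1, hw2⟩ := (h3.and (h2.filter_mono nhdsWithin_le_nhds)).exists
  have h4 := hw2.2 hw1.2
  have h5 := hbelow w hw1.1.le hw1.2
  rw [hfm] at h4
  linarith

lemma cross_exists {f : ℝ → ℝ} (hf : Continuous f) {l r : ℝ} (hlr : l < r) (h1 : 1 ≤ f l) (h2 : f r ≤ -1)
    {c : ℝ} (hc : |c| < 1) : ∃ x ∈ Ioo l r, f x = c := by
  have := intermediate_value_Ioo' hlr.le hf.continuousOn
  obtain ⟨h3, h4⟩ := abs_lt.1 hc
  obtain ⟨x, hx, e⟩ := this (show c ∈ Ioo (f r) (f l) from ⟨by linarith, by linarith⟩)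
  exact ⟨x, hx, e⟩

end Cantor

end

section
open Set Filter Topology

namespace Cantor

section cnt

open Polynomial in
lemma U_roots (κ : ℕ) (hκ : 2 ≤ κ) : ∃ Z : Finset ℝ, Z.card = κ - 1 ∧ (∀ z ∈ Z, |z| < 1) ∧
    ∀ x : ℝ, (Chebyshev.U ℝ ((κ:ℤ) - 1)).eval x = 0 ↔ x ∈ Z := by
  obtain ⟨n, rfl⟩ : ∃ n, κ = n + 1 := ⟨κ - 1, by omega⟩
  rw [show ((n + 1 : ℕ):ℤ) - 1 = (n:ℤ) by push_cast; ring]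
  refine ⟨(Finset.range n).image (fun (k : ℕ) => Real.cos ((k + 1) * Real.pi / (n + 1))), ?_, ?_, ?_⟩
  · rw [Finset.card_image_of_injOn, Finset.card_range]; · rfl
    exact (Finset.range n).nodup_map_iff_injOn.mp (Chebyshev.roots_U_real_nodup n)
  · intro z hz
    obtain ⟨k, hk, rfl⟩ := Finset.mem_image.1 hz
    have hk' : ((k:ℝ) + 1) < n + 1 := by
      have := Finset.mem_range.1 hk
      have : (k:ℝ) < n := by exact_mod_cast this
      linarith
    have hpi := Real.pi_pos
    have h0 : 0 < ((k:ℝ) + 1) * Real.pi / (n + 1) := by positivity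
    have h1 : ((k:ℝ) + 1) * Real.pi / (n + 1) < Real.pi := by
      rw [div_lt_iff₀ (by positivity)]; nlinarith
    have h2 := Real.sin_pos_of_pos_of_lt_pi h0 h1
    have h3 := Real.sin_sq_add_cos_sq (((k:ℝ) + 1) * Real.pi / (n + 1))
    rw [← sq_lt_one_iff_abs_lt_one]
    nlinarith
  · intro x
    have hne : Chebyshev.U ℝ (n:ℤ) ≠ 0 := by
      intro h
      have := Chebyshev.degree_U_natCast ℝ n
      rw [h] at this
      simp at this
    rw [← Finset.mem_val, ← Chebyshev.roots_U_real, mem_roots hne, IsRoot.def]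

variable (μ : Measure ℝ) [IsFiniteMeasure μ] [NullSingletonClass μ] (h1 : μ.real (Ioc 0 1) ≤ 1)

lemma sC (hm : μ.real (Ioc 0 1) = 1) {l r s : ℝ} (hs : 0 < s * cA μ h1 l) (hl : cC μ h1 l = 0)
    (hno : ∀ x ∈ Ioo l r, cC μ h1 x ≠ 0) : ∀ x ∈ Ioo l r, s * cC μ h1 x < 0 := by
  intro x hx
  have hne := left_nhdsWithin_Ioo_neBot hx.1
  have h3 : ∀ᶠ w in 𝓝[Ioo l x] l, w ∈ Ioo l x := self_mem_nhdsWithin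
  obtain ⟨w, hw1, hw2⟩ := (h3.and ((C_sign μ h1 hm l hl).filter_mono nhdsWithin_le_nhds)).exists
  have hw3 := hw2.1 hw1.1
  have hw4 : s * cC μ h1 w < 0 := by
    by_contra! h
    have hA2 : 0 < (cA μ h1 l) ^ 2 := by
      have : cA μ h1 l ≠ 0 := by rintro h; simp [h] at hs
      positivity
    have : 0 ≤ (s * cC μ h1 w) * (cA μ h1 l)^2 := by positivity
    nlinarith
  by_contra! h
  obtain ⟨z, hz, hz'⟩ := intermediate_value_Icc (f := fun x => s * cC μ h1 x) hw1.2.le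
    ((continuous_const.mul (cC_cont μ h1)).continuousOn) (show (0:ℝ) ∈ Icc _ _ from ⟨hw4.le, h⟩)
  have hs0 : s ≠ 0 := by rintro rfl; simp at hs
  exact hno z ⟨hw1.1.trans_le hz.1, hz.2.trans_lt hx.2⟩ ((mul_eq_zero.1 hz').resolve_left hs0)

lemma amgm {p q : ℝ} (hp : 0 < p) (h : p * q = 1) : 2 ≤ p + q := by
  have hq : 0 < q := by
    by_contra! h'
    nlinarith
  nlinarith [sq_nonneg (p - q)]

open Polynomial in
lemma count (hm : μ.real (Ioc 0 1) = 1) (κ : ℕ) (hκ : 2 ≤ κ) (a β T : ℝ) (ha : 0 < a) (hT : 0 < T)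
    (hself : ∀ l, a * cC μ h1 (T * l) =
      cC μ h1 l * (Chebyshev.U ℝ ((κ:ℤ) - 1)).eval (tr μ h1 β l))
    {l r : ℝ} (hlr : l < r) (hl : cC μ h1 l = 0) (hr : cC μ h1 r = 0)
    (hno : ∀ x ∈ Ioo l r, cC μ h1 x ≠ 0) :
    ({z | z ∈ Ioo (T * l) (T * r) ∧ cC μ h1 z = 0}).ncard = κ - 1 := by
  obtain ⟨Z, hZc, hZ1, hZ⟩ := U_roots κ hκ
  have detl : cA μ h1 l * cD μ h1 l = 1 := by simpa [hl] using det_one μ h1 l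
  have detr : cA μ h1 r * cD μ h1 r = 1 := by simpa [hr] using det_one μ h1 r
  have hAl : cA μ h1 l ≠ 0 := by rintro h; simp [h] at detl
  have hAr : cA μ h1 r ≠ 0 := by rintro h; simp [h] at detr
  obtain ⟨s, hs2, hs⟩ : ∃ s : ℝ, s * s = 1 ∧ 0 < s * cA μ h1 l := by
    rcases hAl.lt_or_gt with h | h
    · exact ⟨-1, by norm_num, by linarith⟩
    · exact ⟨1, by norm_num, by linarith⟩
  have hsC := sC μ h1 hm hs hl hno
  set f : ℝ → ℝ := fun x => s * tr μ h1 β x with hf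
  have hfc : Continuous f := continuous_const.mul (tr_cont μ h1 β)
  have hsabs : |s| = 1 := by
    have : |s| * |s| = 1 := by rw [← abs_mul, hs2, abs_one]
    nlinarith [abs_nonneg s]
  have habs : ∀ x, |s * x| = |x| := fun x => by rw [abs_mul, hsabs, one_mul]
  have hfl : 1 ≤ f l := by
    have := amgm hs (show s * cA μ h1 l * (s * cD μ h1 l) = 1 by linear_combination (s*s) * detl + hs2)
    simp only [hf, tr, hl]; linarith
  have hsAr : 0 < -(s * cA μ h1 r) := by
    have hne := right_nhdsWithin_Ioo_neBot hlr
    have h3 : ∀ᶠ w in 𝓝[Ioo l r] r, w ∈ Ioo l r := self_mem_nhdsWithin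
    obtain ⟨w, hw1, hw2⟩ := (h3.and ((C_sign μ h1 hm r hr).filter_mono nhdsWithin_le_nhds)).exists
    have h4 := hw2.2 hw1.2
    have h5 := hsC w hw1
    by_contra! h6
    have : 0 ≤ s * cA μ h1 r := by linarith
    have h7 : (s * cA μ h1 r) * (s * cC μ h1 w) = cA μ h1 r * cC μ h1 w := by
      linear_combination (cA μ h1 r * cC μ h1 w) * hs2
    nlinarith
  have hfr : f r ≤ -1 := by
    have := amgm hsAr (show -(s * cA μ h1 r) * (-(s * cD μ h1 r)) = 1 by linear_combination (s*s) * detr + hs2)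
    simp only [hf, tr, hr]; linarith
  have hloc : ∀ x ∈ Ioo l r, |f x| < 1 → ∀ᶠ x' in 𝓝 x, (x < x' → f x' < f x) ∧ (x' < x → f x < f x') := by
    intro x hx h
    simp only [hf, habs] at h
    exact tr_mono μ h1 hm β x s (hsC x hx) h
  have huniq : ∀ x ∈ Ioo l r, ∀ y ∈ Ioo l r, |f x| < 1 → f x = f y → x = y := by
    intro x hx y hy h e
    rcases lt_trichotomy x y with h' | h' | h'
    · exact (cross_unique hfc hloc h hx hy rfl e.symm h').elim
    · exact h'
    · exact (cross_unique hfc hloc h hy hx e.symm rfl h').elim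
  have hmem : ∀ x ∈ Ioo l r, (cC μ h1 (T * x) = 0 ↔ tr μ h1 β x ∈ Z) := by
    intro x hx
    rw [← hZ]
    have h3 := hself x
    constructor
    · intro h
      rw [h, mul_zero] at h3
      exact (mul_eq_zero.1 h3.symm).resolve_left (hno x hx)
    · intro h
      rw [h, mul_zero] at h3
      exact (mul_eq_zero.1 h3).resolve_left ha.ne'
  set S := {x | x ∈ Ioo l r ∧ tr μ h1 β x ∈ Z} with hS
  have e1 : {z | z ∈ Ioo (T * l) (T * r) ∧ cC μ h1 z = 0} = (fun x => T * x) '' S := by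
    ext z
    constructor
    · rintro ⟨⟨h2, h3⟩, h4⟩
      have ez : z = T * (z / T) := by field_simp
      have hz : z / T ∈ Ioo l r := ⟨by rw [lt_div_iff₀ hT]; linarith, by rw [div_lt_iff₀ hT]; linarith⟩
      refine ⟨z / T, ⟨hz, (hmem _ hz).1 (by rwa [← ez])⟩, ez.symm⟩
    · rintro ⟨x, ⟨hx, hx'⟩, rfl⟩
      exact ⟨⟨by simpa [hT] using hx.1, by simpa [hT] using hx.2⟩, (hmem x hx).2 hx'⟩
  have e2 : (tr μ h1 β) '' S = Z := by
    ext z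
    constructor
    · rintro ⟨x, hx, rfl⟩
      exact hx.2
    · intro hz
      obtain ⟨x, hx, e⟩ := cross_exists hfc hlr hfl hfr (c := s * z) (by rw [habs]; exact hZ1 z hz)
      have e' : tr μ h1 β x = z := by
        have hs0 : s ≠ 0 := by rintro rfl; simp at hs2
        exact mul_left_cancel₀ hs0 e
      exact ⟨x, ⟨hx, by rw [e']; exact hz⟩, e'⟩
  rw [e1, Set.ncard_image_of_injective _ (mul_right_injective₀ hT.ne')]
  rw [← Set.ncard_image_of_injOn (f := tr μ h1 β), e2, Set.ncard_coe_finset, hZc]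
  intro x hx y hy e
  refine huniq x hx.1 y hy.1 ?_ ?_
  · simp only [hf, habs]; exact hZ1 _ hx.2
  · simp only [hf, e]

end cnt

lemma enum_step {E : Set ℝ} {lam : ℕ → ℝ} (hmono : StrictMono lam) (hr : range lam = E) {N : ℕ} (κ : ℕ)
    (hκ : 2 ≤ κ) {u : ℝ} (hu : u ∈ E) (hlt : lam N < u)
    (hc : ({z | z ∈ Ioo (lam N) u ∧ z ∈ E}).ncard = κ - 1) : lam (N + κ) = u := by
  rw [← hr] at hu
  obtain ⟨m, rfl⟩ := hu
  have hNm : N < m := hmono.lt_iff_lt.1 hlt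
  have e : {z | z ∈ Ioo (lam N) (lam m) ∧ z ∈ E} = lam '' (Ioo N m) := by
    ext z
    constructor
    · rintro ⟨h, hz⟩
      rw [← hr] at hz
      obtain ⟨i, rfl⟩ := hz
      exact ⟨i, ⟨hmono.lt_iff_lt.1 h.1, hmono.lt_iff_lt.1 h.2⟩, rfl⟩
    · rintro ⟨i, hi, rfl⟩
      exact ⟨⟨hmono hi.1, hmono hi.2⟩, by rw [← hr]; exact ⟨i, rfl⟩⟩
  rw [e, Set.ncard_image_of_injective _ hmono.injective, ← Finset.coe_Ioo, Set.ncard_coe_finset,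
    Nat.card_Ioo] at hc
  congr 1
  omega

theorem final (κ : ℕ) (a b : ℝ) (hκ : 2 ≤ κ)
    (ha : 0 < a) (ha' : a < 1 / κ) (hb : b = (1 - κ * a) / (κ - 1))
    (P : ℝ → ℝ) (hP : CantorType κ a b P) (hPmono : MonotoneOn P (Set.Icc 0 1))
    (μ : Measure ℝ)
    (hμ : ∀ x ∈ Set.Icc (0 : ℝ) 1, μ (Set.Icc 0 x) = ENNReal.ofReal (P x))
    (hμc : μ (Set.Icc (0 : ℝ) 1)ᶜ = 0)
    (lam : ℕ → ℝ) (hmono : StrictMono lam)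
    (hrange : Set.range lam = {l : ℝ | IsEigen μ 0 0 l}) :
    ∀ n : ℕ, lam (κ * n) = (κ / a) * lam n := by
  have hP' := hP
  obtain ⟨hPc, hP0, hP1, -, -⟩ := hP'
  haveI := fin_mu hP1 hμ hμc
  haveI := noat hPc hP0 hPmono hμ hμc
  have hm : μ.real (Ioc 0 1) = 1 := by
    rw [mu_Ioc hP0 hPmono hμ (by simp) (by simp) zero_le_one, hP0, hP1, sub_zero]
  have h1 : μ.real (Ioc 0 1) ≤ 1 := hm.le
  have hself := self_C μ h1 κ a b hκ ha ha' hb hP hPmono hμ hμc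
  have hκ0 : (0:ℝ) < κ := by
    have : 0 < κ := by omega
    exact_mod_cast this
  have hT : 0 < (κ:ℝ) / a := by positivity
  have hr : range lam = {l : ℝ | cC μ h1 l = 0} := by
    rw [hrange]; ext l; exact eigen_iff μ h1 l
  have hE : ∀ i, cC μ h1 (lam i) = 0 := fun i => by
    have : lam i ∈ range lam := ⟨i, rfl⟩
    rw [hr] at this; exact this
  have hTE : ∀ x, cC μ h1 x = 0 → cC μ h1 (κ / a * x) = 0 := by
    intro x hx
    have := hself x
    rw [hx, zero_mul] at this
    exact (mul_eq_zero.1 this).resolve_left ha.ne'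
  intro n
  induction n with
  | zero =>
    have h0 : (0:ℝ) ∈ range lam := by rw [hr]; exact C_zero μ h1
    obtain ⟨i, hi⟩ := h0
    have h2 : lam 0 ≤ 0 := by rw [← hi]; exact hmono.monotone (Nat.zero_le i)
    have h3 : lam 0 = 0 := by
      rcases h2.lt_or_eq with h | h
      · exact (C_ne_of_neg μ h1 hm _ h (hE 0)).elim
      · exact h
    simp [h3]
  | succ n ih =>
    have hlt : lam n < lam (n+1) := hmono (Nat.lt_succ_self n)
    rw [mul_add, mul_one]
    apply enum_step hmono hr κ hκ (hTE _ (hE (n+1)))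
    · rw [ih]; exact mul_lt_mul_of_pos_left hlt hT
    · rw [ih]
      apply count μ h1 hm κ hκ a (b / a) (κ / a) ha hT hself hlt (hE n) (hE (n+1))
      intro x hx h
      have : x ∈ range lam := by rw [hr]; exact h
      obtain ⟨i, rfl⟩ := this
      have i1 := hmono.lt_iff_lt.1 hx.1
      have i2 := hmono.lt_iff_lt.1 hx.2
      omega

end Cantor

end

theorem neumann_spectral_periodicity (κ : ℕ) (a b : ℝ) (hκ : 2 ≤ κ)
    (ha : 0 < a) (ha' : a < 1 / κ) (hb : b = (1 - κ * a) / (κ - 1))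
    (P : ℝ → ℝ) (hP : CantorType κ a b P) (hPmono : MonotoneOn P (Set.Icc 0 1))
    (μ : Measure ℝ)
    (hμ : ∀ x ∈ Set.Icc (0 : ℝ) 1, μ (Set.Icc 0 x) = ENNReal.ofReal (P x))
    (hμc : μ (Set.Icc (0 : ℝ) 1)ᶜ = 0)
    (lam : ℕ → ℝ) (hmono : StrictMono lam)
    (hrange : Set.range lam = {l : ℝ | IsEigen μ 0 0 l}) :
    ∀ n : ℕ, lam (κ * n) = (κ / a) * lam n := by
  exact Cantor.final κ a b hκ ha ha' hb P hP hPmono μ hμ hμc lam hmono hrange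
end

section
/- Let (λ_n)_{n∈ℕ} be a strictly increasing enumeration of all eigenvalues of the boundary problem with γ₀ = γ₁ = 2/b for the equation −y'' − λρy = 0 with weight ρ the distributional derivative of the Cantor-type self-similar function P with parameters κ, a, b, and let (μ_n)_{n∈ℕ} be a strictly increasing enumeration of all eigenvalues of the problem with γ₀ = γ₁ = 2a/b for the same equation. Then for every n ∈ ℕ one has λ_{κ(n+1)−1} = (κ/a)·μ_n. -/
open MeasureTheory

section helpers
section partA
open Set Filter Topology Polynomial

lemma at_most_one (f : ℝ → ℝ) (hf : Continuous f) (p q : ℝ) (hpq : p < q) (fp : f p = 0)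
    (fq : f q = 0) (hc : ∀ z ∈ Icc p q, f z = 0 → ∀ᶠ x in 𝓝[≠] z, f x * (x - z) < 0) : False := by
  have right : ∀ z ∈ Icc p q, f z = 0 → ∀ᶠ x in 𝓝[>] z, f x < 0 := by
    intro z hz h
    have := (hc z hz h).filter_mono (nhdsWithin_mono z (fun x (hx : z < x) => ne_of_gt hx))
    filter_upwards [this, self_mem_nhdsWithin] with x hx (hx' : z < x)
    by_contra hcon
    nlinarith
  have left : ∀ᶠ x in 𝓝[<] q, 0 < f x := by
    have := (hc q ⟨hpq.le, le_rfl⟩ fq).filter_mono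
      (nhdsWithin_mono q (fun x (hx : x < q) => ne_of_lt hx))
    filter_upwards [this, self_mem_nhdsWithin] with x hx (hx' : x < q)
    by_contra hcon
    nlinarith
  obtain ⟨p1, hp1, hp1'⟩ := ((right p ⟨le_rfl, hpq.le⟩ fp).and
    (Ioo_mem_nhdsGT (show p < (p+q)/2 by linarith))).exists
  obtain ⟨q1, hq1, hq1'⟩ := (left.and
    (Ioo_mem_nhdsLT (show (p+q)/2 < q by linarith))).exists
  have h1 := hp1'.1
  have h2 := hp1'.2
  have h3 := hq1'.1
  have h4 := hq1'.2
  set S := {x | x ∈ Icc p1 q1 ∧ f x ≤ 0} with hS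
  have hScl : IsClosed S := isClosed_Icc.inter (isClosed_le hf continuous_const)
  have hSne : S.Nonempty := ⟨p1, ⟨le_rfl, by linarith⟩, hp1.le⟩
  have hSb : BddAbove S := ⟨q1, fun x hx => hx.1.2⟩
  have hz := hScl.csSup_mem hSne hSb
  set z := sSup S with hzdef
  have hzq : z < q1 := by
    rcases lt_or_eq_of_le hz.1.2 with h | h
    · exact h
    · have := hz.2; rw [h] at this; linarith
  have hpos : ∀ᶠ x in 𝓝[>] z, 0 < f x := by
    filter_upwards [Ioo_mem_nhdsGT hzq] with x hx
    by_contra hcon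
    have : x ∈ S := ⟨⟨by linarith [hz.1.1, hx.1], hx.2.le⟩, not_lt.mp hcon⟩
    have := le_csSup hSb this
    linarith [hx.1]
  have hz0 : f z = 0 := by
    apply le_antisymm hz.2
    have ht : Tendsto f (𝓝[>] z) (𝓝 (f z)) := hf.continuousAt.mono_left nhdsWithin_le_nhds
    exact ge_of_tendsto ht (hpos.mono fun x hx => hx.le)
  obtain ⟨x, hx1, hx2⟩ := (hpos.and (right z ⟨by linarith [hz.1.1], by linarith⟩ hz0)).exists
  linarith

lemma U_crossing (n : ℕ) (Δ s F : ℝ → ℝ) (hΔ : Continuous Δ) (hs : Continuous s)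
    (hF : Continuous F) (σ ν0 e : ℝ) (hσ : σ ^ 2 = 1) (x0 : ℝ) (hx0 : x0 = Δ ν0 / 2)
    (hroot : (Chebyshev.U ℝ n).eval x0 = 0) (hx1 : x0 ^ 2 < 1) (hsσ : 0 < σ * s ν0)
    (he : e = - (Chebyshev.U ℝ (n - 1)).eval x0) (hF0 : 0 < F ν0)
    (heq : ∀ ν, e * (s ν * (Chebyshev.U ℝ n).eval (Δ ν / 2)) = (ν - ν0) * F ν) :
    ∀ᶠ ν in 𝓝[≠] ν0, (σ * (Δ ν / 2 - x0)) * (ν - ν0) < 0 := by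
  obtain ⟨Q, hQ⟩ := dvd_iff_isRoot.mpr (show (Chebyshev.U ℝ n).IsRoot x0 from hroot)
  set d := (derivative (Chebyshev.U ℝ n)).eval x0 with hd
  have hQ0 : Q.eval x0 = d := by
    rw [hd, hQ]; simp
  have he2 : e * (n + 1) = - ((1 - x0 ^ 2) * d) := by
    have h1 := congrArg (fun p => Polynomial.eval x0 p)
      (Chebyshev.add_one_mul_T_eq_poly_in_U (R := ℝ) (n : ℤ))
    have h2 := congrArg (fun p => Polynomial.eval x0 p)
      (Chebyshev.T_eq_X_mul_U_sub_U (R := ℝ) ((n : ℤ) - 1))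
    have e1 : ((n : ℤ) - 1 + 2) = n + 1 := by ring
    have e2 : ((n : ℤ) - 1 + 1) = n := by ring
    rw [e1, e2] at h2
    simp [hroot] at h1 h2
    rw [he]
    rw [h2] at h1
    linarith
  have evF : ∀ᶠ ν in 𝓝[≠] ν0, 0 < F ν :=
    nhdsWithin_le_nhds (hF.continuousAt.eventually (lt_mem_nhds hF0))
  have evs : ∀ᶠ ν in 𝓝[≠] ν0, 0 < σ * s ν :=
    nhdsWithin_le_nhds ((continuous_const.mul hs).continuousAt.eventually (lt_mem_nhds hsσ))
  have hd0 : d ≠ 0 := by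
    intro h0
    have : e = 0 := by
      rw [h0, mul_zero, neg_zero] at he2
      rcases mul_eq_zero.mp he2 with h | h
      · exact h
      · exact absurd h (by positivity)
    obtain ⟨ν, h1, h2⟩ := (evF.and self_mem_nhdsWithin).exists
    have h3 := heq ν
    rw [this, zero_mul] at h3
    rcases mul_eq_zero.mp h3.symm with h | h
    · exact h2 (by simpa using sub_eq_zero.mp h)
    · linarith
  have evQ : ∀ᶠ ν in 𝓝[≠] ν0, 0 < d * Q.eval (Δ ν / 2) := by
    apply nhdsWithin_le_nhds
    have hc : Continuous fun ν => d * Q.eval (Δ ν / 2) := by fun_prop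
    apply hc.continuousAt.eventually (lt_mem_nhds _)
    simp only [← hx0, hQ0]
    exact mul_self_pos.mpr hd0
  filter_upwards [evF, evs, evQ, self_mem_nhdsWithin] with ν h1 h2 h3 h4
  have h4' : ν - ν0 ≠ 0 := sub_ne_zero.mpr h4
  have h5 := heq ν
  rw [hQ] at h5
  simp only [eval_mul, eval_sub, eval_X, eval_C] at h5
  have hn : (0 : ℝ) < n + 1 := by positivity
  have h6 : ((1 - x0 ^ 2) * (d * Q.eval (Δ ν / 2)) * (σ * s ν)) *
      ((σ * (Δ ν / 2 - x0)) * (ν - ν0)) = - ((n + 1) * ((ν - ν0) ^ 2 * F ν)) := by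
    have : (ν - ν0) ^ 2 * F ν = (ν - ν0) * ((ν - ν0) * F ν) := by ring
    rw [this, ← h5]
    linear_combination ((s ν * (Δ ν / 2 - x0) * Q.eval (Δ ν / 2)) * (ν - ν0)) * he2 +
      ((1 - x0 ^ 2) * (d * Q.eval (Δ ν / 2)) * s ν * (Δ ν / 2 - x0) * (ν - ν0)) * hσ
  have h7 : 0 < (ν - ν0) ^ 2 := by positivity
  have h8 : 0 < (1 - x0 ^ 2) * (d * Q.eval (Δ ν / 2)) * (σ * s ν) :=
    mul_pos (mul_pos (by linarith) h3) h2
  have h9 : 0 < (n + 1) * ((ν - ν0) ^ 2 * F ν) := by positivity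
  by_contra hcon
  have := mul_nonneg h8.le (not_lt.mp hcon)
  linarith

/-- iterates of the transfer matrix applied to `(0,1)`. -/
noncomputable def DE (p q r t : ℝ) : ℕ → ℝ × ℝ
  | 0 => (0, 1)
  | (k+1) => (p * (DE p q r t k).1 + q * (DE p q r t k).2, r * (DE p q r t k).1 + t * (DE p q r t k).2)

lemma DE_eq (p q r t : ℝ) (hdet : p * t - q * r = 1) (k : ℕ) :
    (DE p q r t k).1 = q * (Chebyshev.U ℝ ((k : ℤ) - 1)).eval ((p + t) / 2) ∧
    (DE p q r t k).2 = t * (Chebyshev.U ℝ ((k : ℤ) - 1)).eval ((p + t) / 2)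
      - (Chebyshev.U ℝ ((k : ℤ) - 2)).eval ((p + t) / 2) := by
  induction k with
  | zero => simp [DE]
  | succ k ih =>
    have h := congrArg (fun P => Polynomial.eval ((p + t) / 2) P)
      (Chebyshev.U_eq ℝ (k : ℤ))
    have e1 : (((k + 1 : ℕ) : ℤ) - 1) = k := by push_cast; ring
    have e2 : (((k + 1 : ℕ) : ℤ) - 2) = k - 1 := by push_cast; ring
    rw [e1, e2]
    simp at h
    simp only [DE]
    rw [ih.1, ih.2, h]
    constructor
    · ring
    · linear_combination (-(Chebyshev.U ℝ ((k : ℤ) - 1)).eval ((p + t) / 2)) * hdet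

lemma U_roots_lt (n : ℕ) (x : ℝ) (h : (Chebyshev.U ℝ n).eval x = 0) : -1 < x ∧ x < 1 := by
  have hne : Chebyshev.U ℝ n ≠ 0 := by
    intro h0
    have := Chebyshev.degree_U_natCast ℝ n
    rw [h0] at this; simp at this
  have : x ∈ (Chebyshev.U ℝ n).roots := (mem_roots hne).mpr h
  rw [Chebyshev.roots_U_real] at this
  obtain ⟨k, hk, rfl⟩ := Finset.mem_image.mp (Finset.mem_val.mp this)
  have hk' : (k : ℝ) + 1 < n + 1 := by
    have := Finset.mem_range.mp hk
    have : (k : ℝ) < n := by exact_mod_cast this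
    linarith
  have hθ0 : 0 < ((k : ℝ) + 1) * Real.pi / (n + 1) := by positivity
  have hθ1 : ((k : ℝ) + 1) * Real.pi / (n + 1) < Real.pi := by
    rw [div_lt_iff₀ (by positivity)]
    nlinarith [Real.pi_pos]
  have hsin := Real.sin_pos_of_pos_of_lt_pi hθ0 hθ1
  have := Real.sin_sq_add_cos_sq (((k : ℝ) + 1) * Real.pi / (n + 1))
  constructor <;> nlinarith

lemma U_roots_card (n : ℕ) : {x | (Chebyshev.U ℝ n).eval x = 0}.ncard = n := by
  have hne : Chebyshev.U ℝ n ≠ 0 := by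
    intro h0
    have := Chebyshev.degree_U_natCast ℝ n
    rw [h0] at this; simp at this
  have hr := Chebyshev.roots_U_real n
  have : {x | (Chebyshev.U ℝ n).eval x = 0} =
      (((Finset.range n).image (fun (k : ℕ) => Real.cos ((k + 1) * Real.pi / (n + 1)))) : Set ℝ) := by
    ext x
    rw [Finset.mem_coe, ← Finset.mem_val, ← hr, mem_roots hne]
    rfl
  rw [this, Set.ncard_coe_finset, Finset.card_image_of_injOn, Finset.card_range]
  exact (Finset.range n).nodup_map_iff_injOn.mp (Chebyshev.roots_U_real_nodup n)

section count
variable (n : ℕ) (p q r t : ℝ → ℝ)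

lemma count_interval (hp : Continuous p) (hq : Continuous q) (ht : Continuous t)
    (hdet : ∀ ν, p ν * t ν - q ν * r ν = 1)
    (hcr : ∀ ν0, (DE (p ν0) (q ν0) (r ν0) (t ν0) (n+1)).1 = 0 → ∃ F : ℝ → ℝ, Continuous F ∧ 0 < F ν0 ∧
      ∀ ν, (DE (p ν0) (q ν0) (r ν0) (t ν0) (n+1)).2 * (DE (p ν) (q ν) (r ν) (t ν) (n+1)).1
        = (ν - ν0) * F ν)
    (σ : ℝ) (hσ : σ ^ 2 = 1) (u v : ℝ) (huv : u < v) (hs : ∀ ν ∈ Ioo u v, 0 < σ * q ν)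
    (hu : 2 ≤ σ * (p u + t u)) (hv : σ * (p v + t v) ≤ -2) :
    ({ν | (DE (p ν) (q ν) (r ν) (t ν) (n+1)).1 = 0} ∩ Ioo u v).ncard = n ∧
    ({ν | (DE (p ν) (q ν) (r ν) (t ν) (n+1)).1 = 0} ∩ Ioo u v).Finite := by
  have hD : ∀ ν, (DE (p ν) (q ν) (r ν) (t ν) (n+1)).1 =
      q ν * (Chebyshev.U ℝ n).eval ((p ν + t ν) / 2) := by
    intro ν
    have := (DE_eq (p ν) (q ν) (r ν) (t ν) (hdet ν) (n+1)).1
    rwa [show (((n + 1 : ℕ) : ℤ) - 1) = n by push_cast; ring] at this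
  have hE : ∀ ν, (DE (p ν) (q ν) (r ν) (t ν) (n+1)).2 =
      t ν * (Chebyshev.U ℝ n).eval ((p ν + t ν) / 2) -
        (Chebyshev.U ℝ ((n : ℤ) - 1)).eval ((p ν + t ν) / 2) := by
    intro ν
    have := (DE_eq (p ν) (q ν) (r ν) (t ν) (hdet ν) (n+1)).2
    rwa [show (((n + 1 : ℕ) : ℤ) - 1) = n by push_cast; ring,
      show (((n + 1 : ℕ) : ℤ) - 2) = n - 1 by push_cast; ring] at this
  have hΔ : Continuous fun ν => p ν + t ν := hp.add ht
  set R := {x | (Chebyshev.U ℝ n).eval x = 0} with hR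
  have hσ0 : σ ≠ 0 := by rintro rfl; norm_num at hσ
  have key : BijOn (fun ν => (p ν + t ν) / 2)
      ({ν | (DE (p ν) (q ν) (r ν) (t ν) (n+1)).1 = 0} ∩ Ioo u v) R := by
    refine ⟨?_, ?_, ?_⟩
    · rintro ν ⟨h1, h2⟩
      rw [mem_ofPred_eq, hD] at h1
      rcases mul_eq_zero.mp h1 with h | h
      · have := hs ν h2; rw [h] at this; simp at this
      · exact h
    · have main : ∀ ν1 ∈ ({ν | (DE (p ν) (q ν) (r ν) (t ν) (n+1)).1 = 0} ∩ Ioo u v),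
          ∀ ν2 ∈ Ioo u v,
          (p ν1 + t ν1) / 2 = (p ν2 + t ν2) / 2 → ν1 < ν2 → False := by
        rintro ν1 ⟨h1, h1'⟩ ν2 h2 heq hlt
        have hroot : (Chebyshev.U ℝ n).eval ((p ν1 + t ν1) / 2) = 0 := by
          rw [mem_ofPred_eq, hD] at h1
          rcases mul_eq_zero.mp h1 with h | h
          · have := hs ν1 h1'; rw [h] at this; simp at this
          · exact h
        obtain ⟨hx1, hx2⟩ := U_roots_lt n _ hroot
        refine at_most_one (fun ν => σ * ((p ν + t ν) / 2 - (p ν1 + t ν1) / 2)) (by fun_prop)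
          ν1 ν2 hlt (by simp) (by simp [heq]) ?_
        intro z hz hz0
        have hz1 : (p z + t z) / 2 = (p ν1 + t ν1) / 2 := by
          rcases mul_eq_zero.mp hz0 with h | h
          · exact absurd h hσ0
          · linarith
        have hzI : z ∈ Ioo u v := ⟨by linarith [hz.1, h1'.1], by linarith [hz.2, h2.2]⟩
        have hDz : (DE (p z) (q z) (r z) (t z) (n+1)).1 = 0 := by
          rw [hD, hz1, hroot, mul_zero]
        obtain ⟨F, hF, hF0, hFe⟩ := hcr z hDz
        refine U_crossing n (fun ν => p ν + t ν) q F hΔ hq hF σ z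
          (DE (p z) (q z) (r z) (t z) (n+1)).2 hσ _ hz1.symm hroot
          (by nlinarith) (hs z hzI) ?_ hF0 ?_
        · rw [hE, hz1, hroot]; ring
        · intro ν
          rw [← hFe ν, hD]
      intro ν1 h1 ν2 h2 heq
      rcases lt_trichotomy ν1 ν2 with h | h | h
      · exact (main ν1 h1 ν2 h2.2 heq h).elim
      · exact h
      · exact (main ν2 h2 ν1 h1.2 heq.symm h).elim
    · intro x hx
      obtain ⟨hx1, hx2⟩ := U_roots_lt n x hx
      have hlt : -1 < σ * x ∧ σ * x < 1 := by
        have : σ = 1 ∨ σ = -1 := by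
          have h0 : (σ - 1) * (σ + 1) = 0 := by linear_combination hσ
          rcases mul_eq_zero.mp h0 with h | h
          · left; linarith
          · right; linarith
        rcases this with h | h <;> rw [h] <;> constructor <;> linarith
      have := intermediate_value_Ioo' huv.le
        (f := fun ν => σ * ((p ν + t ν) / 2)) (by fun_prop)
      obtain ⟨ν, hν, hν2⟩ := this (show σ * x ∈ _ from ⟨by linarith, by linarith⟩)
      have hν3 : (p ν + t ν) / 2 = x := mul_left_cancel₀ hσ0 hν2
      refine ⟨ν, ⟨?_, hν⟩, hν3⟩
      rw [mem_ofPred_eq, hD, hν3, show (Chebyshev.U ℝ n).eval x = 0 from hx, mul_zero]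
  have hfin : R.Finite := by
    by_cases hn : n = 0
    · subst hn
      simp [hR]
    · apply Set.finite_of_ncard_ne_zero
      rw [U_roots_card]; exact hn
  refine ⟨?_, Set.Finite.of_finite_image (f := fun ν => (p ν + t ν) / 2) (by rw [key.image_eq]; exact hfin) key.injOn⟩
  rw [← Set.InjOn.ncard_image key.injOn, key.image_eq, hR, U_roots_card n]
end count
lemma sign_const (f : ℝ → ℝ) (hf : Continuous f) (u v : ℝ) (hne : ∀ x ∈ Ioo u v, f x ≠ 0)
    (x1 : ℝ) (hx1 : x1 ∈ Ioo u v) (hpos : 0 < f x1) : ∀ x ∈ Ioo u v, 0 < f x := by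
  intro x hx
  by_contra hcon
  have hsub : uIcc x x1 ⊆ Ioo u v := (ordConnected_Ioo).uIcc_subset hx hx1
  have := intermediate_value_uIcc (f := f) (a := x) (b := x1) hf.continuousOn
  obtain ⟨z, hz, hz0⟩ := this (show (0 : ℝ) ∈ uIcc (f x) (f x1) from
    mem_uIcc.mpr (Or.inl ⟨not_lt.mp hcon, hpos.le⟩))
  exact hne z (hsub hz) hz0

lemma two_le_add {x y : ℝ} (h : x * y = 1) (hx : 0 < y) : 2 ≤ x + y := by
  have hx' : 0 < x := by
    by_contra hc
    have := mul_nonpos_of_nonpos_of_nonneg (not_lt.mp hc) hx.le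
    linarith
  nlinarith [sq_nonneg (x - y)]

theorem index_main (n : ℕ) (p q r t : ℝ → ℝ) (hp : Continuous p) (hq : Continuous q)
    (ht : Continuous t)
    (hdet : ∀ ν, p ν * t ν - q ν * r ν = 1)
    (hcr : ∀ ν0, (DE (p ν0) (q ν0) (r ν0) (t ν0) (n+1)).1 = 0 → ∃ F : ℝ → ℝ, Continuous F ∧ 0 < F ν0 ∧
      ∀ ν, (DE (p ν0) (q ν0) (r ν0) (t ν0) (n+1)).2 * (DE (p ν) (q ν) (r ν) (t ν) (n+1)).1
        = (ν - ν0) * F ν)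
    (hcr1 : ∀ ν0, q ν0 = 0 → ∃ F : ℝ → ℝ, Continuous F ∧ 0 < F ν0 ∧
      ∀ ν, t ν0 * q ν = (ν - ν0) * F ν)
    (hq0 : 0 < q 0) (htr0 : p 0 + t 0 = 2)
    (l mu : ℕ → ℝ) (hl : StrictMono l) (hmu : StrictMono mu)
    (hlr : range l = {ν | (DE (p ν) (q ν) (r ν) (t ν) (n+1)).1 = 0})
    (hmur : range mu = {ν | q ν = 0}) (hlpos : ∀ m, 0 < l m) (hmupos : ∀ m, 0 < mu m) :
    ∀ m, l ((n+1) * (m+1) - 1) = mu m := by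
  set Z := {ν | (DE (p ν) (q ν) (r ν) (t ν) (n+1)).1 = 0} with hZ
  have hqmu : ∀ m, q (mu m) = 0 := fun m => by
    have : mu m ∈ {ν | q ν = 0} := hmur ▸ mem_range_self m
    exact this
  have hmuZ : ∀ m, mu m ∈ Z := by
    intro m
    rw [hZ, mem_ofPred_eq, (DE_eq _ _ _ _ (hdet _) _).1, hqmu, zero_mul]
  have hpt : ∀ m, p (mu m) * t (mu m) = 1 := fun m => by
    have := hdet (mu m); rw [hqmu] at this; linarith
  have right : ∀ m v, mu m < v → ∃ x ∈ Ioo (mu m) v, 0 < t (mu m) * q x := by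
    intro m v hv
    obtain ⟨F, hF, hF0, hFe⟩ := hcr1 (mu m) (hqmu m)
    have evF : ∀ᶠ ν in 𝓝[>] (mu m), 0 < F ν :=
      nhdsWithin_le_nhds (hF.continuousAt.eventually (lt_mem_nhds hF0))
    obtain ⟨x, hx1, hx2⟩ := (evF.and (Ioo_mem_nhdsGT hv)).exists
    exact ⟨x, hx2, by rw [hFe]; exact mul_pos (by linarith [hx2.1]) hx1⟩
  have left : ∀ m u, u < mu m → ∃ x ∈ Ioo u (mu m), t (mu m) * q x < 0 := by
    intro m v hv
    obtain ⟨F, hF, hF0, hFe⟩ := hcr1 (mu m) (hqmu m)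
    have evF : ∀ᶠ ν in 𝓝[<] (mu m), 0 < F ν :=
      nhdsWithin_le_nhds (hF.continuousAt.eventually (lt_mem_nhds hF0))
    obtain ⟨x, hx1, hx2⟩ := (evF.and (Ioo_mem_nhdsLT hv)).exists
    exact ⟨x, hx2, by rw [hFe]; exact mul_neg_of_neg_of_pos (by linarith [hx2.2]) hx1⟩
  have main : ∀ m, (Z ∩ Iio (mu m)).Finite ∧ (Z ∩ Iio (mu m)).ncard = (n+1) * m + n := by
    intro m
    induction m with
    | zero =>
      have hne : ∀ x ∈ Ioo (-1) (mu 0), q x ≠ 0 := by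
        intro x hx h0
        have : x ∈ range mu := by rw [hmur]; exact h0
        obtain ⟨j, rfl⟩ := this
        have := hmu.monotone (Nat.zero_le j)
        linarith [hx.2]
      have hs := sign_const q hq (-1) (mu 0) hne 0 ⟨by norm_num, hmupos 0⟩ hq0
      obtain ⟨x, hx, hx2⟩ := left 0 0 (hmupos 0)
      have hqx := hs x ⟨by linarith [hx.1], hx.2⟩
      have ht0 : 0 < - t (mu 0) := by
        by_contra hc
        have := mul_nonneg (show 0 ≤ t (mu 0) by linarith) hqx.le
        linarith
      have h2 := two_le_add (x := - p (mu 0)) (y := - t (mu 0)) (by linarith [hpt 0]) ht0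
      have := count_interval n p q r t hp hq ht hdet hcr 1 (by norm_num) 0 (mu 0) (hmupos 0)
        (fun ν hν => by rw [one_mul]; exact hs ν ⟨by linarith [hν.1], hν.2⟩)
        (by linarith) (by linarith)
      have heq : Z ∩ Iio (mu 0) = Z ∩ Ioo 0 (mu 0) := by
        ext x
        constructor
        · rintro ⟨h1, h2⟩
          refine ⟨h1, ?_, h2⟩
          rw [← hlr] at h1
          obtain ⟨j, rfl⟩ := h1
          exact hlpos j
        · rintro ⟨h1, h2⟩
          exact ⟨h1, h2.2⟩
      rw [heq]
      exact ⟨this.2, by rw [this.1]; ring⟩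
    | succ m ih =>
      have hlt : mu m < mu (m+1) := hmu (Nat.lt_succ_self m)
      have hne : ∀ x ∈ Ioo (mu m) (mu (m+1)), q x ≠ 0 := by
        intro x hx h0
        have : x ∈ range mu := by rw [hmur]; exact h0
        obtain ⟨j, rfl⟩ := this
        have h1 := hmu.lt_iff_lt.mp hx.1
        have h2 := hmu.lt_iff_lt.mp hx.2
        omega
      obtain ⟨σ, hσ, hσt⟩ : ∃ σ : ℝ, σ ^ 2 = 1 ∧ 0 < σ * t (mu m) := by
        rcases lt_trichotomy (t (mu m)) 0 with h | h | h
        · exact ⟨-1, by norm_num, by linarith⟩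
        · have := hpt m; rw [h] at this; simp at this
        · exact ⟨1, by norm_num, by linarith⟩
      obtain ⟨x1, hx1, hx1'⟩ := right m _ hlt
      have hσ0 : σ ≠ 0 := by rintro rfl; norm_num at hσ
      have hx1'' : 0 < σ * q x1 := by
        have : 0 < (σ * t (mu m)) * (σ * q x1) := by
          have : (σ * t (mu m)) * (σ * q x1) = σ ^ 2 * (t (mu m) * q x1) := by ring
          rw [this, hσ, one_mul]; exact hx1'
        exact (mul_pos_iff_of_pos_left hσt).mp this
      have hs := sign_const (fun x => σ * q x) (continuous_const.mul hq) (mu m) (mu (m+1))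
        (fun x hx => mul_ne_zero hσ0 (hne x hx)) x1 hx1 hx1''
      obtain ⟨x, hx, hx2⟩ := left (m+1) _ hlt
      have hqx := hs x hx
      have ht0 : 0 < - (σ * t (mu (m+1))) := by
        by_contra hc
        have := mul_nonneg (show 0 ≤ σ * t (mu (m+1)) by linarith) hqx.le
        have h2 : (σ * t (mu (m+1))) * (σ * q x) = σ ^ 2 * (t (mu (m+1)) * q x) := by ring
        rw [h2, hσ] at this
        linarith
      have hA := two_le_add (x := σ * p (mu m)) (y := σ * t (mu m))
        (by linear_combination σ ^ 2 * hpt m + hσ) hσt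
      have hB := two_le_add (x := - (σ * p (mu (m+1)))) (y := - (σ * t (mu (m+1))))
        (by linear_combination σ ^ 2 * hpt (m+1) + hσ) ht0
      have := count_interval n p q r t hp hq ht hdet hcr σ hσ (mu m) (mu (m+1)) hlt hs
        (by linarith) (by linarith)
      have heq : Z ∩ Iio (mu (m+1)) = insert (mu m) (Z ∩ Iio (mu m)) ∪ (Z ∩ Ioo (mu m) (mu (m+1))) := by
        ext x
        constructor
        · rintro ⟨h1, h2⟩
          rcases lt_trichotomy x (mu m) with h | h | h
          · exact Or.inl (Or.inr ⟨h1, h⟩)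
          · exact Or.inl (Or.inl h)
          · exact Or.inr ⟨h1, h, h2⟩
        · rintro ((h | h) | h)
          · subst h; exact ⟨hmuZ m, hlt⟩
          · exact ⟨h.1, lt_trans h.2 hlt⟩
          · exact ⟨h.1, h.2.2⟩
      have hfin1 : (insert (mu m) (Z ∩ Iio (mu m))).Finite := ih.1.insert _
      refine ⟨by rw [heq]; exact hfin1.union this.2, ?_⟩
      rw [heq, Set.ncard_union_eq ?_ hfin1 this.2, Set.ncard_insert_of_notMem ?_ ih.1, ih.2, this.1]
      · ring
      · rintro ⟨_, h⟩; exact lt_irrefl _ (mem_Iio.mp h)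
      · rw [Set.disjoint_left]
        rintro x (h | h) ⟨_, h'⟩
        · exact absurd h'.1 (by rw [h]; exact lt_irrefl _)
        · exact absurd h'.1 (not_lt.mpr (le_of_lt h.2))
  intro m
  obtain ⟨j, hj⟩ : mu m ∈ range l := by rw [hlr]; exact hmuZ m
  have heq : Z ∩ Iio (mu m) = l '' (Finset.range j : Set ℕ) := by
    ext x
    constructor
    · rintro ⟨h1, h2⟩
      rw [← hlr] at h1
      obtain ⟨i, rfl⟩ := h1
      refine ⟨i, ?_, rfl⟩
      rw [← hj] at h2
      simpa using hl.lt_iff_lt.mp h2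
    · rintro ⟨i, hi, rfl⟩
      refine ⟨by rw [← hlr]; exact mem_range_self i, ?_⟩
      rw [← hj]
      exact hl (by simpa using hi)
  have hc := (main m).2
  rw [heq, Set.InjOn.ncard_image (hl.injective.injOn), Set.ncard_coe_finset, Finset.card_range] at hc
  have : (n+1) * (m+1) - 1 = j := by rw [hc]; ring_nf; omega
  rw [this, hj]

end partA

open Set Filter Topology
open BoundedContinuousFunction

noncomputable def cl (x : ℝ) : ℝ := max 0 (min 1 x)
lemma cl_cont : Continuous cl := by unfold cl; fun_prop
lemma cl_mem (x : ℝ) : cl x ∈ Icc (0:ℝ) 1 := by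
  unfold cl; exact ⟨le_max_left _ _, max_le zero_le_one (min_le_left _ _)⟩
lemma cl_of_mem {x : ℝ} (hx : x ∈ Icc (0:ℝ) 1) : cl x = x := by
  unfold cl; rw [min_eq_right hx.2, max_eq_right hx.1]

section absE
variable {E : Type*} [NormedAddCommGroup E] [NormedSpace ℝ E] [CompleteSpace E]
lemma abs_unit (K : E →L[ℝ] E) (hK : ∀ n : ℕ, ‖K ^ (n+1)‖ ≤ 1 / (n+1).factorial) (ν : ℝ) :
    IsUnit (1 + ν • K) := by
  have ht := FloorSemiring.tendsto_pow_div_factorial_atTop |ν|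
  obtain ⟨n, hn⟩ := ((ht.comp (tendsto_add_atTop_nat 1)).eventually
    (gt_mem_nhds (show (0:ℝ) < 1 by norm_num))).exists
  set X := - (ν • K) with hX
  have hXn : ‖X ^ (n+1)‖ < 1 := by
    have e : X ^ (n+1) = ((-ν) ^ (n+1)) • (K ^ (n+1)) := by
      rw [hX, ← neg_smul, _root_.smul_pow]
    rw [e, norm_smul, norm_pow, Real.norm_eq_abs, abs_neg]
    refine lt_of_le_of_lt ?_ hn
    simp only [Function.comp]
    rw [div_eq_mul_one_div]
    gcongr
    exact hK n
  have hu : IsUnit (1 - X ^ (n+1)) := (Units.oneSub _ hXn).isUnit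
  rw [← mul_neg_geom_sum] at hu
  have hcomm : Commute (1 - X) (∑ i ∈ Finset.range (n+1), X ^ i) := by
    apply Commute.sum_right
    intro i _
    exact (Commute.one_left _).sub_left ((Commute.refl X).pow_right i)
  have := (hcomm.isUnit_mul_iff.mp hu).1
  rwa [hX, sub_neg_eq_add] at this

lemma abs_cont (K : E →L[ℝ] E) (hK : ∀ ν : ℝ, IsUnit (1 + ν • K)) :
    Continuous (fun ν : ℝ => Ring.inverse (1 + ν • K)) := by
  rw [continuous_iff_continuousAt]
  intro ν
  obtain ⟨u, hu⟩ := hK ν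
  have h1 := NormedRing.inverse_continuousAt u
  rw [hu] at h1
  exact ContinuousAt.comp (f := fun ν : ℝ => (1 + ν • K)) h1 (by fun_prop)
end absE

set_option linter.unusedSectionVars false
section meas
variable (μ : Measure ℝ) [IsProbabilityMeasure μ] [NullSingletonClass μ]

lemma bcf_integrable (f : ℝ →ᵇ ℝ) : Integrable f μ := f.integrable μ

lemma J_cont (f : ℝ →ᵇ ℝ) : Continuous fun x => ∫ s in Icc (0:ℝ) (cl x), f s ∂μ := by
  have h := intervalIntegral.continuousOn_primitive_Icc (μ := μ) (f := f) (a := 0) (b := 1)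
    (f.integrable μ).integrableOn
  exact h.comp_continuous cl_cont cl_mem

lemma J_cont_mul (f : ℝ →ᵇ ℝ) (ν : ℝ) : Continuous fun x => ν * ∫ s in Icc (0:ℝ) (cl x), f s ∂μ :=
  continuous_const.mul (J_cont μ f)

lemma inner_bound (f : ℝ →ᵇ ℝ) (t C : ℝ) (hC : 0 ≤ C) (h : ∀ s ∈ Icc (0:ℝ) t, |f s| ≤ C) :
    |∫ s in Icc (0:ℝ) t, f s ∂μ| ≤ C := by
  have := norm_setIntegral_le_of_norm_le_const (μ := μ) (s := Icc (0:ℝ) t) (f := f) (C := C)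
    (measure_lt_top _ _) h
  rw [Real.norm_eq_abs] at this
  refine this.trans ?_
  have h1 : μ.real (Icc 0 t) ≤ 1 := measureReal_le_one
  nlinarith

noncomputable def Kfun (f : ℝ →ᵇ ℝ) (x : ℝ) : ℝ :=
  ∫ t in (0:ℝ)..(cl x), ∫ s in Icc (0:ℝ) (cl t), f s ∂μ

lemma Kfun_cont (f : ℝ →ᵇ ℝ) : Continuous (Kfun μ f) :=
  (intervalIntegral.continuous_primitive
    (fun a b => (J_cont μ f).intervalIntegrable a b) 0).comp cl_cont

lemma Kfun_bound (f : ℝ →ᵇ ℝ) (n : ℕ) (C : ℝ) (hC : 0 ≤ C)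
    (h : ∀ s ∈ Icc (0:ℝ) 1, |f s| ≤ C * s ^ n / n.factorial) (x : ℝ) :
    |Kfun μ f x| ≤ C * (cl x) ^ (n+1) / (n+1).factorial := by
  unfold Kfun
  have hx := cl_mem x
  have h1 : ‖∫ t in (0:ℝ)..(cl x), ∫ s in Icc (0:ℝ) (cl t), f s ∂μ‖ ≤
      ∫ t in (0:ℝ)..(cl x), C * t ^ n / n.factorial := by
    apply intervalIntegral.norm_integral_le_of_norm_le hx.1
    · refine ae_of_all _ fun t ht => ?_
      have ht' : t ∈ Icc (0:ℝ) 1 := ⟨ht.1.le, ht.2.trans hx.2⟩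
      rw [cl_of_mem ht', Real.norm_eq_abs]
      apply inner_bound
      · have := ht'.1; positivity
      · intro s hs
        refine (h s ⟨hs.1, hs.2.trans ht'.2⟩).trans ?_
        have := hs.1
        have := hs.2
        gcongr
    · apply Continuous.intervalIntegrable; fun_prop
  rw [Real.norm_eq_abs] at h1
  refine h1.trans (le_of_eq ?_)
  rw [intervalIntegral.integral_div, intervalIntegral.integral_const_mul, integral_pow]
  rw [Nat.factorial_succ]
  push_cast
  field_simp
  ring

lemma Kfun_le (f : ℝ →ᵇ ℝ) (x : ℝ) : ‖Kfun μ f x‖ ≤ ‖f‖ := by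
  have := Kfun_bound μ f 0 ‖f‖ (norm_nonneg _) (by
    intro s _; simpa using f.norm_coe_le_norm s) x
  refine this.trans ?_
  have h2 := (cl_mem x).2
  have h1 := (cl_mem x).1
  simp
  nlinarith [norm_nonneg f]

noncomputable def Kop : (ℝ →ᵇ ℝ) →L[ℝ] (ℝ →ᵇ ℝ) :=
  LinearMap.mkContinuous
    { toFun := fun f => BoundedContinuousFunction.ofNormedAddCommGroup (Kfun μ f) (Kfun_cont μ f) ‖f‖ (Kfun_le μ f)
      map_add' := by
        intro f g
        ext x
        simp only [BoundedContinuousFunction.coe_ofNormedAddCommGroup, BoundedContinuousFunction.coe_add, Pi.add_apply, Kfun]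
        rw [← intervalIntegral.integral_add ((J_cont μ f).intervalIntegrable _ _)
          ((J_cont μ g).intervalIntegrable _ _)]
        congr 1
        ext t
        exact integral_add (f.integrable μ).integrableOn (g.integrable μ).integrableOn
      map_smul' := by
        intro c f
        ext x
        simp only [BoundedContinuousFunction.coe_ofNormedAddCommGroup, BoundedContinuousFunction.coe_smul, Kfun, RingHom.id_apply, smul_eq_mul]
        rw [← intervalIntegral.integral_const_mul]
        congr 1
        ext t
        exact integral_const_mul _ _ }
    1 (by
      intro f
      rw [one_mul]
      exact BoundedContinuousFunction.norm_ofNormedAddCommGroup_le _ (norm_nonneg _) (Kfun_le μ f))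

lemma Kop_apply (f : ℝ →ᵇ ℝ) (x : ℝ) : Kop μ f x = Kfun μ f x := rfl

lemma Kop_pow_bound (f : ℝ →ᵇ ℝ) (n : ℕ) (x : ℝ) :
    |(Kop μ ^ (n+1)) f x| ≤ ‖f‖ * (cl x) ^ (n+1) / (n+1).factorial := by
  induction n generalizing x with
  | zero =>
    rw [zero_add, pow_one, Kop_apply]
    exact Kfun_bound μ f 0 ‖f‖ (norm_nonneg _) (by
          intro s _; simpa using f.norm_coe_le_norm s) x
  | succ n ih =>
    rw [pow_succ', mul_apply_eq_comp, Kop_apply]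
    apply Kfun_bound μ _ (n+1) ‖f‖ (norm_nonneg _)
    intro s hs
    have := ih s
    rwa [cl_of_mem hs] at this

lemma Kop_pow_norm (n : ℕ) : ‖Kop μ ^ (n+1)‖ ≤ 1 / (n+1).factorial := by
  apply ContinuousLinearMap.opNorm_le_bound _ (by positivity)
  intro f
  rw [BoundedContinuousFunction.norm_le (by positivity)]
  intro x
  refine (Kop_pow_bound μ f n x).trans ?_
  have h2 := (cl_mem x).2
  have h1 := (cl_mem x).1
  have h3 : cl x ^ (n+1) ≤ 1 := pow_le_one₀ h1 h2
  rw [div_mul_eq_mul_div, one_mul]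
  gcongr
  nlinarith [norm_nonneg f]

lemma unit_K (ν : ℝ) : IsUnit (1 + ν • Kop μ) := abs_unit _ (Kop_pow_norm μ) ν

noncomputable def clB : ℝ →ᵇ ℝ := BoundedContinuousFunction.ofNormedAddCommGroup cl cl_cont 1 (by
  intro x
  rw [Real.norm_eq_abs, abs_of_nonneg (cl_mem x).1]
  exact (cl_mem x).2)

noncomputable def Rv (ν : ℝ) : (ℝ →ᵇ ℝ) →L[ℝ] (ℝ →ᵇ ℝ) := Ring.inverse (1 + ν • Kop μ)

lemma Rv_cont : Continuous (Rv μ) := abs_cont (Kop μ) (unit_K μ)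

noncomputable def YB (ν p q : ℝ) : ℝ →ᵇ ℝ := p • Rv μ ν 1 + q • Rv μ ν clB

lemma YB_eq (ν p q : ℝ) : YB μ ν p q = Rv μ ν (p • 1 + q • clB) := by
  simp [YB]

lemma YB_fix (ν p q : ℝ) (x : ℝ) : YB μ ν p q x = p + q * cl x - ν * Kfun μ (YB μ ν p q) x := by
  have h : (1 + ν • Kop μ) (YB μ ν p q) = p • 1 + q • clB := by
    rw [YB_eq, ← mul_apply_eq_comp, Rv, Ring.mul_inverse_cancel _ (unit_K μ ν)]
    rfl
  have h2 := congrArg (fun f : ℝ →ᵇ ℝ => f x) h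
  have h3 : YB μ ν p q x + ν * Kfun μ (YB μ ν p q) x = p * 1 + q * cl x := h2
  linarith

lemma YB_unique (ν p q : ℝ) (f : ℝ →ᵇ ℝ) (hf : ∀ x, f x = p + q * cl x - ν * Kfun μ f x) :
    f = YB μ ν p q := by
  have h : (1 + ν • Kop μ) f = p • 1 + q • clB := by
    ext x
    have : f x + ν * Kfun μ f x = p * 1 + q * cl x := by rw [hf x]; ring
    exact this
  rw [YB_eq, ← h, ← mul_apply_eq_comp, Rv, Ring.inverse_mul_cancel _ (unit_K μ ν)]
  rfl

lemma YB_cont {X : Type*} [TopologicalSpace X] {ν p q : X → ℝ} (hν : Continuous ν)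
    (hp : Continuous p) (hq : Continuous q) :
    Continuous fun x => YB μ (ν x) (p x) (q x) := by
  unfold YB
  have h := (Rv_cont μ).comp hν
  have h1 : Continuous fun x => Rv μ (ν x) 1 := h.clm_apply continuous_const
  have h2 : Continuous fun x => Rv μ (ν x) clB := h.clm_apply continuous_const
  exact (hp.smul h1).add (hq.smul h2)

/-- the derivative -/
noncomputable def GB (ν p q : ℝ) (x : ℝ) : ℝ := q - ν * ∫ s in Icc (0:ℝ) (cl x), YB μ ν p q s ∂μ

lemma GB_cont (ν p q : ℝ) : Continuous (GB μ ν p q) := by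
  unfold GB
  exact continuous_const.sub (continuous_const.mul (J_cont μ _))

lemma YB_int (ν p q x : ℝ) : YB μ ν p q x = p + ∫ t in (0:ℝ)..(cl x), GB μ ν p q t := by
  rw [YB_fix]
  unfold GB Kfun
  rw [intervalIntegral.integral_sub (by simp) ((J_cont_mul μ _ ν).intervalIntegrable _ _),
    intervalIntegral.integral_const_mul]
  simp
  ring

lemma YB_zero (ν p q : ℝ) : YB μ ν p q 0 = p := by
  rw [YB_int, cl_of_mem ⟨le_rfl, zero_le_one⟩]; simp

lemma GB_zero (ν p q : ℝ) : GB μ ν p q 0 = q := by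
  unfold GB
  rw [cl_of_mem ⟨le_rfl, zero_le_one⟩]; simp

/-- solutions -/
def Sol (ν : ℝ) (y g : ℝ → ℝ) : Prop :=
  ContinuousOn y (Set.Icc 0 1) ∧ ContinuousOn g (Set.Icc 0 1) ∧
    (∀ x ∈ Set.Icc (0 : ℝ) 1, y x = y 0 + ∫ t in (0 : ℝ)..x, g t) ∧
    (∀ x ∈ Set.Icc (0 : ℝ) 1, g x = g 0 - ν * ∫ t in Set.Icc (0 : ℝ) x, y t ∂μ)

lemma sol_exists (ν p q : ℝ) : Sol μ ν (YB μ ν p q) (GB μ ν p q) := by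
  refine ⟨(YB μ ν p q).continuous.continuousOn, (GB_cont μ ν p q).continuousOn, ?_, ?_⟩
  · intro x hx
    rw [YB_zero, YB_int, cl_of_mem hx]
  · intro x hx
    rw [GB_zero, GB, cl_of_mem hx]

lemma sol_unique (ν : ℝ) (y g : ℝ → ℝ) (h : Sol μ ν y g) :
    ∀ x ∈ Icc (0:ℝ) 1, y x = YB μ ν (y 0) (g 0) x ∧ g x = GB μ ν (y 0) (g 0) x := by
  obtain ⟨hy, hg, hy1, hg1⟩ := h
  have hyc : Continuous fun x => y (cl x) := hy.comp_continuous cl_cont cl_mem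
  obtain ⟨C, hC⟩ := isCompact_Icc.exists_bound_of_continuousOn hy
  let f : ℝ →ᵇ ℝ := BoundedContinuousFunction.ofNormedAddCommGroup (fun x => y (cl x)) hyc C
    (fun x => hC _ (cl_mem x))
  have hf : ∀ x, f x = y (cl x) := fun x => rfl
  have hin : ∀ x ∈ Icc (0:ℝ) 1, ∫ t in Icc 0 x, f t ∂μ = ∫ t in Icc 0 x, y t ∂μ := by
    intro x hx
    apply setIntegral_congr_fun measurableSet_Icc
    intro t ht
    simp only [hf]
    rw [cl_of_mem ⟨ht.1, ht.2.trans hx.2⟩]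
  have hfeq : f = YB μ ν (y 0) (g 0) := by
    apply YB_unique
    intro x
    rw [hf, hy1 _ (cl_mem x)]
    have : ∫ t in (0:ℝ)..cl x, g t =
        ∫ t in (0:ℝ)..cl x, (g 0 - ν * ∫ s in Icc (0:ℝ) (cl t), f s ∂μ) := by
      apply intervalIntegral.integral_congr
      intro t ht
      rw [uIcc_of_le (cl_mem x).1] at ht
      have ht' : t ∈ Icc (0:ℝ) 1 := ⟨ht.1, ht.2.trans (cl_mem x).2⟩
      simp only
      rw [cl_of_mem ht', hin t ht', hg1 t ht']
    rw [this, intervalIntegral.integral_sub (by simp) ((J_cont_mul μ _ ν).intervalIntegrable _ _),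
    intervalIntegral.integral_const_mul]
    simp [Kfun]
    ring
  intro x hx
  constructor
  · rw [← hfeq, hf, cl_of_mem hx]
  · rw [GB, ← hfeq, cl_of_mem hx, hin x hx, hg1 x hx]
end meas
section meas2
variable (μ : Measure ℝ) [IsProbabilityMeasure μ] [NullSingletonClass μ]

lemma fub (f : ℝ →ᵇ ℝ) (w : ℝ → ℝ) (hw : Continuous w) :
    ∫ t in (0:ℝ)..1, (∫ s in Icc (0:ℝ) (cl t), f s ∂μ) * w t =
      ∫ s in Icc (0:ℝ) 1, f s * (∫ t in s..1, w t) ∂μ := by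
  have hint : Integrable (fun z : ℝ × ℝ => w z.1 * f z.2)
      ((volume.restrict (Icc (0:ℝ) 1)).prod (μ.restrict (Icc (0:ℝ) 1))) :=
    Integrable.mul_prod (hw.integrableOn_Icc) (f.integrable μ).integrableOn
  have hS : MeasurableSet {z : ℝ × ℝ | z.2 ≤ z.1} :=
    measurableSet_le measurable_snd measurable_fst
  have hint2 := hint.indicator hS
  have hsw := integral_integral_swap
    (f := fun t s => Set.indicator {z : ℝ × ℝ | z.2 ≤ z.1} (fun z : ℝ × ℝ => w z.1 * f z.2) (t, s)) hint2
  have hL : ∫ t in (0:ℝ)..1, (∫ s in Icc (0:ℝ) (cl t), f s ∂μ) * w t =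
      ∫ t in Icc (0:ℝ) 1, ∫ s in Icc (0:ℝ) 1,
        Set.indicator {z : ℝ × ℝ | z.2 ≤ z.1} (fun z : ℝ × ℝ => w z.1 * f z.2) (t, s) ∂μ := by
    rw [intervalIntegral.integral_of_le zero_le_one, ← integral_Icc_eq_integral_Ioc]
    apply setIntegral_congr_fun measurableSet_Icc
    intro t ht
    simp only
    rw [cl_of_mem ht]
    have e : ∀ s, Set.indicator {z : ℝ × ℝ | z.2 ≤ z.1} (fun z : ℝ × ℝ => w z.1 * f z.2) (t, s) =
        Set.indicator (Iic t) (fun s => w t * f s) s := by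
      intro s; simp [Set.indicator]
    simp only [e]
    rw [setIntegral_indicator measurableSet_Iic, integral_const_mul, mul_comm]
    congr 2
    congr 1
    ext s
    simp only [mem_Icc, mem_inter_iff, mem_Iic]
    constructor
    · rintro ⟨h1, h2⟩; exact ⟨⟨h1, h2.trans ht.2⟩, h2⟩
    · rintro ⟨⟨h1, _⟩, h2⟩; exact ⟨h1, h2⟩
  have hR : ∫ s in Icc (0:ℝ) 1, f s * (∫ t in s..1, w t) ∂μ =
      ∫ s in Icc (0:ℝ) 1, ∫ t in Icc (0:ℝ) 1,
        Set.indicator {z : ℝ × ℝ | z.2 ≤ z.1} (fun z : ℝ × ℝ => w z.1 * f z.2) (t, s) ∂volume ∂μ := by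
    apply setIntegral_congr_fun measurableSet_Icc
    intro s hs
    simp only
    have e : ∀ t, Set.indicator {z : ℝ × ℝ | z.2 ≤ z.1} (fun z : ℝ × ℝ => w z.1 * f z.2) (t, s) =
        Set.indicator (Ici s) (fun t => w t * f s) t := by
      intro s; simp [Set.indicator]
    simp only [e]
    rw [setIntegral_indicator measurableSet_Ici, integral_mul_const, mul_comm,
      intervalIntegral.integral_of_le hs.2, ← integral_Icc_eq_integral_Ioc]
    congr 3
    ext t
    simp only [mem_Icc, mem_inter_iff, mem_Ici]
    constructor
    · rintro ⟨h1, h2⟩; exact ⟨⟨hs.1.trans h1, h2⟩, h1⟩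
    · rintro ⟨⟨_, h1⟩, h2⟩; exact ⟨h2, h1⟩
  rw [hL, hR, hsw]

noncomputable def II (f : ℝ →ᵇ ℝ) : ℝ := ∫ s in Icc (0:ℝ) 1, f s ∂μ

lemma II_cont : Continuous (II μ) := by
  have h : LipschitzWith 1 (II μ) := by
    apply LipschitzWith.of_dist_le_mul
    intro f g
    have e : II μ f - II μ g = ∫ s in Icc (0:ℝ) 1, (f - g) s ∂μ := by
      unfold II
      rw [← integral_sub (f.integrable μ).integrableOn (g.integrable μ).integrableOn]
      rfl
    rw [Real.dist_eq, e, NNReal.coe_one, one_mul, dist_eq_norm]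
    apply inner_bound μ _ _ _ (norm_nonneg _)
    intro s _
    exact (f - g).norm_coe_le_norm s
  exact h.continuous

lemma II_smul (c : ℝ) (f : ℝ →ᵇ ℝ) : II μ (c • f) = c * II μ f := integral_const_mul _ _
lemma II_add (f g : ℝ →ᵇ ℝ) : II μ (f + g) = II μ f + II μ g :=
  integral_add (f.integrable μ).integrableOn (g.integrable μ).integrableOn

lemma YB_lin (ν p q : ℝ) : YB μ ν p q = p • YB μ ν 1 0 + q • YB μ ν 0 1 := by
  simp [YB]

lemma YB_lin' (ν p q x : ℝ) : YB μ ν p q x = p * YB μ ν 1 0 x + q * YB μ ν 0 1 x := by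
  rw [YB_lin]; rfl

lemma GB_one (ν p q : ℝ) : GB μ ν p q 1 = q - ν * II μ (YB μ ν p q) := by
  rw [GB, cl_of_mem ⟨zero_le_one, le_rfl⟩]; rfl

lemma GB_lin (ν p q : ℝ) : GB μ ν p q 1 = p * GB μ ν 1 0 1 + q * GB μ ν 0 1 1 := by
  rw [GB_one, GB_one, GB_one, YB_lin, II_add, II_smul, II_smul]
  ring

lemma parts (ν p q ν' p' q' : ℝ) : GB μ ν p q 1 * YB μ ν' p' q' 1 - q * p' =
    (∫ t in (0:ℝ)..1, GB μ ν p q t * GB μ ν' p' q' t) - ν * II μ (YB μ ν p q * YB μ ν' p' q') := by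
  have h1 := fub μ (YB μ ν p q) (GB μ ν' p' q') (GB_cont μ _ _ _)
  have hc := GB_cont μ ν' p' q'
  have h01 : (1:ℝ) ∈ Icc (0:ℝ) 1 := ⟨zero_le_one, le_rfl⟩
  have hy : ∀ s ∈ Icc (0:ℝ) 1, ∫ t in s..1, GB μ ν' p' q' t = YB μ ν' p' q' 1 - YB μ ν' p' q' s := by
    intro s hs
    rw [YB_int μ _ _ _ 1, YB_int μ _ _ _ s, cl_of_mem hs, cl_of_mem h01]
    rw [← intervalIntegral.integral_interval_sub_left (hc.intervalIntegrable 0 1) (hc.intervalIntegrable 0 s)]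
    ring
  have h2 : ∫ s in Icc (0:ℝ) 1, YB μ ν p q s * (∫ t in s..1, GB μ ν' p' q' t) ∂μ =
      YB μ ν' p' q' 1 * II μ (YB μ ν p q) - II μ (YB μ ν p q * YB μ ν' p' q') := by
    have : ∫ s in Icc (0:ℝ) 1, YB μ ν p q s * (∫ t in s..1, GB μ ν' p' q' t) ∂μ =
        II μ (YB μ ν' p' q' 1 • YB μ ν p q + (-1:ℝ) • (YB μ ν p q * YB μ ν' p' q')) := by
      apply setIntegral_congr_fun measurableSet_Icc
      intro s hs
      simp only
      rw [hy s hs]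
      simp
      ring
    rw [this, II_add, II_smul, II_smul]
    ring
  have h3 : ∫ t in (0:ℝ)..1, GB μ ν p q t * GB μ ν' p' q' t =
      q * (YB μ ν' p' q' 1 - p') - ν * ∫ t in (0:ℝ)..1, (∫ s in Icc (0:ℝ) (cl t), YB μ ν p q s ∂μ) * GB μ ν' p' q' t := by
    have e : ∀ t, GB μ ν p q t * GB μ ν' p' q' t =
      q * GB μ ν' p' q' t - ν * ((∫ s in Icc (0:ℝ) (cl t), YB μ ν p q s ∂μ) * GB μ ν' p' q' t) := by
      intro t; rw [GB]; ring
    simp only [e]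
    have c1 : Continuous fun t => q * GB μ ν' p' q' t := continuous_const.mul hc
    have c2 : Continuous fun t => ν * ((∫ s in Icc (0:ℝ) (cl t), YB μ ν p q s ∂μ) * GB μ ν' p' q' t) :=
      continuous_const.mul ((J_cont μ _).mul hc)
    rw [intervalIntegral.integral_sub (c1.intervalIntegrable _ _) (c2.intervalIntegrable _ _),
      intervalIntegral.integral_const_mul, intervalIntegral.integral_const_mul,
      hy 0 ⟨le_rfl, zero_le_one⟩, YB_zero]
  rw [h3, h1, h2, GB_one]
  ring

lemma lagrange (ν p q ν' p' q' : ℝ) :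
    GB μ ν p q 1 * YB μ ν' p' q' 1 - YB μ ν p q 1 * GB μ ν' p' q' 1 - (q * p' - p * q') =
      (ν' - ν) * II μ (YB μ ν p q * YB μ ν' p' q') := by
  have h1 := parts μ ν p q ν' p' q'
  have h2 := parts μ ν' p' q' ν p q
  rw [mul_comm (YB μ ν' p' q')] at h2
  have h3 : ∫ t in (0:ℝ)..1, GB μ ν p q t * GB μ ν' p' q' t = ∫ t in (0:ℝ)..1, GB μ ν' p' q' t * GB μ ν p q t := by
    congr 1; ext t; ring
  linarith

lemma II_sq_nonneg (f : ℝ →ᵇ ℝ) : 0 ≤ II μ (f * f) := by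
  apply integral_nonneg
  intro x
  exact mul_self_nonneg (f x)

lemma II_pos (h0 : μ (Icc (0:ℝ) 1)ᶜ = 0) (ν p q : ℝ) (hpq : p ≠ 0 ∨ q ≠ 0) :
    0 < II μ (YB μ ν p q * YB μ ν p q) := by
  rcases (II_sq_nonneg μ (YB μ ν p q)).lt_or_eq with h | h
  · exact h
  exfalso
  set y := YB μ ν p q with hy
  have hae : (fun x => (y * y) x) =ᵐ[μ.restrict (Icc 0 1)] 0 := by
    refine (integral_eq_zero_iff_of_nonneg ?_ ((y * y).integrable μ).integrableOn).mp h.symm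
    intro x; exact mul_self_nonneg (y x)
  have hae2 : (fun x => y x) =ᵐ[μ.restrict (Icc 0 1)] 0 := by
    filter_upwards [hae] with x hx
    exact mul_self_eq_zero.mp hx
  have hJ : ∀ t ∈ Icc (0:ℝ) 1, ∫ s in Icc (0:ℝ) t, y s ∂μ = 0 := by
    intro t ht
    have : (fun x => y x) =ᵐ[μ.restrict (Icc 0 t)] 0 :=
      ae_restrict_of_ae_restrict_of_subset (Icc_subset_Icc_right ht.2) hae2
    rw [integral_congr_ae this]; simp
  have hK : ∀ x, Kfun μ y x = 0 := by
    intro x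
    unfold Kfun
    simp [hJ _ (cl_mem _)]
  have hyx : ∀ x ∈ Icc (0:ℝ) 1, y x = p + q * x := by
    intro x hx
    rw [hy, YB_fix, ← hy, hK, cl_of_mem hx]; ring
  have hsub : {x | p + q * x = 0} ⊆ {-p/q} ∨ {x | p + q * x = 0} ⊆ ∅ := by
    by_cases hq : q = 0
    · right
      intro x hx
      simp [hq] at hx
      tauto
    · left
      intro x hx
      have hx' : p + q * x = 0 := hx
      simp only [mem_singleton_iff]
      field_simp
      linarith
  have hnull : μ {x | p + q * x = 0} = 0 := by
    rcases hsub with h | h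
    · exact measure_mono_null h (measure_singleton _)
    · exact measure_mono_null h measure_empty
  have hmem : ∀ᵐ x ∂μ, x ∈ Icc (0:ℝ) 1 := h0
  have h3 : ∀ᵐ x ∂μ, p + q * x = 0 := by
    have h4 := (ae_restrict_iff' measurableSet_Icc).mp hae2
    filter_upwards [h4, hmem] with x hx hm
    rw [← hyx x hm]; exact hx hm
  have h5 : ∀ᵐ x ∂μ, ¬ (p + q * x = 0) := by
    rw [ae_iff]; simpa using hnull
  have h6 : ∀ᵐ x ∂μ, False := by
    filter_upwards [h3, h5] with x a b using b a
  have h7 : μ univ = 0 := by simpa [ae_iff] using h6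
  simp at h7

lemma YB_null (ν x : ℝ) : YB μ ν 0 0 x = 0 := by simp [YB]

lemma eigen_pos (γ lam : ℝ) (hγ : 0 < γ) (h : IsEigen μ γ γ lam) : 0 < lam := by
  obtain ⟨y, g, hy, hg, ⟨x0, hx0, hne⟩, hy1, hg1, b0, b1⟩ := h
  have hs := sol_unique μ lam y g ⟨hy, hg, hy1, hg1⟩
  have h01 : (1:ℝ) ∈ Icc (0:ℝ) 1 := ⟨zero_le_one, le_rfl⟩
  have e1 := hs 1 h01
  have hp := parts μ lam (y 0) (g 0) lam (y 0) (g 0)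
  rw [← e1.1, ← e1.2] at hp
  have hy0 : y 0 ≠ 0 := by
    intro h0
    rw [h0] at b0
    have : g 0 = 0 := by linarith
    rw [(hs x0 hx0).1, h0, this, YB_null] at hne
    exact hne rfl
  have hn := II_sq_nonneg μ (YB μ lam (y 0) (g 0))
  have hG : 0 ≤ ∫ t in (0:ℝ)..1, GB μ lam (y 0) (g 0) t * GB μ lam (y 0) (g 0) t :=
    intervalIntegral.integral_nonneg zero_le_one fun t _ => mul_self_nonneg _
  have e2 : g 1 = - γ * y 1 := by linarith
  have e3 : g 0 = γ * y 0 := by linarith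
  by_contra hlam
  push Not at hlam
  have := mul_nonneg (neg_nonneg.mpr hlam) hn
  have h5 : g 1 * y 1 - g 0 * y 0 < 0 := by
    rw [e2, e3]
    have := mul_pos hγ (mul_self_pos.mpr hy0)
    have := mul_nonneg hγ.le (mul_self_nonneg (y 1))
    nlinarith
  linarith

lemma YB_at_zero (p q : ℝ) : YB μ 0 p q 1 = p + q := by
  rw [YB_fix, cl_of_mem ⟨zero_le_one, le_rfl⟩]; ring
lemma GB_at_zero (p q : ℝ) : GB μ 0 p q 1 = q := by
  rw [GB]; ring
end meas2
section coeff
variable (μ : Measure ℝ) [IsProbabilityMeasure μ] [NullSingletonClass μ]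

noncomputable def pM (h ν : ℝ) : ℝ := YB μ ν 1 0 1 + h * GB μ ν 1 0 1
noncomputable def qM (h ν : ℝ) : ℝ :=
  h * YB μ ν 1 0 1 + YB μ ν 0 1 1 + h * (h * GB μ ν 1 0 1 + GB μ ν 0 1 1)
noncomputable def rM (_h ν : ℝ) : ℝ := GB μ ν 1 0 1
noncomputable def tM (h ν : ℝ) : ℝ := h * GB μ ν 1 0 1 + GB μ ν 0 1 1

lemma YB_one_cont {X : Type*} [TopologicalSpace X] {ν p q : X → ℝ} (hν : Continuous ν)
    (hp : Continuous p) (hq : Continuous q) : Continuous fun x => YB μ (ν x) (p x) (q x) 1 :=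
  (YB_cont μ hν hp hq).eval_const 1

lemma GB_one_cont {X : Type*} [TopologicalSpace X] {ν p q : X → ℝ} (hν : Continuous ν)
    (hp : Continuous p) (hq : Continuous q) : Continuous fun x => GB μ (ν x) (p x) (q x) 1 := by
  simp only [GB_one]
  exact hq.sub (hν.mul ((II_cont μ).comp (YB_cont μ hν hp hq)))

lemma y1c (p q : ℝ) : Continuous fun ν => YB μ ν p q 1 :=
  YB_one_cont μ continuous_id continuous_const continuous_const
lemma g1c (p q : ℝ) : Continuous fun ν => GB μ ν p q 1 :=
  GB_one_cont μ continuous_id continuous_const continuous_const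

lemma pM_cont (h : ℝ) : Continuous (pM μ h) := (y1c μ 1 0).add (continuous_const.mul (g1c μ 1 0))
lemma rM_cont (h : ℝ) : Continuous (rM μ h) := g1c μ 1 0
lemma tM_cont (h : ℝ) : Continuous (tM μ h) := (continuous_const.mul (g1c μ 1 0)).add (g1c μ 0 1)
lemma qM_cont (h : ℝ) : Continuous (qM μ h) :=
  ((continuous_const.mul (y1c μ 1 0)).add (y1c μ 0 1)).add (continuous_const.mul (tM_cont μ h))

noncomputable def DM (h ν : ℝ) (k : ℕ) : ℝ × ℝ := DE (pM μ h ν) (qM μ h ν) (rM μ h ν) (tM μ h ν) k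

lemma DM_fst (h ν : ℝ) (k : ℕ) : (DM μ h ν (k+1)).1 =
    YB μ ν ((DM μ h ν k).1 + h * (DM μ h ν k).2) (DM μ h ν k).2 1 +
    h * GB μ ν ((DM μ h ν k).1 + h * (DM μ h ν k).2) (DM μ h ν k).2 1 := by
  rw [YB_lin', GB_lin]
  have : (DM μ h ν (k+1)).1 = pM μ h ν * (DM μ h ν k).1 + qM μ h ν * (DM μ h ν k).2 := rfl
  rw [this, pM, qM]; ring

lemma DM_snd (h ν : ℝ) (k : ℕ) : (DM μ h ν (k+1)).2 =
    GB μ ν ((DM μ h ν k).1 + h * (DM μ h ν k).2) (DM μ h ν k).2 1 := by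
  rw [GB_lin]
  have : (DM μ h ν (k+1)).2 = rM μ h ν * (DM μ h ν k).1 + tM μ h ν * (DM μ h ν k).2 := rfl
  rw [this, rM, tM]; ring

lemma DM_zero (h ν : ℝ) : DM μ h ν 0 = (0, 1) := rfl

lemma DM_one (h ν : ℝ) : DM μ h ν 1 = (qM μ h ν, tM μ h ν) := by
  have : DM μ h ν 1 = (pM μ h ν * 0 + qM μ h ν * 1, rM μ h ν * 0 + tM μ h ν * 1) := rfl
  rw [this]; simp

lemma DM_cont (h : ℝ) (k : ℕ) : Continuous fun ν => DM μ h ν k := by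
  induction k with
  | zero => exact continuous_const
  | succ k ih =>
    exact (((pM_cont μ h).mul ih.fst).add ((qM_cont μ h).mul ih.snd)).prodMk
      (((rM_cont μ h).mul ih.fst).add ((tM_cont μ h).mul ih.snd))

noncomputable def YD (h ν : ℝ) (j : ℕ) : ℝ →ᵇ ℝ :=
  YB μ ν ((DM μ h ν j).1 + h * (DM μ h ν j).2) (DM μ h ν j).2

lemma YD_cont (h : ℝ) (j : ℕ) : Continuous fun ν => YD μ h ν j := by
  have := DM_cont μ h j
  exact YB_cont μ continuous_id (this.fst.add (continuous_const.mul this.snd)) this.snd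

lemma iter (h ν ν' : ℝ) (k : ℕ) :
    (DM μ h ν k).2 * (DM μ h ν' k).1 - (DM μ h ν k).1 * (DM μ h ν' k).2 =
      (ν' - ν) * ∑ j ∈ Finset.range k, II μ (YD μ h ν j * YD μ h ν' j) := by
  induction k with
  | zero => simp [DM_zero]
  | succ k ih =>
    rw [Finset.sum_range_succ, mul_add, ← ih]
    have := lagrange μ ν ((DM μ h ν k).1 + h * (DM μ h ν k).2) (DM μ h ν k).2
      ν' ((DM μ h ν' k).1 + h * (DM μ h ν' k).2) (DM μ h ν' k).2
    unfold YD
    rw [← this, DM_fst, DM_snd, DM_fst, DM_snd]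
    ring

lemma cross (h0 : μ (Icc (0:ℝ) 1)ᶜ = 0) (h : ℝ) (k : ℕ) (ν0 : ℝ) (hz : (DM μ h ν0 (k+1)).1 = 0) :
    ∃ F : ℝ → ℝ, Continuous F ∧ 0 < F ν0 ∧
      ∀ ν, (DM μ h ν0 (k+1)).2 * (DM μ h ν (k+1)).1 = (ν - ν0) * F ν := by
  refine ⟨fun ν => ∑ j ∈ Finset.range (k+1), II μ (YD μ h ν0 j * YD μ h ν j), ?_, ?_, ?_⟩
  · apply continuous_finsetSum
    intro j _
    exact (II_cont μ).comp (continuous_const.mul (YD_cont μ h j))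
  · apply Finset.sum_pos'
    · intro j _; exact II_sq_nonneg μ _
    · refine ⟨0, by simp, ?_⟩
      apply II_pos μ h0
      right
      simp [DM_zero]
  · intro ν
    rw [← iter, hz]; ring

lemma det_one (h ν : ℝ) : pM μ h ν * tM μ h ν - qM μ h ν * rM μ h ν = 1 := by
  have := lagrange μ ν 1 0 ν 0 1
  unfold pM tM qM rM
  linear_combination -this

lemma q_zero (h : ℝ) : qM μ h 0 = 1 + 2 * h := by
  simp only [qM, YB_at_zero, GB_at_zero]; ring
lemma tr_zero (h : ℝ) : pM μ h 0 + tM μ h 0 = 2 := by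
  simp only [pM, tM, YB_at_zero, GB_at_zero]; ring

lemma mu_iff (h ν : ℝ) (hh : 0 < h) : IsEigen μ (1/h) (1/h) ν ↔ qM μ h ν = 0 := by
  have h01 : (1:ℝ) ∈ Icc (0:ℝ) 1 := ⟨zero_le_one, le_rfl⟩
  have hq : qM μ h ν = YB μ ν h 1 1 + h * GB μ ν h 1 1 := by
    rw [YB_lin', GB_lin, qM]; ring
  constructor
  · rintro ⟨y, g, hy, hg, ⟨x0, hx0, hne⟩, hy1, hg1, b0, b1⟩
    have hs := sol_unique μ ν y g ⟨hy, hg, hy1, hg1⟩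
    have e0 : y 0 = h * g 0 := by field_simp at b0; linarith
    have hg0 : g 0 ≠ 0 := by
      intro h0
      rw [(hs x0 hx0).1, e0, h0, mul_zero, YB_null] at hne
      exact hne rfl
    have e1 := hs 1 h01
    rw [e0] at e1
    have e2 : y 1 = g 0 * YB μ ν h 1 1 := by rw [e1.1, YB_lin', YB_lin' μ ν h 1]; ring
    have e3 : g 1 = g 0 * GB μ ν h 1 1 := by rw [e1.2, GB_lin, GB_lin μ ν h 1]; ring
    have e4 : y 1 + h * g 1 = 0 := by field_simp at b1; linarith
    rw [e2, e3] at e4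
    rw [hq]
    apply mul_left_cancel₀ hg0
    linarith
  · intro hz
    have hs := sol_exists μ ν h 1
    refine ⟨YB μ ν h 1, GB μ ν h 1, hs.1, hs.2.1, ⟨0, ⟨le_rfl, zero_le_one⟩, ?_⟩, hs.2.2.1, hs.2.2.2, ?_, ?_⟩
    · rw [YB_zero]; exact hh.ne'
    · rw [YB_zero, GB_zero]; field_simp; simp
    · rw [hq] at hz; field_simp; linarith
end coeff
section chain
variable (μ : Measure ℝ) [IsProbabilityMeasure μ] [NullSingletonClass μ]

lemma chain (κ : ℕ) (a b h lam : ℝ) (ha : 0 < a) (hh : h = b / (2 * a)) (y g : ℝ → ℝ)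
    (hself : ∀ k : ℕ, k < κ → Sol μ (a * lam / κ) (fun x => y ((k:ℝ) * (a + b) + a * x))
      (fun x => a * g ((k:ℝ) * (a + b) + a * x)))
    (hgap : ∀ k : ℕ, k + 1 < κ → g (((k + 1 : ℕ) : ℝ) * (a + b)) = g ((k:ℝ) * (a + b) + a) ∧
      y (((k + 1 : ℕ) : ℝ) * (a + b)) = y ((k:ℝ) * (a + b) + a) + b * g ((k:ℝ) * (a + b) + a))
    (h0 : y 0 = h * (a * g 0)) : ∀ k : ℕ, k < κ →
    (y ((k:ℝ) * (a + b) + a) + h * (a * g ((k:ℝ) * (a + b) + a)) = a * g 0 * (DM μ h (a * lam / κ) (k+1)).1 ∧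
     a * g ((k:ℝ) * (a + b) + a) = a * g 0 * (DM μ h (a * lam / κ) (k+1)).2) := by
  have h01 : (1:ℝ) ∈ Icc (0:ℝ) 1 := ⟨zero_le_one, le_rfl⟩
  set ν := a * lam / κ with hν
  have step : ∀ k : ℕ, k < κ →
      y ((k:ℝ) * (a + b)) = a * g 0 * ((DM μ h ν k).1 + h * (DM μ h ν k).2) →
      a * g ((k:ℝ) * (a + b)) = a * g 0 * (DM μ h ν k).2 →
      (y ((k:ℝ) * (a + b) + a) + h * (a * g ((k:ℝ) * (a + b) + a)) = a * g 0 * (DM μ h ν (k+1)).1 ∧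
     a * g ((k:ℝ) * (a + b) + a) = a * g 0 * (DM μ h ν (k+1)).2) := by
    intro k hk e1 e2
    have hs := sol_unique μ ν _ _ (hself k hk) 1 h01
    simp only [mul_one, mul_zero, add_zero] at hs
    rw [e1, e2] at hs
    have i1 : y ((k:ℝ) * (a + b) + a) = a * g 0 * YB μ ν ((DM μ h ν k).1 + h * (DM μ h ν k).2) (DM μ h ν k).2 1 := by
      rw [hs.1, YB_lin', YB_lin' μ ν ((DM μ h ν k).1 + h * (DM μ h ν k).2)]; ring
    have i2 : a * g ((k:ℝ) * (a + b) + a) = a * g 0 * GB μ ν ((DM μ h ν k).1 + h * (DM μ h ν k).2) (DM μ h ν k).2 1 := by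
      rw [hs.2, GB_lin, GB_lin μ ν ((DM μ h ν k).1 + h * (DM μ h ν k).2)]; ring
    rw [DM_fst, DM_snd, i2, i1]
    constructor
    · ring
    · rfl
  intro k
  induction k with
  | zero =>
    intro hk
    apply step 0 hk
    · simp [DM_zero, h0]; ring
    · simp [DM_zero]
  | succ k ih =>
    intro hk
    obtain ⟨i1, i2⟩ := ih (by omega)
    obtain ⟨g1, g2⟩ := hgap k hk
    apply step (k+1) hk
    · rw [g2]
      have hb : b = 2 * h * a := by rw [hh]; field_simp
      rw [hb] at i1 i2 ⊢
      linear_combination i1 + h * i2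
    · rw [g1]; exact i2

lemma lam_iff (κ : ℕ) (hκ : 2 ≤ κ) (a b h lam : ℝ) (ha : 0 < a) (hb : 0 < b) (hh : h = b / (2 * a))
    (hend : ((κ - 1 : ℕ) : ℝ) * (a + b) + a = 1)
    (hself : ∀ y g, Sol μ lam y g → ∀ k : ℕ, k < κ →
      Sol μ (a * lam / κ) (fun x => y ((k:ℝ) * (a + b) + a * x))
      (fun x => a * g ((k:ℝ) * (a + b) + a * x)))
    (hgap : ∀ y g, Sol μ lam y g → ∀ k : ℕ, k + 1 < κ →
      g (((k + 1 : ℕ) : ℝ) * (a + b)) = g ((k:ℝ) * (a + b) + a) ∧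
      y (((k + 1 : ℕ) : ℝ) * (a + b)) = y ((k:ℝ) * (a + b) + a) + b * g ((k:ℝ) * (a + b) + a)) :
    IsEigen μ (2/b) (2/b) lam ↔ (DM μ h (a * lam / κ) κ).1 = 0 := by
  have hk1 : κ - 1 + 1 = κ := by omega
  have hha : h * a = b / 2 := by rw [hh]; field_simp
  constructor
  · rintro ⟨y, g, hy, hg, ⟨x0, hx0, hne⟩, hy1, hg1, b0, b1⟩
    have hS : Sol μ lam y g := ⟨hy, hg, hy1, hg1⟩
    have hs := sol_unique μ lam y g hS
    have e0 : y 0 = h * (a * g 0) := by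
      rw [← mul_assoc, hha]; field_simp at b0; linarith
    have hg0 : g 0 ≠ 0 := by
      intro h0
      rw [(hs x0 hx0).1, e0, h0, mul_zero, mul_zero, YB_null] at hne
      exact hne rfl
    have hc := (chain μ κ a b h lam ha hh y g (hself y g hS) (hgap y g hS) e0 (κ - 1) (by omega)).1
    rw [hend, hk1, ← mul_assoc, hha] at hc
    have e4 : y 1 + b / 2 * g 1 = 0 := by field_simp at b1; linarith
    rw [e4] at hc
    have : a * g 0 ≠ 0 := mul_ne_zero ha.ne' hg0
    exact (mul_eq_zero.mp hc.symm).resolve_left this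
  · intro hz
    have hs := sol_exists μ lam (b/2) 1
    refine ⟨YB μ lam (b/2) 1, GB μ lam (b/2) 1, hs.1, hs.2.1, ⟨0, ⟨le_rfl, zero_le_one⟩, ?_⟩, hs.2.2.1, hs.2.2.2, ?_, ?_⟩
    · rw [YB_zero]; positivity
    · rw [YB_zero, GB_zero]; field_simp; simp
    · have hc := (chain μ κ a b h lam ha hh _ _ (hself _ _ hs) (hgap _ _ hs)
        (by rw [YB_zero, GB_zero, ← mul_assoc, hha]; ring) (κ - 1) (by omega)).1
      rw [hend, hk1, hz, ← mul_assoc, hha] at hc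
      field_simp
      linarith
end chain

section self
lemma prob_of (P : ℝ → ℝ) (h1 : P 1 = 1) (μ : Measure ℝ)
    (hμ : ∀ x ∈ Set.Icc (0 : ℝ) 1, μ (Set.Icc 0 x) = ENNReal.ofReal (P x))
    (hμc : μ (Set.Icc (0 : ℝ) 1)ᶜ = 0) : IsProbabilityMeasure μ := by
  constructor
  rw [← measure_add_measure_compl (measurableSet_Icc (a := (0:ℝ)) (b := 1)), hμc,
    hμ 1 ⟨zero_le_one, le_rfl⟩, h1]
  simp

lemma meas_Ioc (P : ℝ → ℝ) (h0 : P 0 = 0) (hPmono : MonotoneOn P (Set.Icc 0 1))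
    (μ : Measure ℝ) [IsProbabilityMeasure μ]
    (hμ : ∀ x ∈ Set.Icc (0 : ℝ) 1, μ (Set.Icc 0 x) = ENNReal.ofReal (P x))
    (u v : ℝ) (hu : 0 ≤ u) (huv : u ≤ v) (hv : v ≤ 1) : μ.real (Ioc u v) = P v - P u := by
  have hP : ∀ x ∈ Icc (0:ℝ) 1, μ.real (Icc 0 x) = P x := by
    intro x hx
    rw [Measure.real, hμ x hx, ENNReal.toReal_ofReal]
    rw [← h0]; exact hPmono ⟨le_rfl, zero_le_one⟩ hx hx.1
  have e : Ioc u v = Icc 0 v \ Icc 0 u := by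
    ext x
    simp only [mem_Ioc, Set.mem_sdiff, mem_Icc, not_and, not_le]
    constructor
    · rintro ⟨h1, h2⟩; exact ⟨⟨hu.trans h1.le, h2⟩, fun _ => h1⟩
    · rintro ⟨⟨h1, h2⟩, h3⟩; exact ⟨h3 h1, h2⟩
  rw [e, measureReal_sdiff (Icc_subset_Icc_right huv) measurableSet_Icc,
    hP v ⟨hu.trans huv, hv⟩, hP u ⟨hu, huv.trans hv⟩]

lemma noatom_of (P : ℝ → ℝ) (h0 : P 0 = 0) (hc : ContinuousOn P (Icc 0 1)) (hPmono : MonotoneOn P (Set.Icc 0 1))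
    (μ : Measure ℝ) [IsProbabilityMeasure μ]
    (hμ : ∀ x ∈ Set.Icc (0 : ℝ) 1, μ (Set.Icc 0 x) = ENNReal.ofReal (P x))
    (hμc : μ (Set.Icc (0 : ℝ) 1)ᶜ = 0) : NullSingletonClass μ := by
  constructor
  intro x
  by_cases hx : x ∈ Icc (0:ℝ) 1
  swap
  · exact measure_mono_null (by simpa using hx) hμc
  rcases hx.1.eq_or_lt with h | h
  · subst h
    have := hμ 0 hx
    rw [h0] at this
    simpa using this
  · have hle : ∀ᶠ z in 𝓝[<] x, μ.real {x} ≤ P x - P z := by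
      have : Ioo 0 x ∈ 𝓝[<] x := Ioo_mem_nhdsLT h
      filter_upwards [this] with z hz
      rw [← meas_Ioc P h0 hPmono μ hμ z x hz.1.le hz.2.le hx.2]
      refine measureReal_mono ?_ (measure_ne_top _ _)
      intro w hw
      rw [mem_singleton_iff.mp hw]
      exact ⟨hz.2, le_rfl⟩
    have ht : Tendsto (fun z => P x - P z) (𝓝[<] x) (𝓝 (P x - P x)) := by
      apply tendsto_const_nhds.sub
      have h2 := hc x hx
      apply h2.mono_left
      apply nhdsWithin_le_of_mem
      filter_upwards [Ioo_mem_nhdsLT h] with z hz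
      exact ⟨hz.1.le, hz.2.le.trans hx.2⟩
    have h3 := ge_of_tendsto ht hle
    rw [sub_self] at h3
    have h4 : μ.real {x} = 0 := le_antisymm h3 measureReal_nonneg
    exact (measureReal_eq_zero_iff).mp h4

lemma self_meas (κ : ℕ) (hκ : 2 ≤ κ) (a : ℝ) (ha : 0 < a) (c : ℝ) (hc : 0 ≤ c) (hca : c + a ≤ 1)
    (P : ℝ → ℝ) (h0 : P 0 = 0) (h1 : P 1 = 1) (hPmono : MonotoneOn P (Set.Icc 0 1))
    (μ : Measure ℝ) [IsProbabilityMeasure μ] [NullSingletonClass μ]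
    (hμ : ∀ x ∈ Set.Icc (0 : ℝ) 1, μ (Set.Icc 0 x) = ENNReal.ofReal (P x))
    (hμc : μ (Set.Icc (0 : ℝ) 1)ᶜ = 0)
    (hs : ∃ d : ℝ, ∀ x ∈ Set.Icc (0 : ℝ) 1, (κ : ℝ) * P (c + a * x) = P x + d) :
    (κ : NNReal) • μ.restrict (Icc c (c + a)) = μ.map (fun x => c + a * x) := by
  obtain ⟨d, hd⟩ := hs
  have hφ : Measurable (fun x : ℝ => c + a * x) := by fun_prop
  have hPc : (κ:ℝ) * P c = d := by
    have := hd 0 ⟨le_rfl, zero_le_one⟩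
    simpa [h0] using this
  have hdiff : ∀ x ∈ Icc (0:ℝ) 1, (κ:ℝ) * μ.real (Ioc c (c + a * x)) = μ.real (Icc 0 x) := by
    intro x hx
    have hxa : a * x ≤ a := by nlinarith [hx.2]
    have hxa0 : 0 ≤ a * x := mul_nonneg ha.le hx.1
    rw [meas_Ioc P h0 hPmono μ hμ c (c + a * x) hc (by linarith) (by linarith), mul_sub, hd x hx, hPc]
    rw [measureReal_congr Ioc_ae_eq_Icc.symm, meas_Ioc P h0 hPmono μ hμ 0 x le_rfl hx.1 hx.2, h0]
    ring
  have : IsFiniteMeasure (μ.map (fun x => c + a * x)) := Measure.isFiniteMeasure_map _ _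
  apply Measure.ext_of_Iic
  intro t
  rw [Measure.map_apply hφ measurableSet_Iic]
  have key : (κ:ℝ) * μ.real (Iic t ∩ Icc c (c + a)) = μ.real ((fun x => c + a * x) ⁻¹' Iic t) := by
    have hpre : ((fun x => c + a * x) ⁻¹' Iic t) = Iic ((t - c) / a) := by
      ext x
      simp only [mem_preimage, mem_Iic]
      rw [le_div_iff₀ ha]
      constructor <;> intro h <;> linarith
    rw [hpre]
    set x := (t - c) / a with hx
    have htx : t = c + a * x := by rw [hx]; field_simp; ring
    have hcap : μ.real (Iic x) = μ.real (Icc 0 1 ∩ Iic x) := by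
      have := measure_inter_add_sdiff (μ := μ) (Iic x) (measurableSet_Icc (a := (0:ℝ)) (b := 1))
      have h2 : μ (Iic x \ Icc 0 1) = 0 := measure_mono_null (fun z hz => hz.2) hμc
      rw [h2, add_zero] at this
      rw [Measure.real, Measure.real, ← this, inter_comm]
    rw [hcap]
    rcases lt_or_ge x 0 with hx0 | hx0
    · have e1 : Iic t ∩ Icc c (c + a) = ∅ := by
        ext z; simp only [mem_inter_iff, mem_Iic, mem_Icc, mem_empty_iff_false, iff_false]
        rintro ⟨i1, i2, i3⟩; nlinarith
      have e2 : Icc (0:ℝ) 1 ∩ Iic x = ∅ := by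
        ext z; simp only [mem_inter_iff, mem_Iic, mem_Icc, mem_empty_iff_false, iff_false]
        rintro ⟨⟨i1, i2⟩, i3⟩; linarith
      rw [e1, e2]; simp
    · have hm : min 1 x ∈ Icc (0:ℝ) 1 := ⟨le_min zero_le_one hx0, min_le_left _ _⟩
      have e1 : Iic t ∩ Icc c (c + a) = Icc c (c + a * min 1 x) := by
        rw [mul_min_of_nonneg _ _ ha.le, ← min_add_add_left, ← htx]
        ext z; simp only [mem_inter_iff, mem_Iic, mem_Icc, le_min_iff, mul_one]
        tauto
      have e2 : Icc (0:ℝ) 1 ∩ Iic x = Icc 0 (min 1 x) := by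
        ext z; simp only [mem_inter_iff, mem_Iic, mem_Icc, le_min_iff]
        tauto
      rw [e1, e2, ← hdiff _ hm, measureReal_congr Ioc_ae_eq_Icc]
  rw [Measure.smul_apply, Measure.restrict_apply measurableSet_Iic]
  rw [ENNReal.smul_def, smul_eq_mul]
  rw [← ENNReal.toReal_eq_toReal_iff' (ENNReal.mul_ne_top (by simp) (measure_ne_top _ _)) (measure_ne_top _ _)]
  rw [ENNReal.toReal_mul]
  simpa [Measure.real] using key
end self
section fin
variable (μ : Measure ℝ) [IsProbabilityMeasure μ] [NullSingletonClass μ]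

lemma sol_self (κ : ℕ) (hκ : 2 ≤ κ) (a c lam : ℝ) (ha : 0 < a) (hc : 0 ≤ c) (hca : c + a ≤ 1)
    (hm : (κ : NNReal) • μ.restrict (Icc c (c + a)) = μ.map (fun x => c + a * x))
    (y g : ℝ → ℝ) (h : Sol μ lam y g) :
    Sol μ (a * lam / κ) (fun x => y (c + a * x)) (fun x => a * g (c + a * x)) := by
  obtain ⟨hy, hg, hy1, hg1⟩ := h
  have hmaps : MapsTo (fun x => c + a * x) (Icc 0 1) (Icc 0 1) := by
    intro x hx
    constructor
    · have := mul_nonneg ha.le hx.1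
      simp only; linarith
    · have := mul_le_mul_of_nonneg_left hx.2 ha.le
      simp only; linarith
  have hφ : Continuous (fun x => c + a * x) := by fun_prop
  have hκ0 : (κ:ℝ) ≠ 0 := by positivity
  have hcm : c ∈ Icc (0:ℝ) 1 := ⟨hc, by linarith⟩
  refine ⟨hy.comp hφ.continuousOn hmaps, continuousOn_const.mul (hg.comp hφ.continuousOn hmaps), ?_, ?_⟩
  · intro x hx
    have hx' := hmaps hx
    simp only at hx'
    have hcx : c ≤ c + a * x := by have := mul_nonneg ha.le hx.1; linarith
    simp only [mul_zero, add_zero]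
    rw [hy1 _ hx', hy1 c hcm, intervalIntegral.integral_const_mul,
      intervalIntegral.integral_comp_add_mul _ ha.ne']
    have i1 : IntervalIntegrable g volume 0 c :=
      (hg.mono (Icc_subset_Icc_right hcm.2)).intervalIntegrable_of_Icc hc
    have i2 : IntervalIntegrable g volume c (c + a * x) :=
      (hg.mono (Icc_subset_Icc hc hx'.2)).intervalIntegrable_of_Icc hcx
    rw [← intervalIntegral.integral_add_adjacent_intervals i1 i2]
    simp only [mul_zero, add_zero, smul_eq_mul]
    field_simp
    ring
  · intro x hx
    have hx' := hmaps hx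
    simp only at hx'
    have hax := mul_nonneg ha.le hx.1
    have hax1 : a * x ≤ a := by nlinarith [hx.2]
    have hcx : c ≤ c + a * x := by linarith
    have hyi : IntegrableOn y (Icc 0 1) μ := hy.integrableOn_Icc
    simp only [mul_zero, add_zero]
    have e1 : Icc 0 (c + a * x) = Icc 0 c ∪ Ioc c (c + a * x) := (Icc_union_Ioc_eq_Icc hc hcx).symm
    have e2 : ∫ t in Icc 0 (c + a * x), y t ∂μ = ∫ t in Icc 0 c, y t ∂μ + ∫ t in Icc c (c + a * x), y t ∂μ := by
      rw [e1, setIntegral_union, integral_Icc_eq_integral_Ioc (x := c)]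
      · rw [Set.disjoint_left]
        intro z hz hz'
        exact absurd hz.2 (not_le.mpr hz'.1)
      · exact measurableSet_Ioc
      · exact hyi.mono_set (Icc_subset_Icc_right hcm.2)
      · exact hyi.mono_set (fun z hz => ⟨hc.trans hz.1.le, hz.2.trans hx'.2⟩)
    have e3 : (κ:ℝ) * ∫ t in Icc c (c + a * x), y t ∂μ = ∫ t in Icc 0 x, y (c + a * t) ∂μ := by
      have hemb : MeasurableEmbedding (fun x => c + a * x) :=
        (Homeomorph.addLeft c).measurableEmbedding.comp (Homeomorph.mulLeft₀ a ha.ne').measurableEmbedding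
      have hpre : (fun x => c + a * x) ⁻¹' (Icc c (c + a * x)) = Icc 0 x := by
        ext z
        simp only [mem_preimage, mem_Icc]
        constructor
        · rintro ⟨i1, i2⟩
          exact ⟨nonneg_of_mul_nonneg_right (by linarith) ha, le_of_mul_le_mul_left (by linarith) ha⟩
        · rintro ⟨i1, i2⟩
          have := mul_nonneg ha.le i1
          have := mul_le_mul_of_nonneg_left i2 ha.le
          constructor <;> linarith
      have h1 := hemb.setIntegral_map (μ := μ) y (Icc c (c + a * x))
      rw [hpre, ← hm] at h1
      rw [← h1, Measure.restrict_smul, integral_smul_nnreal_measure,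
        Measure.restrict_restrict measurableSet_Icc,
        inter_eq_left.mpr (Icc_subset_Icc_right (by linarith))]
      simp [NNReal.smul_def]
    rw [hg1 _ hx', hg1 c hcm, e2, ← e3]
    field_simp
    ring

lemma sol_gap (u v lam : ℝ) (hu : 0 ≤ u) (huv : u ≤ v) (hv : v ≤ 1) (hz : μ (Ioc u v) = 0)
    (y g : ℝ → ℝ) (h : Sol μ lam y g) : g v = g u ∧ y v = y u + (v - u) * g u := by
  obtain ⟨hy, hg, hy1, hg1⟩ := h
  have hyi : IntegrableOn y (Icc 0 1) μ := hy.integrableOn_Icc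
  have hgx : ∀ x ∈ Icc u v, g x = g u := by
    intro x hx
    rw [hg1 x ⟨hu.trans hx.1, hx.2.trans hv⟩, hg1 u ⟨hu, huv.trans hv⟩]
    have e1 : Icc 0 x = Icc 0 u ∪ Ioc u x := (Icc_union_Ioc_eq_Icc hu hx.1).symm
    have e0 : ∫ t in Ioc u x, y t ∂μ = 0 :=
      setIntegral_measure_zero _ (measure_mono_null (Ioc_subset_Ioc_right hx.2) hz)
    rw [e1, setIntegral_union, e0, add_zero]
    · rw [Set.disjoint_left]
      intro z hz hz'
      exact absurd hz.2 (not_le.mpr hz'.1)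
    · exact measurableSet_Ioc
    · exact hyi.mono_set (Icc_subset_Icc_right (huv.trans hv))
    · exact hyi.mono_set (fun z hz => ⟨hu.trans hz.1.le, hz.2.trans (hx.2.trans hv)⟩)
  refine ⟨hgx v ⟨huv, le_rfl⟩, ?_⟩
  have i1 : IntervalIntegrable g volume 0 u :=
    (hg.mono (Icc_subset_Icc_right (huv.trans hv))).intervalIntegrable_of_Icc hu
  have i2 : IntervalIntegrable g volume u v :=
    (hg.mono (Icc_subset_Icc hu hv)).intervalIntegrable_of_Icc huv
  rw [hy1 v ⟨hu.trans huv, hv⟩, hy1 u ⟨hu, huv.trans hv⟩,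
    ← intervalIntegral.integral_add_adjacent_intervals i1 i2]
  have : ∫ t in u..v, g t = ∫ t in u..v, g u := by
    apply intervalIntegral.integral_congr
    intro t ht
    rw [uIcc_of_le huv] at ht
    exact hgx t ht
  rw [this, intervalIntegral.integral_const, smul_eq_mul]
  ring
end fin

lemma final_main (κ : ℕ) (a b : ℝ) (hκ : 2 ≤ κ)
    (ha : 0 < a) (ha' : a < 1 / κ) (hb : b = (1 - κ * a) / (κ - 1))
    (P : ℝ → ℝ) (hP : CantorType κ a b P) (hPmono : MonotoneOn P (Set.Icc 0 1))
    (μ : Measure ℝ)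
    (hμ : ∀ x ∈ Set.Icc (0 : ℝ) 1, μ (Set.Icc 0 x) = ENNReal.ofReal (P x))
    (hμc : μ (Set.Icc (0 : ℝ) 1)ᶜ = 0)
    (lam : ℕ → ℝ) (hlam : StrictMono lam)
    (hlamrange : Set.range lam = {l : ℝ | IsEigen μ (2 / b) (2 / b) l})
    (mu : ℕ → ℝ) (hmu : StrictMono mu)
    (hmurange : Set.range mu = {l : ℝ | IsEigen μ (2 * a / b) (2 * a / b) l}) :
    ∀ n : ℕ, lam (κ * (n + 1) - 1) = (κ / a) * mu n := by
  obtain ⟨hPc, hP0, hP1, hPgap, hPself⟩ := hP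
  have := prob_of P hP1 μ hμ hμc
  have := noatom_of P hP0 hPc hPmono μ hμ hμc
  have hκr : (2:ℝ) ≤ κ := by exact_mod_cast hκ
  have hκ0 : (0:ℝ) < κ := by linarith
  have hκa : κ * a < 1 := by
    rw [lt_div_iff₀ hκ0] at ha'; linarith
  have hbpos : 0 < b := by rw [hb]; exact div_pos (by linarith) (by linarith)
  have hb2 : (κ - 1 : ℝ) * b = 1 - κ * a := by
    rw [hb]; field_simp [show (κ - 1 : ℝ) ≠ 0 by linarith]
  have hend' : (κ - 1 : ℝ) * (a + b) + a = 1 := by linear_combination hb2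
  have hend : ((κ - 1 : ℕ) : ℝ) * (a + b) + a = 1 := by
    rw [Nat.cast_sub (by omega), Nat.cast_one]; exact hend'
  have hab : 0 < a + b := by linarith
  have hpos : ∀ k : ℕ, 0 ≤ (k:ℝ) * (a + b) := fun k => by positivity
  have hle : ∀ k : ℕ, k < κ → (k:ℝ) * (a + b) + a ≤ 1 := by
    intro k hk
    have : (k:ℝ) ≤ ((κ - 1 : ℕ) : ℝ) := by exact_mod_cast (by omega)
    rw [← hend]; gcongr
  set h := b / (2 * a) with hh
  have hhpos : 0 < h := by positivity
  have hself : ∀ lam y g, Sol μ lam y g → ∀ k : ℕ, k < κ →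
      Sol μ (a * lam / κ) (fun x => y ((k:ℝ) * (a + b) + a * x))
      (fun x => a * g ((k:ℝ) * (a + b) + a * x)) := by
    intro lam y g hS k hk
    apply sol_self μ κ hκ a _ lam ha (hpos k) (hle k hk) _ y g hS
    exact self_meas κ hκ a ha _ (hpos k) (hle k hk) P hP0 hP1 hPmono μ hμ hμc (hPself k (by omega))
  have hgap : ∀ lam y g, Sol μ lam y g → ∀ k : ℕ, k + 1 < κ →
      g (((k + 1 : ℕ) : ℝ) * (a + b)) = g ((k:ℝ) * (a + b) + a) ∧
      y (((k + 1 : ℕ) : ℝ) * (a + b)) = y ((k:ℝ) * (a + b) + a) + b * g ((k:ℝ) * (a + b) + a) := by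
    intro lam y g hS k hk
    set u := (k:ℝ) * (a + b) + a with hu
    set v := ((k + 1 : ℕ) : ℝ) * (a + b) with hv
    have hvu : v - u = b := by rw [hu, hv]; push_cast; ring
    have hu0 : 0 ≤ u := by have := hpos k; linarith
    have hv1 : v ≤ 1 := by have := hle (k+1) hk; linarith
    have hPuv : P v = P u := by
      obtain ⟨c, hc⟩ := hPgap (k+1) (by omega) (by omega)
      have eu : (((k+1 : ℕ) : ℝ) - 1) * (a + b) + a = u := by rw [hu]; push_cast; ring
      rw [eu, ← hv] at hc
      have hEq : EqOn P (fun _ => c) (Icc u v) := by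
        apply Set.EqOn.of_subset_closure (s := Ioo u v)
        · exact hc
        · exact hPc.mono (Icc_subset_Icc hu0 hv1)
        · exact continuousOn_const
        · exact Ioo_subset_Icc_self
        · rw [closure_Ioo (by linarith : u ≠ v)]
      rw [hEq ⟨by linarith, le_rfl⟩, hEq ⟨le_rfl, by linarith⟩]
    have hz : μ (Ioc u v) = 0 := by
      have := meas_Ioc P hP0 hPmono μ hμ u v hu0 (by linarith) hv1
      rw [hPuv, sub_self] at this
      exact (measureReal_eq_zero_iff).mp this
    have := sol_gap μ u v lam hu0 (by linarith) hv1 hz y g hS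
    rwa [hvu] at this
  have hl_iff : ∀ l, IsEigen μ (2/b) (2/b) l ↔ (DM μ h (a * l / κ) κ).1 = 0 := fun l =>
    lam_iff μ κ hκ a b h l ha hbpos hh hend (hself l) (hgap l)
  have h1h : 2 * a / b = 1 / h := by rw [hh]; field_simp
  have hmu_iff : ∀ l, IsEigen μ (2*a/b) (2*a/b) l ↔ qM μ h l = 0 := fun l => by
    rw [h1h]; exact mu_iff μ h l hhpos
  have hk1 : κ - 1 + 1 = κ := by omega
  have hak : 0 < a / κ := by positivity
  have main := index_main (κ - 1) (pM μ h) (qM μ h) (rM μ h) (tM μ h) (pM_cont μ h) (qM_cont μ h)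
    (tM_cont μ h) (det_one μ h) (fun ν0 hz => cross μ hμc h (κ - 1) ν0 hz)
    (fun ν0 hz => by
      have := cross μ hμc h 0 ν0 (by rw [zero_add, DM_one]; exact hz)
      simpa only [zero_add, DM_one] using this)
    (by rw [q_zero]; linarith) (tr_zero μ h) (fun m => a / κ * lam m) mu
    (fun i j hij => mul_lt_mul_of_pos_left (hlam hij) hak) hmu
    (by
      rw [hk1]
      ext ν
      constructor
      · rintro ⟨m, rfl⟩
        have : lam m ∈ range lam := ⟨m, rfl⟩
        rw [hlamrange] at this
        have h2 := (hl_iff _).mp this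
        rw [mul_div_right_comm] at h2
        exact h2
      · intro hν
        have h2 : IsEigen μ (2/b) (2/b) (κ / a * ν) := by
          rw [hl_iff]
          have : a * (κ / a * ν) / κ = ν := by field_simp
          rw [this]; exact hν
        have h3 : κ / a * ν ∈ range lam := by rw [hlamrange]; exact h2
        obtain ⟨m, hm⟩ := h3
        refine ⟨m, ?_⟩
        simp only
        rw [hm]; field_simp)
    (by
      rw [hmurange]
      ext ν
      exact hmu_iff ν)
    (fun m => by
      have : lam m ∈ range lam := ⟨m, rfl⟩
      rw [hlamrange] at this
      exact mul_pos hak (eigen_pos μ _ _ (by positivity) this))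
    (fun m => by
      have : mu m ∈ range mu := ⟨m, rfl⟩
      rw [hmurange] at this
      exact eigen_pos μ _ _ (by positivity) this)
  intro n
  have := main n
  rw [hk1] at this
  rw [← this]
  field_simp

end helpers

set_option linter.unusedSectionVars true
theorem third_problem_spectral_periodicity (κ : ℕ) (a b : ℝ) (hκ : 2 ≤ κ)
    (ha : 0 < a) (ha' : a < 1 / κ) (hb : b = (1 - κ * a) / (κ - 1))
    (P : ℝ → ℝ) (hP : CantorType κ a b P) (hPmono : MonotoneOn P (Set.Icc 0 1))
    (μ : Measure ℝ)
    (hμ : ∀ x ∈ Set.Icc (0 : ℝ) 1, μ (Set.Icc 0 x) = ENNReal.ofReal (P x))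
    (hμc : μ (Set.Icc (0 : ℝ) 1)ᶜ = 0)
    (lam : ℕ → ℝ) (hlam : StrictMono lam)
    (hlamrange : Set.range lam = {l : ℝ | IsEigen μ (2 / b) (2 / b) l})
    (mu : ℕ → ℝ) (hmu : StrictMono mu)
    (hmurange : Set.range mu = {l : ℝ | IsEigen μ (2 * a / b) (2 * a / b) l}) :
    ∀ n : ℕ, lam (κ * (n + 1) - 1) = (κ / a) * mu n := by
  exact final_main κ a b hκ ha ha' hb P hP hPmono μ hμ hμc lam hlam hlamrange mu hmu hmurange
end
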